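/- Suppose that for every measure ν ∈ 𝒫_V(ℝ^d) there exist numbers δ ∈ (0,1), C > 0, Λ > 0 and, for every ball U ⊂ ℝ^d, a positive function α ↦ N(α,U) (depending also on ν), such that for all α > 0 and all μ ∈ ℳ_α(V) satisfying ∫h dμ = ∫h dν for every h ∈ ℋ, one has L_μV(x) ≤ (1−δ)C + Λ(δα − V(x)) for all x and sup_{x∈U}|b(x,μ)| ≤ N(α,U). Suppose also that for all α > 0 and all μ_n, μ ∈ ℳ_α(V), convergence ‖μ_n − μ‖_W → 0 implies that b(·,μ_n) converges to b(·,μ) uniformly on every ball. Then for every ν ∈ 𝒫_V(ℝ^d) there exists a solution μ ∈ 𝒫_V(ℝ^d) of the nonlinear stationary equation L_μ^*μ = 0 such that ∫h dμ = ∫h dν for every h ∈ ℋ. -/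

import Mathlib

open MeasureTheory Real Set Filter Metric
open scoped Topology RealInnerProductSpace NNReal ENNReal

noncomputable section

abbrev Ed (d : ℕ) : Type := EuclideanSpace ℝ (Fin d)

variable {d : ℕ}

/-- Second-order partial derivative `∂_i ∂_j φ (x)`. -/
def hess2 (φ : Ed d → ℝ) (x : Ed d) (i j : Fin d) : ℝ :=
  iteratedFDeriv ℝ 2 φ x ![EuclideanSpace.single i 1, EuclideanSpace.single j 1]

/-- The Kolmogorov operator `L φ = trace (A D²φ) + ⟨B, ∇φ⟩`. -/
def Lop (A : Ed d → Matrix (Fin d) (Fin d) ℝ) (B : Ed d → Ed d)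
    (φ : Ed d → ℝ) (x : Ed d) : ℝ :=
  (∑ i, ∑ j, A x i j * hess2 φ x i j) + ⟪B x, gradient φ x⟫

/-- Membership in `𝒫_V(ℝ^d)`. -/
def memPV (V : Ed d → ℝ) (μ : Measure (Ed d)) : Prop :=
  IsProbabilityMeasure μ ∧ Integrable V μ

/-- `C_0^∞` test functions. -/
def IsTestFun (φ : Ed d → ℝ) : Prop :=
  ContDiff ℝ (⊤ : ℕ∞) φ ∧ HasCompactSupport φ

/-- Weighted total-variation distance `‖W·(μ - ν)‖_{TV}` expressed by duality. -/
def wDist (W : Ed d → ℝ) (μ ν : Measure (Ed d)) : ℝ :=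
  ⨆ f : {f : Ed d → ℝ // Measurable f ∧ ∀ x, |f x| ≤ W x},
    (∫ x, f.1 x ∂μ - ∫ x, f.1 x ∂ν)

/-- Growth bound defining the class of admissible `ψ`. -/
def GrowthW (W ψ : Ed d → ℝ) : Prop :=
  ∃ M : ℝ, ∀ x, |ψ x| + ‖gradient ψ x‖ + ‖iteratedFDeriv ℝ 2 ψ x‖ ≤ M * W x

/-- Stationary solution of `L_μ^*μ = 0`. -/
def IsStationarySol (A : Ed d → Matrix (Fin d) (Fin d) ℝ) (B : Ed d → Ed d)
    (μ : Measure (Ed d)) : Prop :=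
  ∀ φ : Ed d → ℝ, IsTestFun φ → ∫ x, Lop A B φ x ∂μ = 0

/-- The class `I_0^W`. -/
def I0W (A : Ed d → Matrix (Fin d) (Fin d) ℝ)
    (b : Ed d → Measure (Ed d) → Ed d) (V W : Ed d → ℝ) (ψ : Ed d → ℝ) : Prop :=
  ContDiff ℝ 2 ψ ∧ GrowthW W ψ ∧
    ∀ μ : Measure (Ed d), memPV V μ →
      ∫ x, Lop A (fun y => b y μ) ψ x ∂μ = 0

/-- The class `ℋ` of functions `h` such that `L_σψ = C₁(σ)h + C₂(σ)` with
`C₁(σ) ≠ 0` for some `ψ ∈ I_0^W` and all `σ ∈ 𝒫_V`. -/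
def memH (A : Ed d → Matrix (Fin d) (Fin d) ℝ)
    (b : Ed d → Measure (Ed d) → Ed d) (V W : Ed d → ℝ) (h : Ed d → ℝ) : Prop :=
  Continuous h ∧ (∃ M : ℝ, ∀ x, |h x| ≤ M * W x) ∧
    ∃ ψ : Ed d → ℝ, I0W A b V W ψ ∧
      ∀ σ : Measure (Ed d), memPV V σ →
        ∃ C₁ C₂ : ℝ, C₁ ≠ 0 ∧
          ∀ x, Lop A (fun y => b y σ) ψ x = C₁ * h x + C₂

/-- `μ|_ℋ = ν|_ℋ`. -/
def AgreeH (A : Ed d → Matrix (Fin d) (Fin d) ℝ)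
    (b : Ed d → Measure (Ed d) → Ed d) (V W : Ed d → ℝ)
    (μ ν : Measure (Ed d)) : Prop :=
  ∀ h, memH A b V W h → ∫ x, h x ∂μ = ∫ x, h x ∂ν

/-!
Freezing the measure in the drift at some `μ` that agrees with `ν` on `ℋ` leaves a linear stationary
equation. To solve it, mollify the drift and let the diffusion jump back to the origin far out: by
Hahn-Banach and the maximum principle these perturbations have stationary measures, and `V` bounds
their moments. Comparing a solution with its regularisation by the parametrix
`t^{-d/2} exp(-⟨A(y)⁻¹(x - y), x - y⟩ / (4t))` costs only `O(√t)` in total variation on every ball,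
uniformly over drifts with given local bounds; together with the moments of `V`, this makes the
solutions relatively compact for `‖·‖_W`. A limit `σ` solves the linear equation, so it annihilates
`L_μψ` for every `ψ ∈ I_0^W`, and therefore agrees with `μ` on `ℋ`.

The map `μ ↦ σ` thus acts on a convex set that is compact for `‖·‖_W`, but nothing makes it
continuous. Brouwer's theorem still yields a point `μ` near which convex combinations of values of
the map approximate `μ`. Along measures tending to `μ` the drifts converge locally uniformly, which
passes the linear equations to the limit and gives `∫ L_μφ dμ = 0`.
-/

/-! ### Brouwer's fixed point theorem -/

section Brouwer

theorem exists_interpolation_weights (n : ℕ) {t₀ : ℝ} (ht₀ : 0 < t₀) :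
    ∃ t w : Fin (n + 1) → ℝ, (∀ i, 0 < t i ∧ t i ≤ t₀) ∧ ∑ i, w i = 1 ∧
      ∀ p : Polynomial ℝ, p.natDegree ≤ n → p.eval 1 = ∑ i, w i * p.eval (t i) := by
  let t : Fin (n + 1) → ℝ := fun i => t₀ / (i + 1)
  let w : Fin (n + 1) → ℝ := fun i => (Lagrange.basis Finset.univ t i).eval 1
  have t_injOn : Set.InjOn t (Finset.univ : Finset (Fin (n + 1))) := by
    intro i _ j _ hij
    have hij' : (i : ℝ) + 1 = j + 1 := by
      simpa [t, div_eq_mul_inv, ht₀.ne'] using hij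
    exact Fin.ext (by exact_mod_cast add_right_cancel hij')
  have interpolation : ∀ p : Polynomial ℝ, p.natDegree ≤ n →
      p.eval 1 = ∑ i, w i * p.eval (t i) := by
    intro p hp
    have hdeg : p.degree < (Finset.univ : Finset (Fin (n + 1))).card := by
      rw [Finset.card_univ, Fintype.card_fin]
      exact Polynomial.degree_le_natDegree.trans_lt (by exact_mod_cast Nat.lt_succ_of_le hp)
    conv_lhs => rw [Lagrange.eq_interpolate t_injOn hdeg, Lagrange.interpolate_apply]
    simp [Polynomial.eval_finsetSum, w, mul_comm]
  refine ⟨t, w, fun i => ⟨by positivity, div_le_self ht₀.le (by simp)⟩, ?_, interpolation⟩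
  simpa using (interpolation 1 (by simp)).symm

theorem isOpen_image_of_hasStrictFDerivAt {E F : Type*} [NormedAddCommGroup E] [NormedSpace ℝ E]
    [CompleteSpace E] [NormedAddCommGroup F] [NormedSpace ℝ F] [CompleteSpace F] {f : E → F}
    {f' : E → E →L[ℝ] F} {U : Set E} (hU : IsOpen U) (hf : ∀ x ∈ U, HasStrictFDerivAt f (f' x) x)
    (hsurj : ∀ x ∈ U, Function.Surjective (f' x)) : IsOpen (f '' U) := by
  rw [isOpen_iff_mem_nhds]
  rintro _ ⟨x, hx, rfl⟩
  rw [← (hf x hx).map_nhds_eq_of_surj (LinearMap.range_eq_top.2 (hsurj x hx))]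
  exact image_mem_map (hU.mem_nhds hx)

theorem image_ball_eq_ball_of_eqOn_sphere {E : Type*} [NormedAddCommGroup E] [NormedSpace ℝ E]
    [ProperSpace E] {F : E → E} {r : ℝ} (hF : ContinuousOn F (closedBall 0 r))
    (hmaps : MapsTo F (ball 0 r) (ball 0 r)) (hopen : IsOpen (F '' ball 0 r))
    (hsphere : EqOn F id (sphere 0 r)) : F '' ball 0 r = ball 0 r := by
  rcases (ball (0 : E) r).eq_empty_or_nonempty with hempty | ⟨x₀, hx₀⟩
  · simp [hempty]
  refine Subset.antisymm hmaps.image_subset ((convex_ball (0 : E) r).isPreconnected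
    |>.subset_of_closure_inter_subset hopen
    ⟨F x₀, hmaps hx₀, mem_image_of_mem _ hx₀⟩ ?_)
  rintro y ⟨hy, hyball⟩
  have hclosure : closure (F '' ball 0 r) ⊆ F '' closedBall 0 r :=
    closure_minimal (image_mono ball_subset_closedBall)
      ((isCompact_closedBall 0 r).image_of_continuousOn hF).isClosed
  obtain ⟨x, hx, rfl⟩ := hclosure hy
  refine mem_image_of_mem _ (by_contra fun hxball => hxball ?_)
  have hxsphere : x ∈ sphere 0 r := by
    rw [← closedBall_sdiff_ball]
    exact ⟨hx, hxball⟩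
  rwa [hsphere hxsphere] at hyball

variable {E : Type*} [NormedAddCommGroup E]

theorem injOn_add_of_lipschitzOnWith {h : E → E} {s : Set E} {c : ℝ≥0} (hc : c < 1)
    (hh : LipschitzOnWith c h s) : InjOn (fun x => x + h x) s := by
  intro x hx y hy hxy
  have hdist : ‖x - y‖ ≤ c * ‖x - y‖ := by
    calc ‖x - y‖ = ‖h y - h x‖ := by
          congr 1
          rw [sub_eq_sub_iff_add_eq_add, add_comm (h y)]
          exact hxy
      _ ≤ c * ‖y - x‖ := hh.norm_sub_le hy hx
      _ = c * ‖x - y‖ := by rw [norm_sub_rev]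
  have hc_real : (c : ℝ) < 1 := by exact_mod_cast hc
  exact sub_eq_zero.1 (norm_eq_zero.1 (by nlinarith [norm_nonneg (x - y), hc_real]))

theorem mapsTo_ball_add_smul [NormedSpace ℝ E] {g : E → E} {r t : ℝ} (ht : t ∈ Ico (0 : ℝ) 1)
    (hg : MapsTo (fun x => x + g x) (ball 0 r) (closedBall 0 r)) :
    MapsTo (fun x => x + t • g x) (ball 0 r) (ball 0 r) := by
  intro x hx
  have hx' : ‖x‖ < r := mem_ball_zero_iff.1 hx
  have hgx : ‖x + g x‖ ≤ r := mem_closedBall_zero_iff.1 (hg hx)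
  have hconvex : x + t • g x = (1 - t) • x + t • (x + g x) := by module
  have ht1 : 0 < 1 - t := sub_pos.2 ht.2
  rw [mem_ball_zero_iff]
  calc ‖x + t • g x‖ ≤ ‖(1 - t) • x‖ + ‖t • (x + g x)‖ := hconvex ▸ norm_add_le _ _
    _ = (1 - t) * ‖x‖ + t * ‖x + g x‖ := by
      rw [norm_smul, norm_smul, Real.norm_of_nonneg ht.1, Real.norm_of_nonneg ht1.le]
    _ < (1 - t) * r + t * r := add_lt_add_of_lt_of_le (by gcongr)
      (mul_le_mul_of_nonneg_left hgx ht.1)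
    _ = r := by ring

theorem exists_polynomial_eval_eq_det_id_add_smul [NormedSpace ℝ E] [FiniteDimensional ℝ E]
    (M : E →L[ℝ] E) : ∃ p : Polynomial ℝ, p.natDegree ≤ Module.finrank ℝ E ∧
      ∀ t : ℝ, p.eval t = (ContinuousLinearMap.id ℝ E + t • M).det := by
  let v := Module.finBasis ℝ E
  let N := LinearMap.toMatrix v v (M : E →ₗ[ℝ] E)
  let one : Matrix (Fin (Module.finrank ℝ E)) (Fin (Module.finrank ℝ E)) ℝ := 1
  refine ⟨((Polynomial.X : Polynomial ℝ) • N.map Polynomial.C + one.map Polynomial.C).det,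
    by simpa using Polynomial.natDegree_det_X_add_C_le N one, fun t => ?_⟩
  have hmatrix : LinearMap.toMatrix v v ((ContinuousLinearMap.id ℝ E + t • M : E →L[ℝ] E) :
      E →ₗ[ℝ] E) = one + t • N := by
    rw [ContinuousLinearMap.toLinearMap_add, ContinuousLinearMap.toLinearMap_smul,
      map_add, map_smul]
    exact congrArg (· + t • N) (LinearMap.toMatrix_id v)
  rw [ContinuousLinearMap.det, ← LinearMap.det_toMatrix v, hmatrix, ← Polynomial.coe_evalRingHom,
    RingHom.map_det]
  congr 1
  ext i j
  simp [add_comm (one i j), mul_comm t]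

theorem det_id_add_pos_of_norm_lt_one [NormedSpace ℝ E] [FiniteDimensional ℝ E] {M : E →L[ℝ] E}
    (hM : ‖M‖ < 1) : 0 < (ContinuousLinearMap.id ℝ E + M).det := by
  obtain ⟨p, -, hp⟩ := exists_polynomial_eval_eq_det_id_add_smul M
  have p_ne_zero : ∀ s ∈ Icc (0 : ℝ) 1, p.eval s ≠ 0 := by
    intro s hs h0
    rw [hp] at h0
    obtain ⟨x, hx, hx0⟩ := (Submodule.ne_bot_iff _).1 (LinearMap.bot_lt_ker_of_det_eq_zero h0).ne'
    have hx' : x = -(s • M x) := eq_neg_of_add_eq_zero_left (by simpa using hx)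
    have hle : ‖x‖ ≤ ‖M‖ * ‖x‖ := by
      calc ‖x‖ = s * ‖M x‖ := by
            conv_lhs => rw [hx', norm_neg, norm_smul, Real.norm_of_nonneg hs.1]
        _ ≤ ‖M x‖ := mul_le_of_le_one_left (norm_nonneg _) hs.2
        _ ≤ ‖M‖ * ‖x‖ := M.le_opNorm x
    nlinarith [norm_pos_iff.2 hx0]
  have p_zero : p.eval 0 = 1 := by
    rw [hp]
    simp [ContinuousLinearMap.det]
  have p_one : p.eval 1 = (ContinuousLinearMap.id ℝ E + M).det := by rw [hp, one_smul]
  by_contra! hneg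
  obtain ⟨s, hs, hs0⟩ := intermediate_value_Icc' (zero_le_one' ℝ) (f := fun t => p.eval t)
    p.continuous.continuousOn ⟨p_one.trans_le hneg, p_zero ▸ zero_le_one⟩
  exact p_ne_zero s hs hs0

section NoRetraction

variable [InnerProductSpace ℝ E] [FiniteDimensional ℝ E]

theorem det_eq_zero_of_norm_eventually_eq_one {f : E → E} {M : E →L[ℝ] E} {x : E}
    (hf : HasFDerivAt f M x) (hnorm : ∀ᶠ y in 𝓝 x, ‖f y‖ = 1) : M.det = 0 := by
  have hconst : (fun y => ⟪f y, f y⟫) =ᶠ[𝓝 x] fun _ => (1 : ℝ) := by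
    filter_upwards [hnorm] with y hy
    rw [real_inner_self_eq_norm_sq, hy, one_pow]
  have orthogonal : ∀ v, ⟪f x, M v⟫ = 0 := by
    intro v
    have hderiv := DFunLike.congr_fun (((hf.inner ℝ hf).congr_of_eventuallyEq hconst.symm).unique
      (hasFDerivAt_const (1 : ℝ) x)) v
    simp only [ContinuousLinearMap.comp_apply, ContinuousLinearMap.prod_apply,
      fderivInnerCLM_apply, real_inner_comm, zero_apply] at hderiv
    linarith [real_inner_comm (f x) (M v)]
  by_contra hdet
  obtain ⟨v, hv⟩ := (LinearMap.equivOfDetNeZero (M : E →ₗ[ℝ] E) hdet).surjective (f x)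
  replace hv : M v = f x := hv
  have hself : ⟪f x, f x⟫ = 0 := by simpa only [hv] using orthogonal v
  exact one_ne_zero (hconst.eq_of_nhds.symm.trans hself)

variable [MeasurableSpace E] [BorelSpace E]

/- For small `t` the map `x ↦ x + t • g x` is a diffeomorphism of the open unit ball, so the
integral is the volume of its image. -/
theorem setIntegral_det_id_add_smul_fderiv_of_small {g : E → E} {C : ℝ≥0}
    (hg : ∀ x ∈ closedBall (0 : E) 1, ContDiffAt ℝ 1 g x)
    (hbound : ∀ x ∈ closedBall (0 : E) 1, ‖fderiv ℝ g x‖₊ ≤ C)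
    (hball : MapsTo (fun x => x + g x) (ball 0 1) (closedBall 0 1))
    (hsphere : ∀ x ∈ sphere (0 : E) 1, g x = 0) {t : ℝ≥0} (ht : t < 1) (htC : t * C < 1) :
    ∫ x in ball (0 : E) 1, (ContinuousLinearMap.id ℝ E + (t : ℝ) • fderiv ℝ g x).det
      = volume.real (ball (0 : E) 1) := by
  set F : E → E := fun x => x + (t : ℝ) • g x
  have hsub : ball (0 : E) 1 ⊆ closedBall 0 1 := ball_subset_closedBall
  have hLip : LipschitzOnWith (t * C) (fun x => (t : ℝ) • g x) (closedBall (0 : E) 1) := by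
    have := (lipschitzWith_smul (t : ℝ)).comp_lipschitzOnWith
      ((convex_closedBall (0 : E) 1).lipschitzOnWith_of_nnnorm_fderiv_le
        (fun x hx => (hg x hx).differentiableAt one_ne_zero) hbound)
    rwa [NNReal.nnnorm_eq] at this
  have hderiv : ∀ x ∈ closedBall (0 : E) 1,
      HasStrictFDerivAt F (ContinuousLinearMap.id ℝ E + (t : ℝ) • fderiv ℝ g x) x := fun x hx =>
    (hasStrictFDerivAt_id x).add (((hg x hx).hasStrictFDerivAt one_ne_zero).const_smul (t : ℝ))
  have hdet : ∀ x ∈ closedBall (0 : E) 1,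
      0 < (ContinuousLinearMap.id ℝ E + (t : ℝ) • fderiv ℝ g x).det := by
    refine fun x hx => det_id_add_pos_of_norm_lt_one ?_
    rw [norm_smul, Real.norm_eq_abs, NNReal.abs_eq]
    exact (mul_le_mul_of_nonneg_left (hbound x hx) t.2).trans_lt (by exact_mod_cast htC)
  have hopen : IsOpen (F '' ball (0 : E) 1) :=
    isOpen_image_of_hasStrictFDerivAt isOpen_ball (fun x hx => hderiv x (hsub hx)) fun x hx =>
      (LinearMap.equivOfDetNeZero _ (hdet x (hsub hx)).ne').surjective
  have himage : F '' ball (0 : E) 1 = ball 0 1 :=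
    image_ball_eq_ball_of_eqOn_sphere
      (fun x hx => (hderiv x hx).hasFDerivAt.continuousAt.continuousWithinAt)
      (mapsTo_ball_add_smul ⟨t.2, by exact_mod_cast ht⟩ hball) hopen
      fun x hx => by simp [F, hsphere x hx]
  have hchange := integral_image_eq_integral_abs_det_fderiv_smul (volume : Measure E)
    measurableSet_ball (fun x hx => (hderiv x (hsub hx)).hasFDerivAt.hasFDerivWithinAt)
    ((injOn_add_of_lipschitzOnWith htC hLip).mono hsub) (fun _ => (1 : ℝ))
  simp only [himage, smul_eq_mul, mul_one, setIntegral_const] at hchange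
  rw [hchange]
  exact setIntegral_congr_fun measurableSet_ball fun x hx => (abs_of_pos (hdet x (hsub hx))).symm

/- The integral of `det (id + t • g')` is a polynomial in `t` that is constant for small `t`. -/
theorem setIntegral_det_id_add_fderiv {g : E → E}
    (hg : ∀ x ∈ closedBall (0 : E) 1, ContDiffAt ℝ 1 g x)
    (hball : MapsTo (fun x => x + g x) (ball 0 1) (closedBall 0 1))
    (hsphere : ∀ x ∈ sphere (0 : E) 1, g x = 0) :
    ∫ x in ball (0 : E) 1, (ContinuousLinearMap.id ℝ E + fderiv ℝ g x).det
      = volume.real (ball (0 : E) 1) := by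
  have hcont : ContinuousOn (fderiv ℝ g) (closedBall (0 : E) 1) := fun x hx =>
    ((hg x hx).fderiv_right (m := 0) (by norm_num)).continuousAt.continuousWithinAt
  obtain ⟨C, hC⟩ := (isCompact_closedBall (0 : E) 1).exists_bound_of_continuousOn hcont
  have hbound : ∀ x ∈ closedBall (0 : E) 1, ‖fderiv ℝ g x‖₊ ≤ C.toNNReal := fun x hx =>
    NNReal.le_toNNReal_of_coe_le (hC x hx)
  obtain ⟨t, w, ht, hw, hinterp⟩ := exists_interpolation_weights (Module.finrank ℝ E)
    (t₀ := (2 * (C.toNNReal + 1) : ℝ)⁻¹) (by positivity)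
  have hsmall : ∀ i, ∫ x in ball (0 : E) 1,
      (ContinuousLinearMap.id ℝ E + t i • fderiv ℝ g x).det = volume.real (ball (0 : E) 1) := by
    intro i
    lift t i to ℝ≥0 using (ht i).1.le with s hs
    have hs' : (s : ℝ) * (2 * (C.toNNReal + 1)) ≤ 1 := by
      rw [← le_div_iff₀ (by positivity), one_div, hs]
      exact (ht i).2
    refine setIntegral_det_id_add_smul_fderiv_of_small hg hbound hball hsphere ?_ ?_
    all_goals
      rw [← NNReal.coe_lt_coe]
      push_cast
      nlinarith [s.2, C.toNNReal.2, mul_nonneg s.2 C.toNNReal.2]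
  have hintegrable : ∀ s : ℝ, IntegrableOn
      (fun x => (ContinuousLinearMap.id ℝ E + s • fderiv ℝ g x).det) (ball (0 : E) 1) := fun s =>
    ((ContinuousLinearMap.continuous_det.comp_continuousOn
      (continuousOn_const.add (hcont.const_smul s))).integrableOn_compact
      (isCompact_closedBall _ _)).mono_set ball_subset_closedBall
  have hpointwise : ∀ x, (ContinuousLinearMap.id ℝ E + fderiv ℝ g x).det
      = ∑ i, w i * (ContinuousLinearMap.id ℝ E + t i • fderiv ℝ g x).det := by
    intro x
    obtain ⟨p, hpdeg, hp⟩ := exists_polynomial_eval_eq_det_id_add_smul (fderiv ℝ g x)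
    simpa [hp] using hinterp p hpdeg
  simp_rw [hpointwise]
  rw [integral_finsetSum _ fun i _ => (hintegrable (t i)).const_mul (w i)]
  simp_rw [integral_const_mul, hsmall, ← Finset.sum_mul, hw, one_mul]

theorem not_exists_contDiffAt_retraction_sphere :
    ¬ ∃ f : E → E, (∀ x ∈ closedBall (0 : E) 1, ContDiffAt ℝ 1 f x) ∧
      (∀ x ∈ closedBall (0 : E) 1, ‖f x‖ = 1) ∧ ∀ x ∈ sphere (0 : E) 1, f x = x := by
  rintro ⟨f, hf, hf1, hfix⟩
  have hvol := setIntegral_det_id_add_fderiv (g := fun x => f x - x)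
    (fun x hx => (hf x hx).sub contDiffAt_id)
    (fun x hx => by simp [hf1 x (ball_subset_closedBall hx)]) fun x hx => by simp [hfix x hx]
  have hzero : ∀ x ∈ ball (0 : E) 1,
      (ContinuousLinearMap.id ℝ E + fderiv ℝ (fun y => f y - y) x).det = 0 := by
    intro x hx
    have hfx := (hf x (ball_subset_closedBall hx)).differentiableAt one_ne_zero
    rw [fderiv_fun_sub hfx differentiableAt_fun_id, fderiv_fun_id, add_sub_cancel]
    refine det_eq_zero_of_norm_eventually_eq_one hfx.hasFDerivAt ?_
    filter_upwards [isOpen_ball.mem_nhds hx] with y hy using hf1 y (ball_subset_closedBall hy)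
  rw [setIntegral_congr_fun measurableSet_ball hzero, integral_zero] at hvol
  exact (ENNReal.toReal_pos (measure_ball_pos volume (0 : E) one_pos).ne'
    measure_ball_lt_top.ne).ne hvol

end NoRetraction

section Ray

variable [InnerProductSpace ℝ E] {x u : E}

/-- A quarter of the discriminant of the quadratic equation `‖x + l • u‖ ^ 2 = 1` in `l`. -/
def rayDiscr (x u : E) : ℝ := ⟪x, u⟫ ^ 2 + ‖u‖ ^ 2 * (1 - ‖x‖ ^ 2)

/-- The parameter `l` at which the ray `x + l • u` issuing from a point `x` of the closed unit ball
leaves it: the larger root of `‖x + l • u‖ ^ 2 = 1`. -/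
def rayExit (x u : E) : ℝ := (-⟪x, u⟫ + √(rayDiscr x u)) / ‖u‖ ^ 2

theorem norm_add_rayExit_smul (hu : u ≠ 0) (hD : 0 ≤ rayDiscr x u) :
    ‖x + rayExit x u • u‖ = 1 := by
  have hu2 : ‖u‖ ^ 2 ≠ 0 := pow_ne_zero 2 (norm_ne_zero_iff.2 hu)
  have hroot : (rayExit x u * ‖u‖ ^ 2 + ⟪x, u⟫) ^ 2 = rayDiscr x u := by
    rw [rayExit, div_mul_cancel₀ _ hu2, neg_add_cancel_comm, Real.sq_sqrt hD]
  have hsq : ‖x + rayExit x u • u‖ ^ 2 = 1 := by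
    rw [norm_add_sq_real, inner_smul_right, norm_smul, mul_pow, Real.norm_eq_abs, sq_abs]
    refine mul_left_cancel₀ hu2 ?_
    rw [rayDiscr] at hroot
    linear_combination hroot
  exact (pow_eq_one_iff_of_nonneg (norm_nonneg _) two_ne_zero).1 hsq

theorem rayExit_eq_zero_of_norm_eq_one (hx : ‖x‖ = 1) (hxu : 0 ≤ ⟪x, u⟫) : rayExit x u = 0 := by
  simp [rayExit, rayDiscr, hx, Real.sqrt_sq hxu]

theorem inner_self_sub_pos {y : E} (hx : ‖x‖ = 1) (hy : ‖y‖ ≤ 1) (hxy : y ≠ x) :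
    0 < ⟪x, x - y⟫ := by
  have hpos : 0 < ‖x - y‖ ^ 2 := by
    have := norm_pos_iff.2 (sub_ne_zero.2 hxy.symm)
    positivity
  rw [norm_sub_sq_real, hx] at hpos
  rw [inner_sub_right, real_inner_self_eq_norm_sq, hx]
  nlinarith [norm_nonneg y]

theorem rayDiscr_self_sub_pos {y : E} (hx : ‖x‖ ≤ 1) (hy : ‖y‖ ≤ 1) (hxy : y ≠ x) :
    0 < rayDiscr x (x - y) := by
  rcases hx.lt_or_eq with hlt | heq
  · have hu := norm_pos_iff.2 (sub_ne_zero.2 hxy.symm)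
    have hx2 : 0 < 1 - ‖x‖ ^ 2 := by nlinarith [norm_nonneg x]
    rw [rayDiscr]
    positivity
  · rw [rayDiscr, heq, one_pow, sub_self, mul_zero, add_zero]
    exact pow_pos (inner_self_sub_pos heq hy hxy) 2

theorem contDiffAt_rayExit_self_sub {G : E → E} (hG : ContDiffAt ℝ 1 G x)
    (hD : 0 < rayDiscr x (x - G x)) (hne : G x ≠ x) :
    ContDiffAt ℝ 1 (fun y => rayExit y (y - G y)) x := by
  have hu : ContDiffAt ℝ 1 (fun y => y - G y) x := contDiffAt_id.sub hG
  have hinner : ContDiffAt ℝ 1 (fun y => ⟪y, y - G y⟫) x := contDiffAt_id.inner ℝ hu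
  have hdiscr : ContDiffAt ℝ 1 (fun y => rayDiscr y (y - G y)) x :=
    (hinner.pow 2).add ((hu.norm_sq ℝ).mul (contDiffAt_const.sub (contDiffAt_id.norm_sq ℝ)))
  exact (hinner.neg.add (hdiscr.sqrt hD.ne')).div (hu.norm_sq ℝ)
    (pow_ne_zero 2 (norm_ne_zero_iff.2 (sub_ne_zero.2 hne.symm)))

end Ray

section FixedPoint

variable [InnerProductSpace ℝ E] [FiniteDimensional ℝ E]

/- Without a fixed point, the ray from `G x` through `x` would retract the ball onto the sphere. -/
theorem exists_fixedPoint_of_contDiff {G : E → E} (hG : ContDiff ℝ 1 G)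
    (hmaps : MapsTo G (closedBall 0 1) (closedBall 0 1)) :
    ∃ x ∈ closedBall (0 : E) 1, G x = x := by
  borelize E
  by_contra! hne
  have hG1 : ∀ x ∈ closedBall (0 : E) 1, ‖G x‖ ≤ 1 := fun x hx =>
    mem_closedBall_zero_iff.1 (hmaps hx)
  have hD : ∀ x ∈ closedBall (0 : E) 1, 0 < rayDiscr x (x - G x) := fun x hx =>
    rayDiscr_self_sub_pos (mem_closedBall_zero_iff.1 hx) (hG1 x hx) (hne x hx)
  refine not_exists_contDiffAt_retraction_sphere
    ⟨fun x => x + rayExit x (x - G x) • (x - G x), fun x hx => ?_, fun x hx => ?_, fun x hx => ?_⟩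
  · exact contDiffAt_id.add ((contDiffAt_rayExit_self_sub hG.contDiffAt (hD x hx) (hne x hx)).smul
      (contDiffAt_id.sub hG.contDiffAt))
  · exact norm_add_rayExit_smul (sub_ne_zero.2 (hne x hx).symm) (hD x hx).le
  · have hxb := sphere_subset_closedBall hx
    have hx1 : ‖x‖ = 1 := mem_sphere_zero_iff_norm.1 hx
    simp [rayExit_eq_zero_of_norm_eq_one hx1 (inner_self_sub_pos hx1 (hG1 x hxb) (hne x hxb)).le]

theorem exists_fixedPoint_of_continuous {G : E → E} (hG : Continuous G)
    (hG1 : ∀ x, ‖G x‖ ≤ 1) : ∃ x, G x = x := by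
  by_contra! hne
  obtain ⟨m, hm, hmin⟩ : ∃ m > 0, ∀ x ∈ closedBall (0 : E) 1, m ≤ ‖G x - x‖ := by
    obtain ⟨x₀, -, hmin⟩ := (isCompact_closedBall (0 : E) 1).exists_isMinOn ⟨0, by simp⟩
      (f := fun x => ‖G x - x‖) (by fun_prop)
    exact ⟨‖G x₀ - x₀‖, norm_pos_iff.2 (sub_ne_zero.2 (hne x₀)), fun x hx => hmin hx⟩
  obtain ⟨H, hH, hHG, -⟩ := hG.exists_contDiff_approx 1 (ε := fun _ => m / 4) continuous_const
    fun _ => by positivity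
  have hHG' : ∀ x, ‖H x - G x‖ < m / 4 := fun x => by simpa [dist_eq_norm] using hHG x
  have hscale : 0 < 1 + m / 4 := by positivity
  obtain ⟨x, hx, hfix⟩ := exists_fixedPoint_of_contDiff (G := fun x => (1 + m / 4)⁻¹ • H x)
    (contDiff_const.smul (by exact_mod_cast hH)) fun x _ => by
      rw [mem_closedBall_zero_iff, norm_smul, Real.norm_of_nonneg (by positivity),
        inv_mul_le_iff₀ hscale, mul_one]
      linarith [norm_le_norm_add_norm_sub' (H x) (G x), hG1 x, hHG' x]
  have hdecomp : G x - x = -(H x - G x) + (m / 4) • x := by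
    rw [(inv_smul_eq_iff₀ hscale.ne').1 hfix]
    module
  have hsmall : ‖G x - x‖ ≤ m / 4 + m / 4 * 1 := by
    rw [hdecomp]
    refine (norm_add_le _ _).trans ?_
    rw [norm_neg, norm_smul, Real.norm_of_nonneg (by positivity)]
    gcongr
    exacts [(hHG' x).le, mem_closedBall_zero_iff.1 hx]
  linarith [hmin x hx]

end FixedPoint

end Brouwer

section StdSimplex

variable {ι : Type*} [Fintype ι]

/-- A continuous retraction of `ι → ℝ` onto the standard simplex: the positive parts of the
coordinates, topped up uniformly to total mass at least `1` and then normalised. -/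
def stdSimplexRetraction (x : ι → ℝ) (i : ι) : ℝ :=
  max (x i) 0 / max 1 (∑ j, max (x j) 0) + max 0 (1 - ∑ j, max (x j) 0) / Fintype.card ι

theorem continuous_stdSimplexRetraction :
    Continuous (stdSimplexRetraction : (ι → ℝ) → ι → ℝ) := by
  refine continuous_pi fun i => ?_
  exact (Continuous.div (by fun_prop) (by fun_prop) fun x =>
    (one_pos.trans_le (le_max_left _ _)).ne').add (by fun_prop)

theorem stdSimplexRetraction_mem [Nonempty ι] (x : ι → ℝ) :
    stdSimplexRetraction x ∈ stdSimplex ℝ ι := by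
  have hcard : (Fintype.card ι : ℝ) ≠ 0 := by exact_mod_cast Fintype.card_ne_zero
  refine ⟨fun i => by unfold stdSimplexRetraction; positivity, ?_⟩
  simp only [stdSimplexRetraction, Finset.sum_add_distrib, ← Finset.sum_div, Finset.sum_const,
    Finset.card_univ, nsmul_eq_mul, mul_div_cancel_left₀ _ hcard]
  rcases le_total (∑ j, max (x j) 0) 1 with h | h
  · rw [max_eq_left h, max_eq_right (by linarith), div_one, add_sub_cancel]
  · rw [max_eq_right h, max_eq_left (by linarith), div_self (by linarith), add_zero]

theorem stdSimplexRetraction_of_mem {p : ι → ℝ} (hp : p ∈ stdSimplex ℝ ι) :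
    stdSimplexRetraction p = p := by
  funext i
  simp [stdSimplexRetraction, max_eq_left (hp.1 _), hp.2]

theorem norm_toLp_le_one_of_mem_stdSimplex {p : ι → ℝ} (hp : p ∈ stdSimplex ℝ ι) :
    ‖WithLp.toLp 2 p‖ ≤ 1 := by
  rw [EuclideanSpace.norm_eq, Real.sqrt_le_one]
  calc ∑ i, ‖p i‖ ^ 2 ≤ ∑ i, p i := Finset.sum_le_sum fun i _ => by
        rw [Real.norm_of_nonneg (hp.1 i)]
        exact pow_le_of_le_one (hp.1 i)
          (hp.2 ▸ Finset.single_le_sum (fun j _ => hp.1 j) (Finset.mem_univ i)) two_ne_zero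
    _ = 1 := hp.2

theorem exists_fixedPoint_stdSimplex [Nonempty ι] {T : (ι → ℝ) → ι → ℝ}
    (hT : ContinuousOn T (stdSimplex ℝ ι)) (hmaps : MapsTo T (stdSimplex ℝ ι) (stdSimplex ℝ ι)) :
    ∃ p ∈ stdSimplex ℝ ι, T p = p := by
  have hTr : Continuous fun x => T (stdSimplexRetraction x) :=
    hT.comp_continuous continuous_stdSimplexRetraction stdSimplexRetraction_mem
  have hTr_mem : ∀ x, T (stdSimplexRetraction x) ∈ stdSimplex ℝ ι := fun x =>
    hmaps (stdSimplexRetraction_mem x)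
  obtain ⟨x, hx⟩ := exists_fixedPoint_of_continuous
    (G := fun x : EuclideanSpace ℝ ι => WithLp.toLp 2 (T (stdSimplexRetraction (WithLp.ofLp x))))
    ((PiLp.continuous_toLp 2 _).comp (hTr.comp (PiLp.continuous_ofLp 2 _)))
    fun x => norm_toLp_le_one_of_mem_stdSimplex (hTr_mem _)
  have hfix : T (stdSimplexRetraction (WithLp.ofLp x)) = WithLp.ofLp x := congrArg WithLp.ofLp hx
  have hmem : WithLp.ofLp x ∈ stdSimplex ℝ ι := hfix ▸ hTr_mem _
  exact ⟨WithLp.ofLp x, hmem, by rwa [stdSimplexRetraction_of_mem hmem] at hfix⟩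

end StdSimplex

section Kakutani

theorem exists_finset_approximation_weights {X : Type*} [PseudoMetricSpace X] {K : Set X}
    (hK : IsCompact K) {ε : ℝ} (hε : 0 < ε) :
    ∃ t : Finset X, ↑t ⊆ K ∧ ∃ w : X → t → ℝ, ContinuousOn w K ∧
      MapsTo w K (stdSimplex ℝ t) ∧ ∀ x i, w x i ≠ 0 → dist (i : X) x < ε := by
  obtain ⟨t, htK, htfin, hcover⟩ := hK.finite_cover_balls hε
  lift t to Finset X using htfin
  let m : X → t → ℝ := fun x i => max 0 (ε - dist x i)
  have hm0 : ∀ x i, 0 ≤ m x i := fun x i => le_max_left _ _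
  have hmcont : ∀ i, Continuous fun x => m x i := fun i => by fun_prop
  have hmsum : ∀ x ∈ K, 0 < ∑ i, m x i := by
    intro x hx
    obtain ⟨y, hy, hxy⟩ := mem_iUnion₂.1 (hcover hx)
    exact Finset.sum_pos' (fun i _ => hm0 x i)
      ⟨⟨y, hy⟩, Finset.mem_univ _, lt_max_of_lt_right (sub_pos.2 hxy)⟩
  refine ⟨t, htK, fun x i => m x i / ∑ j, m x j, ?_, fun x hx => ⟨fun i => ?_, ?_⟩,
    fun x i hi => ?_⟩
  · exact continuousOn_pi.2 fun i => (hmcont i).continuousOn.div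
      (continuous_finsetSum _ fun j _ => hmcont j).continuousOn fun x hx => (hmsum x hx).ne'
  · exact div_nonneg (hm0 x i) (hmsum x hx).le
  · rw [← Finset.sum_div, div_self (hmsum x hx).ne']
  · contrapose! hi
    simp [m, max_eq_left (sub_nonpos.2 (hi.trans_eq (dist_comm _ _)))]

/- Apply Brouwer's theorem to the values of `Φ` at the points of an `ε`-net, interpolated by a
partition of unity subordinate to the net. -/
theorem exists_mem_convexHull_image_ball {F : Type*} [NormedAddCommGroup F] [NormedSpace ℝ F]
    {K : Set F} (hK : IsCompact K) (hconv : Convex ℝ K) (hne : K.Nonempty) {Φ : F → F}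
    (hΦ : MapsTo Φ K K) {ε : ℝ} (hε : 0 < ε) :
    ∃ x ∈ K, x ∈ convexHull ℝ (Φ '' (K ∩ ball x ε)) := by
  obtain ⟨t, htK, w, hwcont, hwmaps, hwsupp⟩ := exists_finset_approximation_weights hK hε
  have hnonempty : Nonempty t := by
    obtain ⟨x, hx⟩ := hne
    by_contra hempty
    rw [not_nonempty_iff] at hempty
    simpa using (hwmaps hx).2
  let X : (t → ℝ) → F := fun p => ∑ i, p i • Φ i
  have hXmaps : MapsTo X (stdSimplex ℝ t) K := fun p hp =>
    hconv.sum_mem (fun i _ => hp.1 i) hp.2 fun i _ => hΦ (htK i.2)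
  have hXcont : Continuous X := by fun_prop
  obtain ⟨p, hp, hfix⟩ := exists_fixedPoint_stdSimplex
    (hwcont.comp hXcont.continuousOn hXmaps) (hwmaps.comp hXmaps)
  refine ⟨X p, hXmaps hp, ?_⟩
  have hnear : ∀ i, p i ≠ 0 → dist (i : F) (X p) < ε := fun i hi =>
    hwsupp (X p) i (by rwa [← congrFun hfix i] at hi)
  have hsupport : ∀ i ∉ Finset.univ.filter fun i => p i ≠ 0, p i = 0 := fun i hi => by
    simpa using hi
  have hsum : ∑ i with p i ≠ 0, p i = 1 := by rw [Finset.sum_filter_ne_zero, hp.2]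
  have hX : X p = ∑ i with p i ≠ 0, p i • Φ i :=
    (Finset.sum_subset (Finset.subset_univ _) fun i _ hi => by
      rw [hsupport i hi, zero_smul]).symm
  rw [hX] at hnear ⊢
  exact (convex_convexHull ℝ _).sum_mem (fun i _ => hp.1 i) hsum fun i hi =>
    subset_convexHull ℝ _ (mem_image_of_mem _ ⟨htK i.2, hnear i (Finset.mem_filter.1 hi).2⟩)

end Kakutani

/-! ### Calculus of the operator `Lop` -/

theorem hess2_eq_fderiv_fderiv (φ : Ed d → ℝ) (x : Ed d) (i j : Fin d) :
    hess2 φ x i j =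
      fderiv ℝ (fderiv ℝ φ) x (EuclideanSpace.single i 1) (EuclideanSpace.single j 1) := by
  simp [hess2, iteratedFDeriv_two_apply]

theorem inner_gradient_eq_fderiv (φ : Ed d → ℝ) (x v : Ed d) :
    ⟪v, gradient φ x⟫ = fderiv ℝ φ x v := by
  rw [real_inner_comm]
  simp [gradient]

theorem norm_gradient_eq_norm_fderiv (φ : Ed d → ℝ) (x : Ed d) :
    ‖gradient φ x‖ = ‖fderiv ℝ φ x‖ := by
  simp [gradient]

theorem abs_hess2_le (φ : Ed d → ℝ) (x : Ed d) (i j : Fin d) :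
    |hess2 φ x i j| ≤ ‖iteratedFDeriv ℝ 2 φ x‖ := by
  have h := (iteratedFDeriv ℝ 2 φ x).le_opNorm
    ![EuclideanSpace.single i 1, EuclideanSpace.single j 1]
  simpa [hess2, Fin.prod_univ_two] using h

theorem continuous_hess2 {φ : Ed d → ℝ} (hφ : ContDiff ℝ 2 φ) (i j : Fin d) :
    Continuous fun x => hess2 φ x i j :=
  (hφ.continuous_iteratedFDeriv (m := 2) le_rfl).eval_const _

theorem continuous_gradient {φ : Ed d → ℝ} (hφ : ContDiff ℝ 1 φ) : Continuous (gradient φ) :=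
  (InnerProductSpace.toDual ℝ (Ed d)).symm.continuous.comp (hφ.continuous_fderiv one_ne_zero)

theorem differentiable_fderiv_of_contDiff_two {E F : Type*} [NormedAddCommGroup E]
    [NormedSpace ℝ E] [NormedAddCommGroup F] [NormedSpace ℝ F] {f : E → F}
    (hf : ContDiff ℝ 2 f) : Differentiable ℝ (fderiv ℝ f) :=
  (hf.fderiv_right (m := 1) (by norm_num)).differentiable one_ne_zero

theorem abs_sum_sum_le {f : Fin d → Fin d → ℝ} {c : ℝ} (h : ∀ i j, |f i j| ≤ c) :
    |∑ i, ∑ j, f i j| ≤ d ^ 2 * c := by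
  calc |∑ i, ∑ j, f i j| ≤ ∑ _ : Fin d, ∑ _ : Fin d, c :=
        (Finset.abs_sum_le_sum_abs _ _).trans (Finset.sum_le_sum fun i _ =>
          (Finset.abs_sum_le_sum_abs _ _).trans (Finset.sum_le_sum fun j _ => h i j))
    _ = d ^ 2 * c := by
        simp only [Finset.sum_const, Finset.card_univ, Fintype.card_fin, nsmul_eq_mul]
        ring

theorem abs_Lop_le {A : Ed d → Matrix (Fin d) (Fin d) ℝ} {B : Ed d → Ed d} {K : ℝ}
    {x : Ed d} (hA : ∀ i j, |A x i j| ≤ K) (φ : Ed d → ℝ) :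
    |Lop A B φ x| ≤ d ^ 2 * K * ‖iteratedFDeriv ℝ 2 φ x‖ + ‖B x‖ * ‖gradient φ x‖ := by
  have hsecond : |∑ i, ∑ j, A x i j * hess2 φ x i j| ≤ d ^ 2 * K * ‖iteratedFDeriv ℝ 2 φ x‖ := by
    rw [mul_assoc]
    refine abs_sum_sum_le fun i j => ?_
    rw [abs_mul]
    exact mul_le_mul (hA i j) (abs_hess2_le φ x i j) (abs_nonneg _)
      ((abs_nonneg _).trans (hA i j))
  exact (abs_add_le _ _).trans (add_le_add hsecond (abs_real_inner_le_norm _ _))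

theorem Lop_add {A : Ed d → Matrix (Fin d) (Fin d) ℝ} {B : Ed d → Ed d} {f g : Ed d → ℝ}
    (hf : ContDiff ℝ 2 f) (hg : ContDiff ℝ 2 g) (x : Ed d) :
    Lop A B (fun y => f y + g y) x = Lop A B f x + Lop A B g x := by
  have hderiv : fderiv ℝ (fun y => f y + g y) = fun y => fderiv ℝ f y + fderiv ℝ g y :=
    funext fun y => fderiv_fun_add (hf.differentiable two_ne_zero y)
      (hg.differentiable two_ne_zero y)
  simp only [Lop, inner_gradient_eq_fderiv, hess2_eq_fderiv_fderiv, hderiv,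
    fderiv_fun_add (differentiable_fderiv_of_contDiff_two hf x)
      (differentiable_fderiv_of_contDiff_two hg x),
    _root_.add_apply, mul_add, Finset.sum_add_distrib]
  ring

theorem Lop_const_mul {A : Ed d → Matrix (Fin d) (Fin d) ℝ} {B : Ed d → Ed d} {f : Ed d → ℝ}
    (hf : ContDiff ℝ 2 f) (c : ℝ) (x : Ed d) :
    Lop A B (fun y => c * f y) x = c * Lop A B f x := by
  have hderiv : fderiv ℝ (fun y => c * f y) = fun y => c • fderiv ℝ f y :=
    funext fun y => fderiv_const_mul (hf.differentiable two_ne_zero y) c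
  simp only [Lop, inner_gradient_eq_fderiv, hess2_eq_fderiv_fderiv, hderiv,
    fderiv_fun_const_smul (differentiable_fderiv_of_contDiff_two hf x),
    _root_.smul_apply, smul_eq_mul, mul_add, Finset.mul_sum, mul_left_comm c]

theorem fderiv_fderiv_mul_apply {E : Type*} [NormedAddCommGroup E] [NormedSpace ℝ E]
    {f g : E → ℝ} (hf : ContDiff ℝ 2 f) (hg : ContDiff ℝ 2 g) (x u v : E) :
    fderiv ℝ (fderiv ℝ fun y => f y * g y) x u v
      = (f x * fderiv ℝ (fderiv ℝ g) x u v + g x * fderiv ℝ (fderiv ℝ f) x u v)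
        + (fderiv ℝ f x u * fderiv ℝ g x v + fderiv ℝ g x u * fderiv ℝ f x v) := by
  have hf1 := hf.differentiable two_ne_zero
  have hg1 := hg.differentiable two_ne_zero
  have hf2 := differentiable_fderiv_of_contDiff_two hf
  have hg2 := differentiable_fderiv_of_contDiff_two hg
  have hderiv : fderiv ℝ (fun y => f y * g y)
      = fun y => f y • fderiv ℝ g y + g y • fderiv ℝ f y :=
    funext fun y => fderiv_fun_mul (hf1 y) (hg1 y)
  rw [hderiv, fderiv_fun_add ((hf1 x).fun_smul (hg2 x)) ((hg1 x).fun_smul (hf2 x)),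
    fderiv_fun_smul (hf1 x) (hg2 x), fderiv_fun_smul (hg1 x) (hf2 x)]
  simp only [_root_.add_apply, _root_.smul_apply, ContinuousLinearMap.smulRight_apply,
    smul_eq_mul]
  ring

theorem Lop_mul {A : Ed d → Matrix (Fin d) (Fin d) ℝ} {B : Ed d → Ed d} {f g : Ed d → ℝ}
    {x : Ed d} (hA : (A x).IsSymm) (hf : ContDiff ℝ 2 f) (hg : ContDiff ℝ 2 g) :
    Lop A B (fun y => f y * g y) x = f x * Lop A B g x + g x * Lop A B f x
      + 2 * ∑ i, ∑ j, A x i j * (fderiv ℝ f x (EuclideanSpace.single i 1)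
        * fderiv ℝ g x (EuclideanSpace.single j 1)) := by
  have hswap : ∑ i, ∑ j, A x i j * (fderiv ℝ g x (EuclideanSpace.single i 1)
        * fderiv ℝ f x (EuclideanSpace.single j 1))
      = ∑ i, ∑ j, A x i j * (fderiv ℝ f x (EuclideanSpace.single i 1)
        * fderiv ℝ g x (EuclideanSpace.single j 1)) := by
    rw [Finset.sum_comm]
    refine Finset.sum_congr rfl fun i _ => Finset.sum_congr rfl fun j _ => ?_
    rw [hA.apply i j, mul_comm (fderiv ℝ g x _)]
  have hfirst : fderiv ℝ (fun y => f y * g y) x (B x)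
      = f x * fderiv ℝ g x (B x) + g x * fderiv ℝ f x (B x) := by
    rw [fderiv_fun_mul (hf.differentiable two_ne_zero x) (hg.differentiable two_ne_zero x)]
    rfl
  simp only [Lop, inner_gradient_eq_fderiv, hess2_eq_fderiv_fderiv, fderiv_fderiv_mul_apply hf hg,
    hfirst, mul_add, Finset.sum_add_distrib, mul_left_comm _ (f x) (fderiv ℝ (fderiv ℝ g) x _ _),
    mul_left_comm _ (g x) (fderiv ℝ (fderiv ℝ f) x _ _), ← Finset.mul_sum, hswap]
  ring

theorem fderiv_fderiv_nonneg_of_isLocalMin {E : Type*} [NormedAddCommGroup E] [NormedSpace ℝ E]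
    {φ : E → ℝ} (hφ : ContDiff ℝ 2 φ) {x : E} (hx : IsLocalMin φ x) (v : E) :
    0 ≤ fderiv ℝ (fderiv ℝ φ) x v v := by
  set g : ℝ → ℝ := fun s => φ (x + s • v)
  have hline : ∀ s : ℝ, HasDerivAt (fun s : ℝ => x + s • v) v s := fun s => by
    simpa using ((hasDerivAt_id s).smul_const v).const_add x
  have hderiv : ∀ s, HasDerivAt g (fderiv ℝ φ (x + s • v) v) s := fun s =>
    (hφ.differentiable two_ne_zero _).hasFDerivAt.comp_hasDerivAt s (hline s)
  have hderiv2 : deriv (deriv g) 0 = fderiv ℝ (fderiv ℝ φ) x v v := by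
    rw [funext fun s => (hderiv s).deriv]
    have h := ((differentiable_fderiv_of_contDiff_two hφ _).hasFDerivAt.comp_hasDerivAt
      (0 : ℝ) (hline 0)).clm_apply (hasDerivAt_const (0 : ℝ) v)
    simpa using h.deriv
  have hmin : IsLocalMin g 0 := by
    have hcont : Tendsto (fun s : ℝ => x + s • v) (𝓝 0) (𝓝 x) := by
      simpa using (hline 0).continuousAt.tendsto
    filter_upwards [hcont.eventually hx] with s hs
    simpa [g] using hs
  rw [← hderiv2]
  by_contra! hneg
  have hmax : IsLocalMax g 0 := isLocalMax_of_deriv_deriv_neg hneg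
    hmin.deriv_eq_zero (hderiv 0).continuousAt
  have hconst : g =ᶠ[𝓝 0] fun _ => g 0 := by
    filter_upwards [hmin, hmax] with s h1 h2 using le_antisymm h2 h1
  rw [hconst.deriv.deriv_eq] at hneg
  simp at hneg

theorem sum_sum_mul_hess2_vecMulVec (φ : Ed d → ℝ) (x : Ed d) (v : Fin d → ℝ) :
    ∑ i, ∑ j, Matrix.vecMulVec v v i j * hess2 φ x i j
      = fderiv ℝ (fderiv ℝ φ) x (WithLp.toLp 2 v) (WithLp.toLp 2 v) := by
  have hexpand : WithLp.toLp 2 v = ∑ i, v i • (EuclideanSpace.single i 1 : Ed d) := by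
    ext j
    simp [Finset.sum_apply, Pi.single_apply]
  rw [hexpand]
  simp only [map_sum, map_smul, _root_.sum_apply, _root_.smul_apply, smul_eq_mul,
    hess2_eq_fderiv_fderiv, Finset.mul_sum, Matrix.vecMulVec_apply]
  rw [Finset.sum_comm]
  refine Finset.sum_congr rfl fun i _ => Finset.sum_congr rfl fun j _ => ?_
  ring

theorem Lop_nonneg_of_isLocalMin {A : Ed d → Matrix (Fin d) (Fin d) ℝ} {B : Ed d → Ed d}
    {φ : Ed d → ℝ} (hφ : ContDiff ℝ 2 φ) {x : Ed d} (hA : (A x).PosSemidef)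
    (hx : IsLocalMin φ x) : 0 ≤ Lop A B φ x := by
  obtain ⟨m, v, hv⟩ := Matrix.posSemidef_iff_eq_sum_vecMulVec.1 hA
  have hsecond : ∑ i, ∑ j, A x i j * hess2 φ x i j
      = ∑ k, fderiv ℝ (fderiv ℝ φ) x (WithLp.toLp 2 (v k)) (WithLp.toLp 2 (v k)) := by
    simp only [← sum_sum_mul_hess2_vecMulVec, hv, Matrix.sum_apply, Finset.sum_mul, star_trivial]
    rw [Finset.sum_comm]
    refine (Finset.sum_congr rfl fun j _ => Finset.sum_comm).trans ?_
    rw [Finset.sum_comm]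
    exact Finset.sum_congr rfl fun k _ => Finset.sum_comm
  rw [Lop, inner_gradient_eq_fderiv, hx.fderiv_eq_zero, _root_.zero_apply, add_zero, hsecond]
  exact Finset.sum_nonneg fun k _ => fderiv_fderiv_nonneg_of_isLocalMin hφ hx _

theorem Lop_eq_zero_of_notMem_tsupport (A : Ed d → Matrix (Fin d) (Fin d) ℝ) (B : Ed d → Ed d)
    {φ : Ed d → ℝ} {x : Ed d} (hx : x ∉ tsupport φ) : Lop A B φ x = 0 := by
  have hderiv : fderiv ℝ φ =ᶠ[𝓝 x] fun _ => 0 := by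
    filter_upwards [(notMem_tsupport_iff_eventuallyEq.1 hx).fderiv (𝕜 := ℝ)] with y hy
    rw [hy]
    simp
  simp [Lop, hess2_eq_fderiv_fderiv, hderiv.fderiv_eq, hderiv.eq_of_nhds]

theorem measurable_Lop {A : Ed d → Matrix (Fin d) (Fin d) ℝ} {B : Ed d → Ed d}
    (hA : ∀ i j, Continuous fun x => A x i j) (hB : Measurable B) {φ : Ed d → ℝ}
    (hφ : ContDiff ℝ 2 φ) : Measurable (Lop A B φ) := by
  refine Measurable.add ?_ (hB.inner (continuous_gradient (hφ.of_le one_le_two)).measurable)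
  refine Finset.measurable_fun_sum _ fun i _ => Finset.measurable_fun_sum _ fun j _ => ?_
  exact ((hA i j).mul (continuous_hess2 hφ i j)).measurable

theorem continuous_Lop {A : Ed d → Matrix (Fin d) (Fin d) ℝ} {B : Ed d → Ed d}
    (hA : ∀ i j, Continuous fun x => A x i j) (hB : Continuous B) {φ : Ed d → ℝ}
    (hφ : ContDiff ℝ 2 φ) : Continuous (Lop A B φ) := by
  refine Continuous.add ?_ (hB.inner (continuous_gradient (hφ.of_le one_le_two)))
  refine continuous_finsetSum _ fun i _ => continuous_finsetSum _ fun j _ => ?_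
  exact (hA i j).mul (continuous_hess2 hφ i j)

/-! ### Elliptic coefficients -/

theorem inner_toEuclideanCLM (M : Matrix (Fin d) (Fin d) ℝ) (v w : Ed d) :
    ⟪Matrix.toEuclideanCLM (n := Fin d) (𝕜 := ℝ) M v, w⟫ = ∑ i, ∑ j, M i j * w i * v j := by
  simp only [PiLp.inner_apply, Matrix.ofLp_toEuclideanCLM, Matrix.mulVec, dotProduct,
    RCLike.inner_apply, conj_trivial, Finset.mul_sum]
  refine Finset.sum_congr rfl fun i _ => Finset.sum_congr rfl fun j _ => ?_
  ring

theorem inner_toEuclideanCLM_single (M : Matrix (Fin d) (Fin d) ℝ) (i j : Fin d) :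
    ⟪Matrix.toEuclideanCLM (n := Fin d) (𝕜 := ℝ) M (EuclideanSpace.single j 1),
      EuclideanSpace.single i 1⟫ = M i j := by
  simp [inner_toEuclideanCLM]

theorem inner_toEuclideanCLM_comm {M : Matrix (Fin d) (Fin d) ℝ} (hM : M.IsSymm) (v w : Ed d) :
    ⟪Matrix.toEuclideanCLM (n := Fin d) (𝕜 := ℝ) M v, w⟫
      = ⟪v, Matrix.toEuclideanCLM (n := Fin d) (𝕜 := ℝ) M w⟫ := by
  rw [real_inner_comm _ v, inner_toEuclideanCLM, inner_toEuclideanCLM, Finset.sum_comm]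
  refine Finset.sum_congr rfl fun i _ => Finset.sum_congr rfl fun j _ => ?_
  rw [hM.apply i j]
  ring

/-- The coefficient matrix at `y`, as an operator on Euclidean space. -/
def coeffOp (A : Ed d → Matrix (Fin d) (Fin d) ℝ) (y : Ed d) : Ed d →L[ℝ] Ed d :=
  Matrix.toEuclideanCLM (n := Fin d) (𝕜 := ℝ) (A y)

/-- The inverse of the coefficient matrix at `y`, as an operator on Euclidean space. -/
def invOp (A : Ed d → Matrix (Fin d) (Fin d) ℝ) (y : Ed d) : Ed d →L[ℝ] Ed d :=
  Matrix.toEuclideanCLM (n := Fin d) (𝕜 := ℝ) (A y)⁻¹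

/-- Symmetric diffusion coefficients which are uniformly elliptic with constant `K₁` and
Lipschitz continuous with constant `K₂`. -/
structure IsElliptic (A : Ed d → Matrix (Fin d) (Fin d) ℝ) (K₁ K₂ : ℝ) : Prop where
  pos : 0 < K₁
  lipschitz_nonneg : 0 ≤ K₂
  symm : ∀ x, (A x).IsSymm
  lower : ∀ x (v : Ed d), K₁⁻¹ * ‖v‖ ^ 2 ≤ ∑ i, ∑ j, A x i j * v i * v j
  upper : ∀ x (v : Ed d), ∑ i, ∑ j, A x i j * v i * v j ≤ K₁ * ‖v‖ ^ 2
  lipschitz : ∀ x y i j, |A x i j - A y i j| ≤ K₂ * ‖x - y‖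

namespace IsElliptic

variable {A : Ed d → Matrix (Fin d) (Fin d) ℝ} {K₁ K₂ : ℝ}

theorem le_inner_coeffOp (hA : IsElliptic A K₁ K₂) (x v : Ed d) :
    K₁⁻¹ * ‖v‖ ^ 2 ≤ ⟪coeffOp A x v, v⟫ := by
  rw [coeffOp, inner_toEuclideanCLM]
  exact hA.lower x v

theorem inner_coeffOp_le (hA : IsElliptic A K₁ K₂) (x v : Ed d) :
    ⟪coeffOp A x v, v⟫ ≤ K₁ * ‖v‖ ^ 2 := by
  rw [coeffOp, inner_toEuclideanCLM]
  exact hA.upper x v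

theorem inner_coeffOp_nonneg (hA : IsElliptic A K₁ K₂) (x v : Ed d) :
    0 ≤ ⟪coeffOp A x v, v⟫ :=
  (mul_nonneg (inv_nonneg.2 hA.pos.le) (sq_nonneg _)).trans (hA.le_inner_coeffOp x v)

theorem posDef (hA : IsElliptic A K₁ K₂) (x : Ed d) : (A x).PosDef := by
  refine Matrix.PosDef.of_dotProduct_mulVec_pos ?_ fun v hv => ?_
  · rw [Matrix.IsHermitian, Matrix.conjTranspose_eq_transpose_of_trivial]
    exact hA.symm x
  · have hnorm : 0 < ‖(WithLp.toLp 2 v : Ed d)‖ := by simpa using hv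
    refine (mul_pos (inv_pos.2 hA.pos) (pow_pos hnorm 2)).trans_le
      ((hA.lower x (WithLp.toLp 2 v)).trans_eq ?_)
    simp only [dotProduct, Matrix.mulVec, Finset.mul_sum, Pi.star_apply, star_trivial]
    refine Finset.sum_congr rfl fun i _ => Finset.sum_congr rfl fun j _ => ?_
    ring

theorem isUnit_det (hA : IsElliptic A K₁ K₂) (x : Ed d) : IsUnit (A x).det :=
  (hA.posDef x).det_pos.ne'.isUnit

theorem continuous_apply (hA : IsElliptic A K₁ K₂) (i j : Fin d) :
    Continuous fun x => A x i j := by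
  have hlip : LipschitzWith (Real.toNNReal K₂) fun x => A x i j :=
    LipschitzWith.of_dist_le_mul fun x y => by
      rw [Real.dist_eq, dist_eq_norm, Real.coe_toNNReal _ hA.lipschitz_nonneg]
      exact hA.lipschitz x y i j
  exact hlip.continuous

theorem abs_apply_le (hA : IsElliptic A K₁ K₂) (x : Ed d) (i j : Fin d) : |A x i j| ≤ K₁ := by
  set u : Ed d := EuclideanSpace.single i 1
  set w : Ed d := EuclideanSpace.single j 1
  have hu : ‖u‖ = 1 := by simp [u]
  have hw : ‖w‖ = 1 := by simp [w]
  have hpolar : ⟪coeffOp A x (w + u), w + u⟫ - ⟪coeffOp A x (w - u), w - u⟫ = 4 * A x i j := by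
    have hwu : ⟪coeffOp A x w, u⟫ = A x i j := inner_toEuclideanCLM_single (A x) i j
    have huw : ⟪coeffOp A x u, w⟫ = A x i j :=
      (inner_toEuclideanCLM_single (A x) j i).trans ((hA.symm x).apply i j)
    simp only [map_add, map_sub, inner_add_left, inner_add_right, inner_sub_left,
      inner_sub_right, hwu, huw]
    ring
  have hadd : ‖w + u‖ ^ 2 ≤ 4 := by nlinarith [norm_add_le w u, norm_nonneg (w + u)]
  have hsub : ‖w - u‖ ^ 2 ≤ 4 := by nlinarith [norm_sub_le w u, norm_nonneg (w - u)]
  have hK := hA.pos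
  rw [abs_le]
  constructor <;> nlinarith [hA.inner_coeffOp_nonneg x (w + u), hA.inner_coeffOp_nonneg x (w - u),
    hA.inner_coeffOp_le x (w + u), hA.inner_coeffOp_le x (w - u)]

theorem inner_invOp_comm (hA : IsElliptic A K₁ K₂) (y v w : Ed d) :
    ⟪invOp A y v, w⟫ = ⟪v, invOp A y w⟫ :=
  inner_toEuclideanCLM_comm (hA.symm y).inv v w

theorem coeffOp_invOp (hA : IsElliptic A K₁ K₂) (y z : Ed d) :
    coeffOp A y (invOp A y z) = z := by
  rw [coeffOp, invOp, ← mul_apply_eq_comp, ← map_mul,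
    Matrix.mul_nonsing_inv _ (hA.isUnit_det y), map_one]
  rfl

theorem sum_mul_inner_invOp (hA : IsElliptic A K₁ K₂) (y z : Ed d) :
    ∑ i, ∑ j, A y i j * (⟪invOp A y z, EuclideanSpace.single i 1⟫
      * ⟪invOp A y z, EuclideanSpace.single j 1⟫) = ⟪invOp A y z, z⟫ := by
  conv_rhs => rw [real_inner_comm, ← hA.coeffOp_invOp y z, coeffOp, inner_toEuclideanCLM]
  refine Finset.sum_congr rfl fun i _ => Finset.sum_congr rfl fun j _ => ?_
  rw [← coeffOp, hA.coeffOp_invOp]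
  simp only [EuclideanSpace.inner_single_right, conj_trivial, one_mul, mul_assoc]

theorem sum_mul_inner_invOp_single (hA : IsElliptic A K₁ K₂) (y : Ed d) :
    ∑ i, ∑ j, A y i j * ⟪invOp A y (EuclideanSpace.single i 1), EuclideanSpace.single j 1⟫ = d := by
  simp only [invOp, inner_toEuclideanCLM_single, ← Matrix.mul_apply,
    Matrix.mul_nonsing_inv _ (hA.isUnit_det y), Matrix.one_apply_eq]
  simp

theorem norm_invOp_le (hA : IsElliptic A K₁ K₂) (y z : Ed d) : ‖invOp A y z‖ ≤ K₁ * ‖z‖ := by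
  set w := invOp A y z with hw
  have hlower : K₁⁻¹ * ‖w‖ ^ 2 ≤ ‖z‖ * ‖w‖ := by
    refine (hA.le_inner_coeffOp y w).trans ?_
    rw [hw, hA.coeffOp_invOp]
    exact real_inner_le_norm _ _
  rcases (norm_nonneg w).eq_or_lt with hzero | hpos
  · rw [← hzero]
    exact mul_nonneg hA.pos.le (norm_nonneg _)
  · rw [inv_mul_le_iff₀ hA.pos] at hlower
    nlinarith

/- With `w = A⁻¹z`, expand `0 ≤ ⟨A(w - z/K), w - z/K⟩` and use `A ≤ K` in the last term. -/
theorem le_inner_invOp (hA : IsElliptic A K₁ K₂) (y z : Ed d) :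
    K₁⁻¹ * ‖z‖ ^ 2 ≤ ⟪invOp A y z, z⟫ := by
  set w := invOp A y z
  have hw : coeffOp A y w = z := hA.coeffOp_invOp y z
  have hzw : ⟪coeffOp A y z, w⟫ = ‖z‖ ^ 2 := by
    rw [← real_inner_self_eq_norm_sq, ← hw, coeffOp,
      inner_toEuclideanCLM_comm (hA.symm y)]
  have hsquare := hA.inner_coeffOp_nonneg y (w - K₁⁻¹ • z)
  simp only [map_sub, map_smul, hw, inner_sub_left, inner_sub_right, inner_smul_left,
    inner_smul_right, hzw, real_inner_self_eq_norm_sq, conj_trivial, real_inner_comm] at hsquare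
  have hquad : K₁⁻¹ * (K₁⁻¹ * ⟪coeffOp A y z, z⟫) ≤ K₁⁻¹ * ‖z‖ ^ 2 := by
    refine mul_le_mul_of_nonneg_left ?_ (inv_nonneg.2 hA.pos.le)
    rw [inv_mul_le_iff₀ hA.pos]
    exact hA.inner_coeffOp_le y z
  rw [real_inner_comm] at hquad
  linarith [real_inner_comm w z]

theorem continuous_invOp (hA : IsElliptic A K₁ K₂) : Continuous (invOp A) := by
  have hcont : Continuous A := continuous_matrix fun i j => hA.continuous_apply i j
  have hinv : Continuous fun y => (A y)⁻¹ := by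
    simp only [Matrix.inv_def, Ring.inverse_eq_inv']
    exact (hcont.matrix_det.inv₀ fun y => (hA.posDef y).det_pos.ne').smul hcont.matrix_adjugate
  exact ((Matrix.toEuclideanCLM (n := Fin d) (𝕜 := ℝ)).toAlgEquiv.toLinearMap
    |>.continuous_of_finiteDimensional).comp hinv

end IsElliptic

/-! ### The parametrix -/

/-- The Gaussian kernel `t^{-d/2} exp(-|z|² / (K t))`; its integral does not depend on `t`. -/
def gaussKernel (K t : ℝ) (z : Ed d) : ℝ :=
  t ^ (-(d : ℝ) / 2) * exp (-(K * t)⁻¹ * ‖z‖ ^ 2)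

/-- The fundamental solution of `∂ₜ - trace (A(y) D²)`, with the coefficients frozen at the
pole `y`, up to a normalising factor which does not depend on `t` and `x`. -/
def parametrix (A : Ed d → Matrix (Fin d) (Fin d) ℝ) (t : ℝ) (x y : Ed d) : ℝ :=
  t ^ (-(d : ℝ) / 2) * exp (-(4 * t)⁻¹ * ⟪invOp A y (x - y), x - y⟫)

/-- The time derivative of `parametrix`. -/
def parametrixDeriv (A : Ed d → Matrix (Fin d) (Fin d) ℝ) (t : ℝ) (x y : Ed d) : ℝ :=
  (⟪invOp A y (x - y), x - y⟫ / (4 * t ^ 2) - d / (2 * t)) * parametrix A t x y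

theorem continuous_gaussKernel (K t : ℝ) : Continuous (gaussKernel K t : Ed d → ℝ) := by
  unfold gaussKernel
  fun_prop

theorem gaussKernel_nonneg (K : ℝ) {t : ℝ} (ht : 0 ≤ t) (z : Ed d) : 0 ≤ gaussKernel K t z := by
  unfold gaussKernel
  positivity

theorem gaussKernel_one (K : ℝ) (z : Ed d) :
    gaussKernel K 1 z = exp (-K⁻¹ * ‖z‖ ^ 2) := by
  simp [gaussKernel]

theorem gaussKernel_le {K t : ℝ} (hK : 0 ≤ K) (ht : 0 ≤ t) (z : Ed d) :
    gaussKernel K t z ≤ t ^ (-(d : ℝ) / 2) := by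
  refine mul_le_of_le_one_right (by positivity) ?_
  rw [exp_le_one_iff, neg_mul, neg_nonpos]
  positivity

theorem integrable_gaussKernel {K t : ℝ} (hK : 0 < K) (ht : 0 < t) :
    Integrable (gaussKernel K t : Ed d → ℝ) := by
  have h := (GaussianFourier.integrable_cexp_neg_mul_sq_norm_add (V := Ed d)
    (b := (((K * t)⁻¹ : ℝ) : ℂ)) (by rw [Complex.ofReal_re]; positivity) 0 0).norm
  refine (h.congr (Eventually.of_forall fun z => ?_)).const_mul _
  simp [Complex.norm_exp, ← Complex.ofReal_pow]

theorem integral_gaussKernel {K t : ℝ} (hK : 0 < K) (ht : 0 < t) :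
    ∫ z : Ed d, gaussKernel K t z = (π * K) ^ ((d : ℝ) / 2) := by
  simp only [gaussKernel]
  rw [integral_const_mul, GaussianFourier.integral_rexp_neg_mul_sq_norm (by positivity),
    finrank_euclideanSpace_fin, div_inv_eq_mul, ← mul_assoc, Real.mul_rpow (by positivity) ht.le,
    mul_left_comm, ← Real.rpow_add ht]
  simp [neg_div]

theorem integrable_prod_gaussKernel_sub (σ : Measure (Ed d)) [IsFiniteMeasure σ] {K t : ℝ}
    (hK : 0 < K) (ht : 0 < t) :
    Integrable (fun p : Ed d × Ed d => gaussKernel K t (p.1 - p.2)) (σ.prod volume) := by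
  have hcont : Continuous fun p : Ed d × Ed d => gaussKernel K t (p.1 - p.2) :=
    (continuous_gaussKernel K t).comp (continuous_fst.sub continuous_snd)
  rw [integrable_prod_iff hcont.aestronglyMeasurable]
  refine ⟨Eventually.of_forall fun x => (integrable_gaussKernel hK ht).comp_sub_left x, ?_⟩
  simp only [Real.norm_of_nonneg (gaussKernel_nonneg K ht.le _), integral_sub_left_eq_self,
    integral_gaussKernel hK ht]
  exact integrable_const _

section Parametrix

variable {A : Ed d → Matrix (Fin d) (Fin d) ℝ} {K₁ K₂ : ℝ}

theorem hasDerivAt_parametrix (A : Ed d → Matrix (Fin d) (Fin d) ℝ) {t : ℝ} (ht : 0 < t)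
    (x y : Ed d) :
    HasDerivAt (fun s => parametrix A s x y) (parametrixDeriv A t x y) t := by
  have hpow : HasDerivAt (fun s : ℝ => s ^ (-(d : ℝ) / 2))
      (-(d : ℝ) / 2 * t ^ (-(d : ℝ) / 2 - 1)) t :=
    Real.hasDerivAt_rpow_const (Or.inl ht.ne')
  have hexponent : HasDerivAt (fun s : ℝ => -(4 * s)⁻¹ * ⟪invOp A y (x - y), x - y⟫)
      (⟪invOp A y (x - y), x - y⟫ / (4 * t ^ 2)) t := by
    have hlin : HasDerivAt (fun s : ℝ => 4 * s) 4 t := by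
      simpa using (hasDerivAt_id t).const_mul 4
    refine (((hlin.fun_inv (by positivity)).neg).mul_const _).congr_deriv ?_
    field_simp
  refine (hpow.mul hexponent.exp).congr_deriv ?_
  rw [parametrixDeriv, parametrix, Real.rpow_sub_one ht.ne']
  field_simp
  ring

theorem contDiff_parametrix (A : Ed d → Matrix (Fin d) (Fin d) ℝ) (t : ℝ) (y : Ed d) {n} :
    ContDiff ℝ n fun x => parametrix A t x y := by
  unfold parametrix
  have hsub : ContDiff ℝ n fun x : Ed d => x - y := contDiff_id.sub contDiff_const
  exact contDiff_const.mul
    ((contDiff_const.mul (((invOp A y).contDiff.comp hsub).inner ℝ hsub)).exp)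

theorem fderiv_parametrix (hA : IsElliptic A K₁ K₂) (t : ℝ) (x y : Ed d) :
    fderiv ℝ (fun x => parametrix A t x y) x
      = (-(2 * t)⁻¹ * parametrix A t x y) • innerSL ℝ (invOp A y (x - y)) := by
  have hsub : HasFDerivAt (fun x : Ed d => x - y) (ContinuousLinearMap.id ℝ (Ed d)) x :=
    (hasFDerivAt_id x).sub_const y
  have hform := ((invOp A y).hasFDerivAt.comp x hsub).inner ℝ hsub
  have hexp := ((hform.const_mul (-(4 * t)⁻¹)).exp).const_mul (t ^ (-(d : ℝ) / 2))
  refine (HasFDerivAt.fderiv hexp).trans ?_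
  ext v
  have hsymm : ⟪x - y, invOp A y v⟫ = ⟪invOp A y (x - y), v⟫ := (hA.inner_invOp_comm y _ _).symm
  simp [parametrix, fderivInnerCLM_apply, hsymm, real_inner_comm, -map_sub]
  ring

theorem fderiv_fderiv_parametrix (hA : IsElliptic A K₁ K₂) (t : ℝ) (x y v w : Ed d) :
    fderiv ℝ (fderiv ℝ (fun x => parametrix A t x y)) x v w
      = ((4 * t ^ 2)⁻¹ * (⟪invOp A y (x - y), v⟫ * ⟪invOp A y (x - y), w⟫)
        - (2 * t)⁻¹ * ⟪invOp A y v, w⟫) * parametrix A t x y := by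
  have hsub : HasFDerivAt (fun x : Ed d => x - y) (ContinuousLinearMap.id ℝ (Ed d)) x :=
    (hasFDerivAt_id x).sub_const y
  have hlin : HasFDerivAt (fun x => innerSL ℝ (invOp A y (x - y)))
      ((innerSL ℝ).comp ((invOp A y).comp (ContinuousLinearMap.id ℝ (Ed d)))) x :=
    (innerSL ℝ).hasFDerivAt.comp x ((invOp A y).hasFDerivAt.comp x hsub)
  have hker : HasFDerivAt (fun x => parametrix A t x y)
      ((-(2 * t)⁻¹ * parametrix A t x y) • innerSL ℝ (invOp A y (x - y))) x := by
    rw [← fderiv_parametrix hA]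
    exact ((contDiff_parametrix A t y).differentiable one_ne_zero x).hasFDerivAt
  have hderiv := ((hker.const_mul (-(2 * t)⁻¹)).smul hlin).fderiv
  rw [funext fun x => fderiv_parametrix hA t x y]
  refine (congrArg (fun T => T v w) hderiv).trans ?_
  simp [-map_sub]
  ring

theorem sum_mul_hess2_parametrix (hA : IsElliptic A K₁ K₂) (t : ℝ) (x y : Ed d) :
    ∑ i, ∑ j, A y i j * hess2 (fun x => parametrix A t x y) x i j = parametrixDeriv A t x y := by
  simp only [hess2_eq_fderiv_fderiv, fderiv_fderiv_parametrix hA, ← mul_assoc, ← Finset.sum_mul]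
  rw [parametrixDeriv, div_eq_inv_mul, div_eq_inv_mul, ← hA.sum_mul_inner_invOp y (x - y),
    ← hA.sum_mul_inner_invOp_single y]
  congr 1
  simp only [Finset.mul_sum, ← Finset.sum_sub_distrib]
  refine Finset.sum_congr rfl fun i _ => Finset.sum_congr rfl fun j _ => ?_
  ring

theorem parametrix_nonneg (A : Ed d → Matrix (Fin d) (Fin d) ℝ) {t : ℝ} (ht : 0 ≤ t)
    (x y : Ed d) : 0 ≤ parametrix A t x y := by
  unfold parametrix
  positivity

theorem parametrix_le_gaussKernel (hA : IsElliptic A K₁ K₂) {t : ℝ} (ht : 0 ≤ t) (x y : Ed d) :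
    parametrix A t x y ≤ gaussKernel (4 * K₁) t (x - y) := by
  refine mul_le_mul_of_nonneg_left (exp_le_exp.2 ?_) (by positivity)
  have hform := mul_le_mul_of_nonneg_left (hA.le_inner_invOp y (x - y))
    (inv_nonneg.2 (by positivity : (0 : ℝ) ≤ 4 * t))
  rw [mul_right_comm, mul_inv (4 * t)]
  linarith

theorem continuous_parametrix (hA : IsElliptic A K₁ K₂) (t : ℝ) :
    Continuous fun p : Ed d × Ed d => parametrix A t p.1 p.2 := by
  have hsub : Continuous fun p : Ed d × Ed d => p.1 - p.2 := by fun_prop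
  have hinv : Continuous fun p : Ed d × Ed d => invOp A p.2 (p.1 - p.2) :=
    (hA.continuous_invOp.comp continuous_snd).clm_apply hsub
  exact continuous_const.mul ((continuous_const.mul (hinv.inner hsub)).rexp)

theorem continuous_parametrixDeriv (hA : IsElliptic A K₁ K₂) (t : ℝ) :
    Continuous fun p : Ed d × Ed d => parametrixDeriv A t p.1 p.2 := by
  have hsub : Continuous fun p : Ed d × Ed d => p.1 - p.2 := by fun_prop
  have hinv : Continuous fun p : Ed d × Ed d => invOp A p.2 (p.1 - p.2) :=
    (hA.continuous_invOp.comp continuous_snd).clm_apply hsub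
  exact (((hinv.inner hsub).div_const _).sub continuous_const).mul (continuous_parametrix hA t)

end Parametrix

theorem cube_add_self_add_one_le_exp {K : ℝ} (hK : 0 < K) (s : ℝ) :
    s ^ 3 + s + 1 ≤ 3 * (1 + 128 * K ^ 2) * exp ((8 * K)⁻¹ * s ^ 2) := by
  set u := (8 * K)⁻¹ * s ^ 2 with hu
  have hu0 : 0 ≤ u := by positivity
  have hfourth : s ^ 4 = 64 * K ^ 2 * u ^ 2 := by
    rw [hu]
    field_simp
    norm_num
  have hpow : s ^ 3 + s + 1 ≤ 3 * (1 + s ^ 4) := by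
    nlinarith [sq_nonneg (s ^ 2 - s), sq_nonneg (s - 1), sq_nonneg (s ^ 2 - 1)]
  have hquad : u ^ 2 ≤ 2 * exp u := by nlinarith [Real.quadratic_le_exp_of_nonneg hu0]
  nlinarith [Real.one_le_exp hu0, mul_le_mul_of_nonneg_left hquad (sq_nonneg K)]

theorem cube_add_self_add_one_mul_gaussKernel_le {K t : ℝ} (hK : 0 < K) (ht : 0 < t) (z : Ed d) :
    ((‖z‖ / √t) ^ 3 + ‖z‖ / √t + 1) * gaussKernel (4 * K) t z
      ≤ 3 * (1 + 128 * K ^ 2) * gaussKernel (8 * K) t z := by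
  have hexponent : (8 * K)⁻¹ * (‖z‖ / √t) ^ 2 + -(4 * K * t)⁻¹ * ‖z‖ ^ 2
      = -(8 * K * t)⁻¹ * ‖z‖ ^ 2 := by
    rw [div_pow, Real.sq_sqrt ht.le]
    field_simp
    ring
  refine (mul_le_mul_of_nonneg_right (cube_add_self_add_one_le_exp hK _)
    (gaussKernel_nonneg _ ht.le z)).trans_eq ?_
  rw [gaussKernel, gaussKernel, ← hexponent, Real.exp_add]
  ring

/-! ### The parametrix error -/

/-- The error made when the time derivative of the cut-off parametrix is replaced by the
action of the operator `Lop A B`. -/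
def parametrixRem (A : Ed d → Matrix (Fin d) (Fin d) ℝ) (B : Ed d → Ed d) (η : Ed d → ℝ) (t : ℝ)
    (x y : Ed d) : ℝ :=
  η x * parametrixDeriv A t x y - Lop A B (fun x' => η x' * parametrix A t x' y) x

section ParametrixError

variable {A : Ed d → Matrix (Fin d) (Fin d) ℝ} {K₁ K₂ : ℝ}

theorem norm_fderiv_parametrix_le (hA : IsElliptic A K₁ K₂) {t : ℝ} (ht : 0 < t) (x y : Ed d) :
    ‖fderiv ℝ (fun x => parametrix A t x y) x‖
      ≤ (2 * t)⁻¹ * (K₁ * ‖x - y‖) * parametrix A t x y := by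
  rw [fderiv_parametrix hA, norm_smul, innerSL_apply_norm, norm_mul, norm_neg,
    Real.norm_of_nonneg (by positivity), Real.norm_of_nonneg (parametrix_nonneg A ht.le x y),
    mul_right_comm]
  have hp := parametrix_nonneg A ht.le x y
  gcongr
  exact hA.norm_invOp_le y _

theorem abs_hess2_parametrix_le (hA : IsElliptic A K₁ K₂) {t : ℝ} (ht : 0 < t) (x y : Ed d)
    (i j : Fin d) :
    |hess2 (fun x => parametrix A t x y) x i j|
      ≤ ((4 * t ^ 2)⁻¹ * (K₁ * ‖x - y‖) ^ 2 + (2 * t)⁻¹ * K₁) * parametrix A t x y := by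
  have hunit : ∀ (w : Ed d) (k : Fin d), |⟪w, EuclideanSpace.single k 1⟫| ≤ ‖w‖ := fun w k => by
    simpa using abs_real_inner_le_norm w (EuclideanSpace.single k 1)
  have hgrad : ∀ k, |⟪invOp A y (x - y), EuclideanSpace.single k 1⟫| ≤ K₁ * ‖x - y‖ := fun k =>
    (hunit _ k).trans (hA.norm_invOp_le y _)
  have hinv : |⟪invOp A y (EuclideanSpace.single i 1), EuclideanSpace.single j 1⟫| ≤ K₁ :=
    (hunit _ j).trans (by simpa using hA.norm_invOp_le y (EuclideanSpace.single i 1))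
  have hK := hA.pos
  have hp := parametrix_nonneg A ht.le x y
  rw [hess2_eq_fderiv_fderiv, fderiv_fderiv_parametrix hA, abs_mul, abs_of_nonneg hp]
  refine mul_le_mul_of_nonneg_right ((abs_sub _ _).trans ?_) hp
  rw [abs_mul, abs_mul (2 * t)⁻¹, abs_of_pos (by positivity : 0 < (4 * t ^ 2)⁻¹),
    abs_of_pos (by positivity : 0 < (2 * t)⁻¹), abs_mul,
    sq (K₁ * _)]
  gcongr
  exacts [hgrad i, hgrad j]

theorem parametrixRem_eq (hA : IsElliptic A K₁ K₂) {B : Ed d → Ed d} {η : Ed d → ℝ}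
    (hη : ContDiff ℝ 2 η) (t : ℝ) (x y : Ed d) :
    parametrixRem A B η t x y =
      η x * (∑ i, ∑ j, (A y i j - A x i j) * hess2 (fun x => parametrix A t x y) x i j)
      - η x * fderiv ℝ (fun x => parametrix A t x y) x (B x)
      - parametrix A t x y * Lop A B η x
      - 2 * ∑ i, ∑ j, A x i j * (fderiv ℝ η x (EuclideanSpace.single i 1)
        * fderiv ℝ (fun x => parametrix A t x y) x (EuclideanSpace.single j 1)) := by
  rw [parametrixRem, Lop_mul (hA.symm x) hη (contDiff_parametrix A t y),
    ← sum_mul_hess2_parametrix hA]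
  simp only [sub_mul, Finset.sum_sub_distrib]
  nth_rw 1 [Lop]
  rw [inner_gradient_eq_fderiv]
  ring

theorem abs_sum_sum_mul_fderiv_parametrix_le (hA : IsElliptic A K₁ K₂) {η : Ed d → ℝ} {G t : ℝ}
    (ht : 0 < t) {x : Ed d} (hG : ‖gradient η x‖ ≤ G) (y : Ed d) :
    |∑ i, ∑ j, A x i j * (fderiv ℝ η x (EuclideanSpace.single i 1)
        * fderiv ℝ (fun x => parametrix A t x y) x (EuclideanSpace.single j 1))|
      ≤ d ^ 2 * (K₁ * (G * ((2 * t)⁻¹ * (K₁ * ‖x - y‖) * parametrix A t x y))) := by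
  have hK := hA.pos
  have hunit : ∀ (T : Ed d →L[ℝ] ℝ) (k : Fin d), |T (EuclideanSpace.single k 1)| ≤ ‖T‖ :=
    fun T k => by simpa using T.le_opNorm (EuclideanSpace.single k 1)
  refine abs_sum_sum_le fun i j => ?_
  rw [abs_mul, abs_mul]
  refine mul_le_mul (hA.abs_apply_le x i j) (mul_le_mul ((hunit (fderiv ℝ η x) i).trans ?_)
    ((hunit _ j).trans (norm_fderiv_parametrix_le hA ht x y)) (abs_nonneg _)
    ((norm_nonneg _).trans hG)) (by positivity) hK.le
  rwa [← norm_gradient_eq_norm_fderiv]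

theorem abs_parametrixRem_le (hA : IsElliptic A K₁ K₂) {B : Ed d → Ed d} {η : Ed d → ℝ}
    {N G H t : ℝ} (hη : ContDiff ℝ 2 η) (ht : 0 < t) {x : Ed d} (hη_le : |η x| ≤ 1)
    (hB : ‖B x‖ ≤ N) (hG : ‖gradient η x‖ ≤ G) (hH : ‖iteratedFDeriv ℝ 2 η x‖ ≤ H) (y : Ed d) :
    |parametrixRem A B η t x y| ≤
      (d ^ 2 * (K₂ * ‖x - y‖ * ((4 * t ^ 2)⁻¹ * (K₁ * ‖x - y‖) ^ 2 + (2 * t)⁻¹ * K₁))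
        + (2 * t)⁻¹ * (K₁ * ‖x - y‖) * N + (d ^ 2 * K₁ * H + N * G)
        + 2 * (d ^ 2 * (K₁ * (G * ((2 * t)⁻¹ * (K₁ * ‖x - y‖)))))) * parametrix A t x y := by
  have hK := hA.pos
  have hN : 0 ≤ N := (norm_nonneg _).trans hB
  have hp := parametrix_nonneg A ht.le x y
  have hgrad := norm_fderiv_parametrix_le hA ht x y
  have hη_mul : ∀ u : ℝ, |η x * u| ≤ |u| := fun u => by
    rw [abs_mul]
    exact mul_le_of_le_one_left (abs_nonneg _) hη_le
  have hdiffusion : |∑ i, ∑ j, (A y i j - A x i j) * hess2 (fun x => parametrix A t x y) x i j|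
      ≤ d ^ 2 * (K₂ * ‖x - y‖ * (((4 * t ^ 2)⁻¹ * (K₁ * ‖x - y‖) ^ 2 + (2 * t)⁻¹ * K₁)
        * parametrix A t x y)) := by
    refine abs_sum_sum_le fun i j => ?_
    rw [abs_mul]
    exact mul_le_mul ((hA.lipschitz y x i j).trans_eq (by rw [norm_sub_rev]))
      (abs_hess2_parametrix_le hA ht x y i j) (abs_nonneg _)
      (mul_nonneg hA.lipschitz_nonneg (norm_nonneg _))
  have hdrift := ((fderiv ℝ (fun x => parametrix A t x y) x).le_opNorm (B x)).trans
    (mul_le_mul hgrad hB (norm_nonneg _) (by positivity))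
  have hcutoff : |parametrix A t x y * Lop A B η x|
      ≤ parametrix A t x y * (d ^ 2 * K₁ * H + N * G) := by
    rw [abs_mul, abs_of_nonneg hp]
    refine mul_le_mul_of_nonneg_left ((abs_Lop_le (hA.abs_apply_le x) η).trans ?_) hp
    gcongr
  have hcross := abs_sum_sum_mul_fderiv_parametrix_le hA ht hG y
  rw [parametrixRem_eq hA hη]
  refine (abs_sub _ _).trans ((add_le_add ((abs_sub _ _).trans (add_le_add ((abs_sub _ _).trans
    (add_le_add ((hη_mul _).trans hdiffusion) ((hη_mul _).trans hdrift))) hcutoff))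
    ((abs_mul _ _).trans_le (mul_le_mul abs_two.le hcross (abs_nonneg _) two_pos.le))).trans_eq
    ?_)
  ring

/-- The constant in the bound of the parametrix error. -/
def parametrixErrorConst (d : ℕ) (K₁ K₂ N G H : ℝ) : ℝ :=
  d ^ 2 * K₂ * K₁ ^ 2 + d ^ 2 * K₂ * K₁ + K₁ * N + (d ^ 2 * K₁ * H + N * G) + d ^ 2 * K₁ ^ 2 * G

theorem parametrixRem_coefficient_le {K₁ K₂ N G H t : ℝ} (hK₁ : 0 ≤ K₁) (hK₂ : 0 ≤ K₂)
    (hN : 0 ≤ N) (hG : 0 ≤ G) (hH : 0 ≤ H) (ht : t ∈ Ioc (0 : ℝ) 1) {ρ : ℝ} (hρ : 0 ≤ ρ) :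
    d ^ 2 * (K₂ * ρ * ((4 * t ^ 2)⁻¹ * (K₁ * ρ) ^ 2 + (2 * t)⁻¹ * K₁))
        + (2 * t)⁻¹ * (K₁ * ρ) * N + (d ^ 2 * K₁ * H + N * G)
        + 2 * (d ^ 2 * (K₁ * (G * ((2 * t)⁻¹ * (K₁ * ρ)))))
      ≤ parametrixErrorConst d K₁ K₂ N G H * (√t)⁻¹ * ((ρ / √t) ^ 3 + ρ / √t + 1) := by
  set r := √t
  have hr0 : 0 < r := Real.sqrt_pos.2 ht.1
  have hr1 : 1 ≤ r⁻¹ := (one_le_inv₀ hr0).2 (Real.sqrt_le_one.2 ht.2)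
  have htr : t = r ^ 2 := (Real.sq_sqrt ht.1.le).symm
  obtain ⟨s, hs, rfl⟩ : ∃ s, 0 ≤ s ∧ ρ = s * r := ⟨ρ / r, by positivity, by field_simp⟩
  have hlower : d ^ 2 * K₁ * H + N * G ≤ (d ^ 2 * K₁ * H + N * G) * r⁻¹ :=
    le_mul_of_one_le_right (by positivity) hr1
  have hrescale : d ^ 2 * (K₂ * (s * r) * ((4 * t ^ 2)⁻¹ * (K₁ * (s * r)) ^ 2 + (2 * t)⁻¹ * K₁))
        + (2 * t)⁻¹ * (K₁ * (s * r)) * N + (d ^ 2 * K₁ * H + N * G) * r⁻¹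
        + 2 * (d ^ 2 * (K₁ * (G * ((2 * t)⁻¹ * (K₁ * (s * r))))))
      = (d ^ 2 * K₂ * K₁ ^ 2 / 4 * s ^ 3 + d ^ 2 * K₂ * K₁ / 2 * s + K₁ * N / 2 * s
        + (d ^ 2 * K₁ * H + N * G) + d ^ 2 * K₁ ^ 2 * G * s) * r⁻¹ := by
    rw [htr]
    field_simp
  have hpolynomial : d ^ 2 * K₂ * K₁ ^ 2 / 4 * s ^ 3 + d ^ 2 * K₂ * K₁ / 2 * s + K₁ * N / 2 * s
        + (d ^ 2 * K₁ * H + N * G) + d ^ 2 * K₁ ^ 2 * G * s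
      ≤ parametrixErrorConst d K₁ K₂ N G H * (s ^ 3 + s + 1) := by
    have hgap : 0 ≤ d ^ 2 * K₂ * K₁ ^ 2 * (3 / 4 * s ^ 3 + s + 1)
        + d ^ 2 * K₂ * K₁ * (s ^ 3 + s / 2 + 1) + K₁ * N * (s ^ 3 + s / 2 + 1)
        + (d ^ 2 * K₁ * H + N * G) * (s ^ 3 + s) + d ^ 2 * K₁ ^ 2 * G * (s ^ 3 + 1) := by
      positivity
    rw [parametrixErrorConst]
    linarith
  have hscaled := mul_le_mul_of_nonneg_right hpolynomial (inv_nonneg.2 hr0.le)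
  rw [mul_div_cancel_right₀ s hr0.ne']
  linarith

/- The Lipschitz continuity of the coefficients makes the error of order `t^{-1/2}`, hence
integrable in time. -/
theorem exists_abs_parametrixRem_le (hA : IsElliptic A K₁ K₂) {η : Ed d → ℝ} {N G H : ℝ}
    (hN : 0 ≤ N) (hη : ContDiff ℝ 2 η) (hη_le : ∀ x, |η x| ≤ 1) (hG : ∀ x, ‖gradient η x‖ ≤ G)
    (hH : ∀ x, ‖iteratedFDeriv ℝ 2 η x‖ ≤ H) :
    ∃ D, 0 ≤ D ∧ ∀ B : Ed d → Ed d, (∀ x ∈ tsupport η, ‖B x‖ ≤ N) → ∀ t ∈ Ioc (0 : ℝ) 1,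
      ∀ x y, |parametrixRem A B η t x y| ≤ D * (√t)⁻¹ * gaussKernel (8 * K₁) t (x - y) := by
  have hK₁ := hA.pos
  have hK₂ := hA.lipschitz_nonneg
  have hG0 : 0 ≤ G := (norm_nonneg _).trans (hG 0)
  have hH0 : 0 ≤ H := (norm_nonneg _).trans (hH 0)
  have hc : 0 ≤ parametrixErrorConst d K₁ K₂ N G H := by
    unfold parametrixErrorConst
    positivity
  refine ⟨parametrixErrorConst d K₁ K₂ N G H * (3 * (1 + 128 * K₁ ^ 2)), by positivity,
    fun B hB t ht x y => ?_⟩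
  by_cases hx : x ∈ tsupport η
  · calc |parametrixRem A B η t x y|
        ≤ parametrixErrorConst d K₁ K₂ N G H * (√t)⁻¹
            * ((‖x - y‖ / √t) ^ 3 + ‖x - y‖ / √t + 1) * gaussKernel (4 * K₁) t (x - y) := by
          refine (abs_parametrixRem_le hA hη ht.1 (hη_le x) (hB x hx) (hG x) (hH x) y).trans ?_
          exact mul_le_mul (parametrixRem_coefficient_le hK₁.le hK₂ hN hG0 hH0 ht (norm_nonneg _))
            (parametrix_le_gaussKernel hA ht.1.le x y) (parametrix_nonneg A ht.1.le x y)
            (by positivity)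
      _ ≤ parametrixErrorConst d K₁ K₂ N G H * (√t)⁻¹
            * (3 * (1 + 128 * K₁ ^ 2) * gaussKernel (8 * K₁) t (x - y)) := by
          rw [mul_assoc]
          exact mul_le_mul_of_nonneg_left
            (cube_add_self_add_one_mul_gaussKernel_le hK₁ ht.1 (x - y)) (by positivity)
      _ = _ := by ring
  · have hx' : x ∉ tsupport fun x' => η x' * parametrix A t x' y := fun h =>
      hx (tsupport_mul_subset_left h)
    rw [parametrixRem, Lop_eq_zero_of_notMem_tsupport A B hx', image_eq_zero_of_notMem_tsupport hx,
      zero_mul, sub_zero, abs_zero]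
    exact mul_nonneg (by positivity) (gaussKernel_nonneg _ ht.1.le _)

end ParametrixError

/-! ### Regularisation by the parametrix -/

/-- Continuous functions of compact support with absolute value at most `1`. -/
structure IsCutoff (η : Ed d → ℝ) : Prop where
  continuous : Continuous η
  hasCompactSupport : HasCompactSupport η
  abs_le_one : ∀ x, |η x| ≤ 1

/-- The integral of `parametrix A t x ·` in the limit of small times. -/
def gaussMass (A : Ed d → Matrix (Fin d) (Fin d) ℝ) (x : Ed d) : ℝ :=
  ∫ z, exp (-4⁻¹ * ⟪invOp A x z, z⟫)

/-- The measure `η σ` regularised by the parametrix at time `t`, as a density. -/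
def smoothing (A : Ed d → Matrix (Fin d) (Fin d) ℝ) (η : Ed d → ℝ) (σ : Measure (Ed d)) (t : ℝ)
    (y : Ed d) : ℝ :=
  ∫ x, η x * parametrix A t x y ∂σ

/-- On the support of the cutoff `η`, the measure `σ` is approximated by its regularisations at
rate `√t` in total variation; `θ` is a further cutoff which equals `1` where `η ≠ 0`. -/
def ParametrixBound (A : Ed d → Matrix (Fin d) (Fin d) ℝ) (η θ : Ed d → ℝ) (D : ℝ)
    (σ : Measure (Ed d)) : Prop :=
  ∀ f : Ed d → ℝ, Continuous f → (∀ x, |f x| ≤ 1) → ∀ t ∈ Ioc (0 : ℝ) 1,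
    |∫ x, η x * gaussMass A x * f x ∂σ - ∫ y, θ y * f y * smoothing A η σ t y| ≤ D * √t

/-- The equation `L^*σ = κ δ₀`, tested against `C²` functions supported in `S`. -/
def HasPointSourceOn (A : Ed d → Matrix (Fin d) (Fin d) ℝ) (B : Ed d → Ed d) (κ : ℝ)
    (S : Set (Ed d)) (σ : Measure (Ed d)) : Prop :=
  ∀ φ : Ed d → ℝ, ContDiff ℝ 2 φ → tsupport φ ⊆ S → ∫ x, Lop A B φ x ∂σ = κ * φ 0

section GaussMass

variable {A : Ed d → Matrix (Fin d) (Fin d) ℝ} {K₁ K₂ : ℝ}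

theorem exp_inner_invOp_le (hA : IsElliptic A K₁ K₂) (x z : Ed d) :
    exp (-4⁻¹ * ⟪invOp A x z, z⟫) ≤ gaussKernel (4 * K₁) 1 z := by
  rw [gaussKernel_one, exp_le_exp, mul_inv]
  linarith [hA.le_inner_invOp x z]

theorem gaussKernel_le_exp_inner_invOp (hA : IsElliptic A K₁ K₂) (x z : Ed d) :
    gaussKernel (4 / K₁) 1 z ≤ exp (-4⁻¹ * ⟪invOp A x z, z⟫) := by
  have hform : ⟪invOp A x z, z⟫ ≤ K₁ * ‖z‖ * ‖z‖ := (real_inner_le_norm _ _).trans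
    (mul_le_mul_of_nonneg_right (hA.norm_invOp_le x z) (norm_nonneg z))
  rw [gaussKernel_one, exp_le_exp, inv_div, div_eq_inv_mul]
  linarith

theorem continuous_exp_inner_invOp (hA : IsElliptic A K₁ K₂) {X : Type*} [TopologicalSpace X]
    {f g : X → Ed d} (hf : Continuous f) (hg : Continuous g) :
    Continuous fun a => exp (-4⁻¹ * ⟪invOp A (f a) (g a), g a⟫) :=
  (continuous_const.mul (((hA.continuous_invOp.comp hf).clm_apply hg).inner hg)).rexp

theorem integrable_gaussKernel_one (hA : IsElliptic A K₁ K₂) :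
    Integrable (gaussKernel (4 * K₁) 1 : Ed d → ℝ) :=
  integrable_gaussKernel (by linarith [hA.pos]) one_pos

theorem continuous_gaussMass (hA : IsElliptic A K₁ K₂) : Continuous (gaussMass A) := by
  refine continuous_of_dominated
    (fun x => (continuous_exp_inner_invOp hA continuous_const continuous_id).aestronglyMeasurable)
    (fun x => Eventually.of_forall fun z => ?_) (integrable_gaussKernel_one hA)
    (Eventually.of_forall fun z => continuous_exp_inner_invOp hA continuous_id continuous_const)
  rw [Real.norm_of_nonneg (exp_pos _).le]
  exact exp_inner_invOp_le hA x z

theorem le_gaussMass (hA : IsElliptic A K₁ K₂) (x : Ed d) :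
    (π * (4 / K₁)) ^ ((d : ℝ) / 2) ≤ gaussMass A x := by
  have hK := hA.pos
  rw [← integral_gaussKernel (by positivity) one_pos]
  refine integral_mono (integrable_gaussKernel (by positivity) one_pos) ?_
    (gaussKernel_le_exp_inner_invOp hA x)
  refine (integrable_gaussKernel_one hA).mono'
    (continuous_exp_inner_invOp hA continuous_const continuous_id).aestronglyMeasurable
    (Eventually.of_forall fun z => ?_)
  rw [Real.norm_of_nonneg (exp_pos _).le]
  exact exp_inner_invOp_le hA x z

theorem gaussMass_pos (hA : IsElliptic A K₁ K₂) (x : Ed d) : 0 < gaussMass A x := by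
  have hK := hA.pos
  exact (by positivity : 0 < (π * (4 / K₁)) ^ ((d : ℝ) / 2)).trans_le (le_gaussMass hA x)

theorem integral_mul_parametrix_eq (A : Ed d → Matrix (Fin d) (Fin d) ℝ) (h : Ed d → ℝ) {t : ℝ}
    (ht : 0 < t) (x : Ed d) :
    ∫ y, h y * parametrix A t x y
      = ∫ z, h (x - √t • z) * exp (-4⁻¹ * ⟪invOp A (x - √t • z) z, z⟫) := by
  have hjacobian : |(√t ^ d)⁻¹| = t ^ (-(d : ℝ) / 2) := by
    rw [abs_of_nonneg (by positivity), neg_div, Real.rpow_neg ht.le, Real.sqrt_eq_rpow,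
      ← Real.rpow_natCast, ← Real.rpow_mul ht.le]
    congr 2
    ring
  have hscale := Measure.integral_comp_smul (volume : Measure (Ed d))
    (fun z => h (x - z) * parametrix A t x (x - z)) (√t)
  rw [finrank_euclideanSpace_fin, hjacobian, smul_eq_mul,
    integral_sub_left_eq_self (fun y => h y * parametrix A t x y) volume x] at hscale
  rw [← inv_mul_eq_iff_eq_mul₀ (by positivity), ← integral_const_mul] at hscale
  rw [← hscale]
  congr 1 with z
  simp only [parametrix, sub_sub_cancel, map_smul, inner_smul_left, inner_smul_right, conj_trivial]
  rw [← mul_assoc √t, Real.mul_self_sqrt ht.le]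
  field_simp

theorem tendsto_integral_mul_parametrix (hA : IsElliptic A K₁ K₂) {h : Ed d → ℝ}
    (hc : Continuous h) (h_le : ∀ x, |h x| ≤ 1) (x : Ed d) :
    Tendsto (fun t => ∫ y, h y * parametrix A t x y) (𝓝[>] 0) (𝓝 (h x * gaussMass A x)) := by
  have hlim : Tendsto (fun t => ∫ z, h (x - √t • z) * exp (-4⁻¹ * ⟪invOp A (x - √t • z) z, z⟫))
      (𝓝[>] 0) (𝓝 (∫ z, h x * exp (-4⁻¹ * ⟪invOp A x z, z⟫))) := by
    refine tendsto_integral_filter_of_dominated_convergence _ (Eventually.of_forall fun t => ?_)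
      (Eventually.of_forall fun t => Eventually.of_forall fun z => ?_)
      (integrable_gaussKernel_one hA) (Eventually.of_forall fun z => ?_)
    · have hline : Continuous fun z : Ed d => x - √t • z := by fun_prop
      exact ((hc.comp hline).mul
        (continuous_exp_inner_invOp hA hline continuous_id)).aestronglyMeasurable
    · rw [norm_mul, Real.norm_eq_abs, Real.norm_of_nonneg (exp_pos _).le]
      exact (mul_le_of_le_one_left (exp_pos _).le (h_le _)).trans (exp_inner_invOp_le hA _ z)
    · have hline : Continuous fun t : ℝ => x - √t • z := by fun_prop
      have hcont : Continuous fun t : ℝ =>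
          h (x - √t • z) * exp (-4⁻¹ * ⟪invOp A (x - √t • z) z, z⟫) :=
        (hc.comp hline).mul (continuous_exp_inner_invOp hA hline continuous_const)
      simpa using (hcont.tendsto 0).mono_left nhdsWithin_le_nhds
  rw [gaussMass, ← integral_const_mul]
  refine hlim.congr' ?_
  filter_upwards [self_mem_nhdsWithin] with t ht
  exact (integral_mul_parametrix_eq A h ht x).symm

theorem abs_mul_parametrix_le (hA : IsElliptic A K₁ K₂) {c t : ℝ} (hc : |c| ≤ 1) (ht : 0 ≤ t)
    (x y : Ed d) : |c * parametrix A t x y| ≤ gaussKernel (4 * K₁) t (x - y) := by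
  rw [abs_mul, abs_of_nonneg (parametrix_nonneg A ht x y)]
  exact (mul_le_of_le_one_left (parametrix_nonneg A ht x y) hc).trans
    (parametrix_le_gaussKernel hA ht x y)

theorem abs_integral_mul_parametrix_le (hA : IsElliptic A K₁ K₂) {h : Ed d → ℝ}
    (h_le : ∀ x, |h x| ≤ 1) {t : ℝ} (ht : 0 < t) (x : Ed d) :
    |∫ y, h y * parametrix A t x y| ≤ (π * (4 * K₁)) ^ ((d : ℝ) / 2) := by
  have hK := hA.pos
  have hker : Integrable (gaussKernel (4 * K₁) t : Ed d → ℝ) :=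
    integrable_gaussKernel (by positivity) ht
  rw [← integral_gaussKernel (by positivity) ht,
    ← integral_sub_left_eq_self (gaussKernel (4 * K₁) t) volume x, ← Real.norm_eq_abs]
  exact norm_integral_le_of_norm_le (hker.comp_sub_left x)
    (Eventually.of_forall fun y => abs_mul_parametrix_le hA (h_le y) ht.le x y)

end GaussMass

theorem abs_sub_le_two_mul_sqrt {F F' : ℝ → ℝ} {C : ℝ}
    (hF : ∀ t ∈ Ioc (0 : ℝ) 1, HasDerivAt F (F' t) t)
    (hF' : ∀ t ∈ Ioc (0 : ℝ) 1, |F' t| ≤ C * (√t)⁻¹) {l : ℝ}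
    (hl : Tendsto F (𝓝[>] 0) (𝓝 l)) {t : ℝ} (ht : t ∈ Ioc (0 : ℝ) 1) :
    |l - F t| ≤ 2 * C * √t := by
  have hincrement : ∀ s ∈ Ioo 0 t, |F t - F s| ≤ 2 * C * √t - 2 * C * √s := fun s hs => by
    have hpos : ∀ u ∈ Icc s t, 0 < u := fun u hu => hs.1.trans_le hu.1
    have hbase : ∀ u ∈ Icc s t, HasDerivAt F (F' u) u := fun u hu =>
      hF u ⟨hpos u hu, hu.2.trans ht.2⟩
    have hsqrt : ∀ u ∈ Icc s t, HasDerivAt (fun u => 2 * C * √u - 2 * C * √s) (C * (√u)⁻¹) u :=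
      fun u hu => by
        have h := ((Real.hasDerivAt_sqrt (hpos u hu).ne').const_mul (2 * C)).sub_const (2 * C * √s)
        exact h.congr_deriv (by field_simp)
    exact image_norm_le_of_norm_deriv_right_le_deriv_boundary' (f := fun u => F u - F s)
      (fun u hu => ((hbase u hu).sub_const _).continuousAt.continuousWithinAt)
      (fun u hu => ((hbase u (Ico_subset_Icc_self hu)).sub_const _).hasDerivWithinAt)
      (by simp)
      (fun u hu => (hsqrt u hu).continuousAt.continuousWithinAt)
      (fun u hu => (hsqrt u (Ico_subset_Icc_self hu)).hasDerivWithinAt)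
      (fun u hu => hF' u ⟨hpos u (Ico_subset_Icc_self hu), hu.2.le.trans ht.2⟩)
      (right_mem_Icc.2 hs.2.le)
  have hsqrt_lim : Tendsto (fun s => 2 * C * √t - 2 * C * √s) (𝓝[>] 0) (𝓝 (2 * C * √t)) := by
    have h : Continuous fun s => 2 * C * √t - 2 * C * √s := by fun_prop
    simpa using (h.tendsto 0).mono_left nhdsWithin_le_nhds
  rw [abs_sub_comm]
  refine le_of_tendsto_of_tendsto (hl.const_sub (F t)).abs hsqrt_lim ?_
  filter_upwards [Ioo_mem_nhdsGT ht.1] with s hs using hincrement s hs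

section Pairing

variable {A : Ed d → Matrix (Fin d) (Fin d) ℝ} {K₁ K₂ : ℝ} {η θ : Ed d → ℝ}

theorem integrable_cutoff_mul (σ : Measure (Ed d)) [IsFiniteMeasure σ] (hη : Continuous η)
    (hηc : HasCompactSupport η) (hθ : Continuous θ) (hθc : HasCompactSupport θ)
    {g : Ed d × Ed d → ℝ} (hg : Continuous g) :
    Integrable (fun p : Ed d × Ed d => θ p.2 * (η p.1 * g p)) (σ.prod volume) := by
  have hcont : Continuous fun p : Ed d × Ed d => θ p.2 * (η p.1 * g p) :=
    (hθ.comp continuous_snd).mul ((hη.comp continuous_fst).mul hg)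
  refine hcont.integrable_of_hasCompactSupport
    (HasCompactSupport.intro (hηc.isCompact.prod hθc.isCompact) fun p hp => ?_)
  rcases not_and_or.1 hp with h | h
  · simp [image_eq_zero_of_notMem_tsupport h]
  · simp [image_eq_zero_of_notMem_tsupport h]

variable {σ : Measure (Ed d)} [IsFiniteMeasure σ]

theorem integral_mul_smoothing_eq_integral_prod (hA : IsElliptic A K₁ K₂) (hη : Continuous η)
    (hηc : HasCompactSupport η) (hθ : Continuous θ) (hθc : HasCompactSupport θ) (t : ℝ) :
    ∫ y, θ y * smoothing A η σ t y
      = ∫ p : Ed d × Ed d, θ p.2 * (η p.1 * parametrix A t p.1 p.2) ∂σ.prod volume := by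
  rw [integral_prod_symm _ (integrable_cutoff_mul σ hη hηc hθ hθc (continuous_parametrix hA t))]
  simp only [smoothing, integral_const_mul]

theorem integral_mul_smoothing_eq_integral_integral (hA : IsElliptic A K₁ K₂) (hη : Continuous η)
    (hηc : HasCompactSupport η) (hθ : Continuous θ) (hθc : HasCompactSupport θ) (t : ℝ) :
    ∫ y, θ y * smoothing A η σ t y = ∫ x, η x * (∫ y, θ y * parametrix A t x y) ∂σ := by
  rw [integral_mul_smoothing_eq_integral_prod hA hη hηc hθ hθc,
    integral_prod _ (integrable_cutoff_mul σ hη hηc hθ hθc (continuous_parametrix hA t))]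
  simp only [← integral_const_mul, mul_left_comm]

theorem tendsto_integral_mul_smoothing (hA : IsElliptic A K₁ K₂) (hη : IsCutoff η)
    (hθ : IsCutoff θ) :
    Tendsto (fun t => ∫ y, θ y * smoothing A η σ t y) (𝓝[>] 0)
      (𝓝 (∫ x, η x * gaussMass A x * θ x ∂σ)) := by
  simp only [integral_mul_smoothing_eq_integral_integral hA hη.continuous hη.hasCompactSupport
    hθ.continuous hθ.hasCompactSupport, mul_assoc, mul_comm (gaussMass A _)]
  refine tendsto_integral_filter_of_dominated_convergence
    (fun _ => (π * (4 * K₁)) ^ ((d : ℝ) / 2)) (Eventually.of_forall fun s => ?_) ?_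
    (integrable_const _)
    (Eventually.of_forall fun x =>
      (tendsto_integral_mul_parametrix hA hθ.continuous hθ.abs_le_one x).const_mul _)
  · have hcont : Continuous fun p : Ed d × Ed d => θ p.2 * parametrix A s p.1 p.2 :=
      (hθ.continuous.comp continuous_snd).mul (continuous_parametrix hA s)
    exact hη.continuous.aestronglyMeasurable.mul
      (hcont.stronglyMeasurable.integral_prod_right (ν := volume)).aestronglyMeasurable
  · filter_upwards [self_mem_nhdsWithin] with s hs
    refine Eventually.of_forall fun x => ?_
    rw [norm_mul, Real.norm_eq_abs, Real.norm_eq_abs]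
    exact (mul_le_of_le_one_left (abs_nonneg _) (hη.abs_le_one x)).trans
      (abs_integral_mul_parametrix_le hA hθ.abs_le_one hs x)

theorem abs_parametrixDeriv_le (hA : IsElliptic A K₁ K₂) {r t : ℝ} (hr : 0 < r) (hrt : r ≤ t)
    (x y : Ed d) :
    |parametrixDeriv A t x y|
      ≤ (K₁ * ‖x - y‖ ^ 2 / (4 * r ^ 2) + d / (2 * r)) * r ^ (-(d : ℝ) / 2) := by
  have hK := hA.pos
  have ht : 0 < t := hr.trans_le hrt
  have hform : |⟪invOp A y (x - y), x - y⟫| ≤ K₁ * ‖x - y‖ ^ 2 := by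
    refine (abs_real_inner_le_norm _ _).trans ?_
    rw [sq, ← mul_assoc]
    exact mul_le_mul_of_nonneg_right (hA.norm_invOp_le y _) (norm_nonneg _)
  have hker : |parametrix A t x y| ≤ r ^ (-(d : ℝ) / 2) := by
    rw [abs_of_nonneg (parametrix_nonneg A ht.le x y)]
    refine ((parametrix_le_gaussKernel hA ht.le x y).trans
      (gaussKernel_le (by positivity) ht.le _)).trans ?_
    exact Real.rpow_le_rpow_of_nonpos hr hrt (by rw [neg_div]; exact neg_nonpos.2 (by positivity))
  rw [parametrixDeriv, abs_mul]
  refine mul_le_mul ((abs_sub _ _).trans ?_) hker (abs_nonneg _) (by positivity)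
  rw [abs_div, abs_div, Nat.abs_cast, abs_of_pos (by positivity : 0 < 4 * t ^ 2),
    abs_of_pos (by positivity : 0 < 2 * t)]
  gcongr

theorem hasDerivAt_integral_mul_smoothing (hA : IsElliptic A K₁ K₂) (hη : Continuous η)
    (hηc : HasCompactSupport η) (hθ : Continuous θ) (hθc : HasCompactSupport θ) {t : ℝ}
    (ht : 0 < t) :
    HasDerivAt (fun s => ∫ y, θ y * smoothing A η σ s y)
      (∫ y, θ y * ∫ x, η x * parametrixDeriv A t x y ∂σ) t := by
  have hint {g : Ed d × Ed d → ℝ} (hg : Continuous g) := integrable_cutoff_mul σ hη hηc hθ hθc hg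
  have hderiv := (hasDerivAt_integral_of_dominated_loc_of_deriv_le (μ := σ.prod volume)
    (F := fun s p => θ p.2 * (η p.1 * parametrix A s p.1 p.2))
    (F' := fun s p => θ p.2 * (η p.1 * parametrixDeriv A s p.1 p.2))
    (bound := fun p => |θ p.2| * (|η p.1| * ((K₁ * ‖p.1 - p.2‖ ^ 2 / (4 * (t / 2) ^ 2)
      + d / (2 * (t / 2))) * (t / 2) ^ (-(d : ℝ) / 2))))
    (Ioi_mem_nhds (half_lt_self ht))
    (Eventually.of_forall fun s => (hint (continuous_parametrix hA s)).aestronglyMeasurable)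
    (hint (continuous_parametrix hA t))
    (hint (continuous_parametrixDeriv hA t)).aestronglyMeasurable
    (Eventually.of_forall fun p s hs => ?_)
    (integrable_cutoff_mul σ hη.abs hηc.norm hθ.abs hθc.norm (by fun_prop))
    (Eventually.of_forall fun p s hs => ?_)).2
  · rw [integral_prod_symm _ (hint (continuous_parametrixDeriv hA t))] at hderiv
    simpa only [integral_mul_smoothing_eq_integral_prod hA hη hηc hθ hθc, integral_const_mul]
      using hderiv
  · rw [norm_mul, norm_mul, Real.norm_eq_abs, Real.norm_eq_abs, Real.norm_eq_abs]
    have hbound := abs_parametrixDeriv_le hA (half_pos ht) (mem_Ioi.1 hs).le p.1 p.2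
    gcongr
  · exact ((hasDerivAt_parametrix A ((half_pos ht).trans hs) p.1 p.2).const_mul _).const_mul _

end Pairing

section ParametrixEstimate

variable {A : Ed d → Matrix (Fin d) (Fin d) ℝ} {K₁ K₂ : ℝ} {η θ : Ed d → ℝ}

theorem exists_norm_gradient_le {φ : Ed d → ℝ} (hφ : ContDiff ℝ 1 φ) (hc : HasCompactSupport φ) :
    ∃ G, ∀ x, ‖gradient φ x‖ ≤ G := by
  simpa only [norm_gradient_eq_norm_fderiv] using
    (hφ.continuous_fderiv one_ne_zero).bounded_above_of_compact_support (hc.fderiv ℝ)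

theorem exists_norm_iteratedFDeriv_two_le {φ : Ed d → ℝ} (hφ : ContDiff ℝ 2 φ)
    (hc : HasCompactSupport φ) : ∃ H, ∀ x, ‖iteratedFDeriv ℝ 2 φ x‖ ≤ H :=
  (hφ.continuous_iteratedFDeriv (m := 2) le_rfl).bounded_above_of_compact_support
    (hc.iteratedFDeriv 2)

theorem exists_abs_Lop_le (hA : IsElliptic A K₁ K₂) {φ : Ed d → ℝ} (hφ : ContDiff ℝ 2 φ)
    (hc : HasCompactSupport φ) {N : ℝ} (hN : 0 ≤ N) :
    ∃ C, 0 ≤ C ∧ ∀ B : Ed d → Ed d, (∀ x ∈ tsupport φ, ‖B x‖ ≤ N) → ∀ x, |Lop A B φ x| ≤ C := by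
  have hK := hA.pos
  obtain ⟨G, hG⟩ := exists_norm_gradient_le (hφ.of_le one_le_two) hc
  obtain ⟨H, hH⟩ := exists_norm_iteratedFDeriv_two_le hφ hc
  have hG0 : 0 ≤ G := (norm_nonneg _).trans (hG 0)
  have hH0 : 0 ≤ H := (norm_nonneg _).trans (hH 0)
  refine ⟨d ^ 2 * K₁ * H + N * G, by positivity, fun B hB x => ?_⟩
  by_cases hx : x ∈ tsupport φ
  · refine (abs_Lop_le (hA.abs_apply_le x) φ).trans ?_
    gcongr
    exacts [hH x, hB x hx, hG x]
  · rw [Lop_eq_zero_of_notMem_tsupport A B hx, abs_zero]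
    positivity

theorem integrable_Lop (hA : IsElliptic A K₁ K₂) {B : Ed d → Ed d} (hB : Measurable B)
    {φ : Ed d → ℝ} (hφ : ContDiff ℝ 2 φ) (hc : HasCompactSupport φ) {N : ℝ} (hN : 0 ≤ N)
    (hB_le : ∀ x ∈ tsupport φ, ‖B x‖ ≤ N) (σ : Measure (Ed d)) [IsFiniteMeasure σ] :
    Integrable (Lop A B φ) σ := by
  obtain ⟨C, -, hC⟩ := exists_abs_Lop_le hA hφ hc hN
  exact (integrable_const C).mono' (measurable_Lop hA.continuous_apply hB hφ).aestronglyMeasurable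
    (Eventually.of_forall (hC B hB_le))

/- The equation of `σ` turns the time derivative of the regularisation into the parametrix error,
up to the contribution of the source. -/
theorem integral_mul_parametrixDeriv_eq (hA : IsElliptic A K₁ K₂) (hη : ContDiff ℝ 2 η)
    (hηc : HasCompactSupport η) {B : Ed d → Ed d} (hB : Measurable B) {N : ℝ} (hN : 0 ≤ N)
    (hB_le : ∀ x ∈ tsupport η, ‖B x‖ ≤ N) {σ : Measure (Ed d)} [IsFiniteMeasure σ] {κ : ℝ}
    (hσ : HasPointSourceOn A B κ (tsupport η) σ) (t : ℝ) (y : Ed d) :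
    ∫ x, η x * parametrixDeriv A t x y ∂σ
      = ∫ x, parametrixRem A B η t x y ∂σ + κ * (η 0 * parametrix A t 0 y) := by
  set φ : Ed d → ℝ := fun x => η x * parametrix A t x y
  have hφ : ContDiff ℝ 2 φ := hη.mul (contDiff_parametrix A t y)
  have hsub : tsupport φ ⊆ tsupport η := tsupport_mul_subset_left
  have hLop : Integrable (Lop A B φ) σ :=
    integrable_Lop hA hB hφ hηc.mul_right hN (fun x hx => hB_le x (hsub hx)) σ
  have hcont : Continuous fun x => parametrixDeriv A t x y :=
    (continuous_parametrixDeriv hA t).comp₂ continuous_id continuous_const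
  have hderiv : Integrable (fun x => η x * parametrixDeriv A t x y) σ :=
    (hη.continuous.mul hcont).integrable_of_hasCompactSupport hηc.mul_right
  rw [← hσ φ hφ hsub, ← sub_eq_iff_eq_add, ← integral_sub hderiv hLop]
  simp only [parametrixRem, φ]

theorem integral_integral_gaussKernel_sub (σ : Measure (Ed d)) [IsProbabilityMeasure σ] {K t : ℝ}
    (hK : 0 < K) (ht : 0 < t) :
    ∫ y, ∫ x, gaussKernel K t (x - y) ∂σ = (π * K) ^ ((d : ℝ) / 2) := by
  rw [← integral_integral_swap (f := fun x y => gaussKernel K t (x - y))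
    (integrable_prod_gaussKernel_sub σ hK ht)]
  simp [integral_sub_left_eq_self, integral_gaussKernel hK ht]

theorem exists_abs_integral_mul_parametrixDeriv_le (hA : IsElliptic A K₁ K₂)
    (hη : ContDiff ℝ 2 η) (hηc : HasCompactSupport η) (hη_le : ∀ x, |η x| ≤ 1) {N Λ : ℝ}
    (hN : 0 ≤ N) :
    ∃ D, 0 ≤ D ∧ ∀ B : Ed d → Ed d, Measurable B → (∀ x ∈ tsupport η, ‖B x‖ ≤ N) →
      ∀ (σ : Measure (Ed d)) [IsProbabilityMeasure σ] (κ : ℝ), |κ| ≤ Λ →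
      HasPointSourceOn A B κ (tsupport η) σ → ∀ t ∈ Ioc (0 : ℝ) 1, ∀ y,
      |∫ x, η x * parametrixDeriv A t x y ∂σ|
        ≤ D * (√t)⁻¹ * (∫ x, gaussKernel (8 * K₁) t (x - y) ∂σ)
          + Λ * gaussKernel (4 * K₁) t (0 - y) := by
  have hK := hA.pos
  obtain ⟨G, hG⟩ := exists_norm_gradient_le (hη.of_le one_le_two) hηc
  obtain ⟨H, hH⟩ := exists_norm_iteratedFDeriv_two_le hη hηc
  obtain ⟨D, hD_nonneg, hD⟩ := exists_abs_parametrixRem_le hA hN hη hη_le hG hH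
  refine ⟨D, hD_nonneg, fun B hB hB_le σ _ κ hκ hσ t ht y => ?_⟩
  have hker : Integrable (fun x => gaussKernel (8 * K₁) t (x - y)) σ := by
    refine (integrable_const (t ^ (-(d : ℝ) / 2))).mono'
      ((continuous_gaussKernel _ t).comp (continuous_sub_right y)).aestronglyMeasurable
      (Eventually.of_forall fun x => ?_)
    rw [Real.norm_of_nonneg (gaussKernel_nonneg _ ht.1.le _)]
    exact gaussKernel_le (by positivity) ht.1.le _
  have hrem : |∫ x, parametrixRem A B η t x y ∂σ|
      ≤ D * (√t)⁻¹ * ∫ x, gaussKernel (8 * K₁) t (x - y) ∂σ := by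
    rw [← integral_const_mul, ← Real.norm_eq_abs]
    exact norm_integral_le_of_norm_le (hker.const_mul _)
      (Eventually.of_forall fun x => hD B hB_le t ht x y)
  have hsource : |κ * (η 0 * parametrix A t 0 y)| ≤ Λ * gaussKernel (4 * K₁) t (0 - y) := by
    rw [abs_mul]
    exact mul_le_mul hκ (abs_mul_parametrix_le hA (hη_le 0) ht.1.le 0 y) (abs_nonneg _)
      ((abs_nonneg κ).trans hκ)
  rw [integral_mul_parametrixDeriv_eq hA hη hηc hB hN hB_le hσ]
  exact (abs_add_le _ _).trans (add_le_add hrem hsource)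

theorem abs_integral_mul_le_of_abs_le_gaussKernel {K₁ C Λ t : ℝ} (hK : 0 < K₁) (hΛ : 0 ≤ Λ)
    (ht : t ∈ Ioc (0 : ℝ) 1) (hθ_le : ∀ y, |θ y| ≤ 1) {σ : Measure (Ed d)}
    [IsProbabilityMeasure σ] {g : Ed d → ℝ}
    (hg : ∀ y, |g y| ≤ C * (√t)⁻¹ * (∫ x, gaussKernel (8 * K₁) t (x - y) ∂σ)
      + Λ * gaussKernel (4 * K₁) t (0 - y)) :
    |∫ y, θ y * g y| ≤ (C * (π * (8 * K₁)) ^ ((d : ℝ) / 2)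
      + Λ * (π * (4 * K₁)) ^ ((d : ℝ) / 2)) * (√t)⁻¹ := by
  have ht0 := ht.1
  have hinv : 1 ≤ (√t)⁻¹ := (one_le_inv₀ (Real.sqrt_pos.2 ht0)).2 (Real.sqrt_le_one.2 ht.2)
  have hker : Integrable fun y => ∫ x, gaussKernel (8 * K₁) t (x - y) ∂σ :=
    (integrable_prod_gaussKernel_sub σ (by positivity) ht0).integral_prod_right
  have hsource : Integrable fun y : Ed d => gaussKernel (4 * K₁) t (0 - y) :=
    (integrable_gaussKernel (by positivity) ht0).comp_sub_left 0
  calc |∫ y, θ y * g y|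
      ≤ ∫ y, (C * (√t)⁻¹ * (∫ x, gaussKernel (8 * K₁) t (x - y) ∂σ)
          + Λ * gaussKernel (4 * K₁) t (0 - y)) := by
        rw [← Real.norm_eq_abs]
        refine norm_integral_le_of_norm_le ((hker.const_mul _).add (hsource.const_mul _))
          (Eventually.of_forall fun y => ?_)
        rw [norm_mul, Real.norm_eq_abs, Real.norm_eq_abs]
        exact (mul_le_of_le_one_left (abs_nonneg _) (hθ_le y)).trans (hg y)
    _ = C * (√t)⁻¹ * (π * (8 * K₁)) ^ ((d : ℝ) / 2) + Λ * (π * (4 * K₁)) ^ ((d : ℝ) / 2) := by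
        rw [integral_add (hker.const_mul _) (hsource.const_mul _), integral_const_mul,
          integral_const_mul, integral_integral_gaussKernel_sub σ (by positivity) ht0,
          integral_sub_left_eq_self (gaussKernel (4 * K₁) t : Ed d → ℝ) volume 0,
          integral_gaussKernel (by positivity) ht0]
    _ ≤ _ := by
        rw [add_mul, mul_right_comm]
        exact add_le_add le_rfl (le_mul_of_one_le_right (by positivity) hinv)

theorem exists_parametrixBound (hA : IsElliptic A K₁ K₂) (hη : IsCutoff η)
    (hη_smooth : ContDiff ℝ 2 η) (hθ : IsCutoff θ) (hηθ : ∀ x, η x ≠ 0 → θ x = 1)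
    {N Λ : ℝ} (hN : 0 ≤ N) :
    ∃ D, ∀ B : Ed d → Ed d, Measurable B → (∀ x ∈ tsupport η, ‖B x‖ ≤ N) →
      ∀ σ : Measure (Ed d), IsProbabilityMeasure σ → ∀ κ : ℝ, |κ| ≤ Λ →
      HasPointSourceOn A B κ (tsupport η) σ → ParametrixBound A η θ D σ := by
  obtain ⟨D, -, hD⟩ := exists_abs_integral_mul_parametrixDeriv_le hA hη_smooth
    hη.hasCompactSupport hη.abs_le_one hN
  refine ⟨2 * (D * (π * (8 * K₁)) ^ ((d : ℝ) / 2) + Λ * (π * (4 * K₁)) ^ ((d : ℝ) / 2)),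
    fun B hB hB_le σ _ κ hκ hσ f hf hf_le t ht => ?_⟩
  have hΛ : 0 ≤ Λ := (abs_nonneg κ).trans hκ
  have hθf : IsCutoff fun y => θ y * f y :=
    ⟨hθ.continuous.mul hf, hθ.hasCompactSupport.mul_right, fun y => by
      rw [abs_mul]
      exact mul_le_one₀ (hθ.abs_le_one y) (abs_nonneg _) (hf_le y)⟩
  have hlim : Tendsto (fun s => ∫ y, θ y * f y * smoothing A η σ s y) (𝓝[>] 0)
      (𝓝 (∫ x, η x * gaussMass A x * f x ∂σ)) := by
    convert tendsto_integral_mul_smoothing (σ := σ) hA hη hθf using 4 with x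
    by_cases hx : η x = 0
    · simp [hx]
    · simp [hηθ x hx]
  exact abs_sub_le_two_mul_sqrt
    (fun s hs => hasDerivAt_integral_mul_smoothing hA hη.continuous hη.hasCompactSupport
      hθf.continuous hθf.hasCompactSupport hs.1)
    (fun s hs => abs_integral_mul_le_of_abs_le_gaussKernel hA.pos hΛ hs hθf.abs_le_one
      (hD B hB hB_le σ κ hκ hσ s hs)) hlim ht

end ParametrixEstimate

/-! ### Convergence in total variation -/

section TotalVariation

theorem exists_continuous_integral_abs_sub_le {X : Type*} [TopologicalSpace X] [NormalSpace X]
    [MeasurableSpace X] [BorelSpace X] (ρ : Measure X) [IsFiniteMeasure ρ] [ρ.WeaklyRegular]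
    {f : X → ℝ} (hf : Measurable f) (hf_le : ∀ x, |f x| ≤ 1) {ε : ℝ} (hε : 0 < ε) :
    ∃ g : X → ℝ, Continuous g ∧ (∀ x, |g x| ≤ 1) ∧ ∫ x, |f x - g x| ∂ρ ≤ ε := by
  have hf_int : Integrable f ρ := (integrable_const (1 : ℝ)).mono' hf.aestronglyMeasurable
    (Eventually.of_forall hf_le)
  obtain ⟨g, hg, hg_int⟩ := hf_int.exists_boundedContinuous_integral_sub_le hε
  set clip : ℝ → ℝ := fun r => max (min 1 r) (-1)
  have hclip : Continuous fun x => clip (g x) :=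
    (continuous_const.min g.continuous).max continuous_const
  have hclip_le : ∀ x, |clip (g x)| ≤ 1 := fun x =>
    abs_le.2 ⟨le_max_right _ _, max_le (min_le_left _ _) (by norm_num)⟩
  have hclip_f : ∀ x, clip (f x) = f x := fun x => by
    simp only [clip, min_eq_right (abs_le.1 (hf_le x)).2, max_eq_left (abs_le.1 (hf_le x)).1]
  have hdist : ∀ x, |f x - clip (g x)| ≤ ‖f x - g x‖ := fun x => by
    calc |f x - clip (g x)| = |clip (f x) - clip (g x)| := by rw [hclip_f]
      _ ≤ |min 1 (f x) - min 1 (g x)| := abs_max_sub_max_le_abs _ _ _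
      _ ≤ max |1 - 1| |f x - g x| := abs_min_sub_min_le_max _ _ _ _
      _ = ‖f x - g x‖ := by simp
  have hclip_int : Integrable (fun x => clip (g x)) ρ :=
    (integrable_const (1 : ℝ)).mono' hclip.aestronglyMeasurable (Eventually.of_forall hclip_le)
  exact ⟨fun x => clip (g x), hclip, hclip_le,
    (integral_mono (hf_int.sub hclip_int).abs (hf_int.sub hg_int).norm hdist).trans hg⟩

theorem abs_integral_mul_sub_integral_mul_le {X : Type*} [MeasurableSpace X] {μ : Measure X}
    {u f g : X → ℝ} (hf : Integrable (fun x => u x * f x) μ)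
    (hg : Integrable (fun x => u x * g x) μ) (hu : AEMeasurable u μ) :
    |∫ x, u x * f x ∂μ - ∫ x, u x * g x ∂μ|
      ≤ ∫ x, |f x - g x| ∂μ.withDensity fun x => ‖u x‖ₑ := by
  rw [integral_withDensity_eq_integral_toReal_smul₀ hu.enorm
    (Eventually.of_forall fun x => enorm_lt_top), ← integral_sub hf hg]
  refine abs_integral_le_integral_abs.trans_eq ?_
  simp only [← mul_sub, abs_mul, toReal_enorm, Real.norm_eq_abs, smul_eq_mul]

/- Both pairings are continuous in `L¹` of the sum of the total variations `|u|μ` and `|v|ν`. -/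
theorem abs_integral_mul_sub_le_of_forall_continuous {X : Type*} [TopologicalSpace X]
    [TopologicalSpace.PseudoMetrizableSpace X] [MeasurableSpace X] [BorelSpace X] {μ ν : Measure X}
    {u v : X → ℝ} (hu : Integrable u μ) (hv : Integrable v ν) {C : ℝ}
    (h : ∀ g : X → ℝ, Continuous g → (∀ x, |g x| ≤ 1) →
      |∫ x, u x * g x ∂μ - ∫ x, v x * g x ∂ν| ≤ C)
    {f : X → ℝ} (hf : Measurable f) (hf_le : ∀ x, |f x| ≤ 1) :
    |∫ x, u x * f x ∂μ - ∫ x, v x * f x ∂ν| ≤ C := by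
  refine le_of_forall_pos_le_add fun ε hε => ?_
  have : IsFiniteMeasure (μ.withDensity fun x => ‖u x‖ₑ) := isFiniteMeasure_withDensity hu.2.ne
  have : IsFiniteMeasure (ν.withDensity fun x => ‖v x‖ₑ) := isFiniteMeasure_withDensity hv.2.ne
  obtain ⟨g, hg, hg_le, hfg⟩ := exists_continuous_integral_abs_sub_le
    (μ.withDensity (fun x => ‖u x‖ₑ) + ν.withDensity fun x => ‖v x‖ₑ) hf hf_le hε
  have hfg_int (ρ : Measure X) [IsFiniteMeasure ρ] : Integrable (fun x => |f x - g x|) ρ := by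
    refine (integrable_const (1 + 1 : ℝ)).mono' (hf.sub hg.measurable).abs.aestronglyMeasurable
      (Eventually.of_forall fun x => ?_)
    rw [Real.norm_eq_abs, abs_abs]
    exact (abs_sub _ _).trans (add_le_add (hf_le x) (hg_le x))
  have hmul {ρ : Measure X} {w k : X → ℝ} (hw : Integrable w ρ) (hk : Measurable k)
      (hk_le : ∀ x, |k x| ≤ 1) : Integrable (fun x => w x * k x) ρ :=
    hw.mul_bdd hk.aestronglyMeasurable (Eventually.of_forall hk_le)
  rw [integral_add_measure (hfg_int _) (hfg_int _)] at hfg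
  have hu_diff := abs_integral_mul_sub_integral_mul_le (hmul hu hf hf_le)
    (hmul hu hg.measurable hg_le) hu.aemeasurable
  have hv_diff := abs_integral_mul_sub_integral_mul_le (hmul hv hf hf_le)
    (hmul hv hg.measurable hg_le) hv.aemeasurable
  have hcont := h g hg hg_le
  rw [abs_le] at hu_diff hv_diff hcont ⊢
  constructor <;> linarith

theorem tendsto_const_mul_sqrt (D : ℝ) : Tendsto (fun t => D * √t) (𝓝[>] 0) (𝓝 0) := by
  have h := ((Real.continuous_sqrt.tendsto 0).const_mul D).mono_left
    (nhdsWithin_le_nhds (s := Ioi 0))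
  rwa [Real.sqrt_zero, mul_zero] at h

variable {A : Ed d → Matrix (Fin d) (Fin d) ℝ} {K₁ K₂ : ℝ} {η θ : Ed d → ℝ}

theorem abs_smoothing_le (hA : IsElliptic A K₁ K₂) (hη_le : ∀ x, |η x| ≤ 1) (σ : Measure (Ed d))
    [IsProbabilityMeasure σ] {t : ℝ} (ht : 0 < t) (y : Ed d) :
    |smoothing A η σ t y| ≤ t ^ (-(d : ℝ) / 2) := by
  have hK := hA.pos
  have hbound : ∀ x, ‖η x * parametrix A t x y‖ ≤ t ^ (-(d : ℝ) / 2) := fun x =>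
    (abs_mul_parametrix_le hA (hη_le x) ht.le x y).trans
      (gaussKernel_le (by positivity) ht.le (x - y))
  simpa [smoothing] using norm_integral_le_of_norm_le_const (μ := σ) (Eventually.of_forall hbound)

theorem stronglyMeasurable_smoothing (hA : IsElliptic A K₁ K₂) (hη : Continuous η)
    (σ : Measure (Ed d)) [SFinite σ] (t : ℝ) : StronglyMeasurable (smoothing A η σ t) :=
  ((hη.comp continuous_fst).mul
    (continuous_parametrix hA t)).stronglyMeasurable.integral_prod_left (μ := σ)

theorem integrable_cutoff_mul_smoothing (hA : IsElliptic A K₁ K₂) (hη : IsCutoff η)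
    (hθ : IsCutoff θ) (σ : Measure (Ed d)) [IsProbabilityMeasure σ] {t : ℝ} (ht : 0 < t) :
    Integrable fun y => θ y * smoothing A η σ t y :=
  (hθ.continuous.integrable_of_hasCompactSupport hθ.hasCompactSupport).mul_bdd
    (stronglyMeasurable_smoothing hA hη.continuous σ t).aestronglyMeasurable
    (Eventually.of_forall (abs_smoothing_le hA hη.abs_le_one σ ht))

theorem integrable_cutoff_mul_gaussMass (hA : IsElliptic A K₁ K₂) (hη : IsCutoff η)
    (σ : Measure (Ed d)) [IsFiniteMeasureOnCompacts σ] :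
    Integrable (fun x => η x * gaussMass A x) σ :=
  (hη.continuous.mul (continuous_gaussMass hA)).integrable_of_hasCompactSupport
    hη.hasCompactSupport.mul_right

theorem ParametrixBound.of_measurable (hA : IsElliptic A K₁ K₂) (hη : IsCutoff η)
    (hθ : IsCutoff θ) {D : ℝ} {σ : Measure (Ed d)} [IsProbabilityMeasure σ]
    (h : ParametrixBound A η θ D σ) {f : Ed d → ℝ} (hf : Measurable f) (hf_le : ∀ x, |f x| ≤ 1)
    {t : ℝ} (ht : t ∈ Ioc (0 : ℝ) 1) :
    |∫ x, η x * gaussMass A x * f x ∂σ - ∫ y, θ y * f y * smoothing A η σ t y| ≤ D * √t := by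
  have hcont : ∀ g : Ed d → ℝ, Continuous g → (∀ x, |g x| ≤ 1) →
      |∫ x, η x * gaussMass A x * g x ∂σ - ∫ y, θ y * smoothing A η σ t y * g y| ≤ D * √t :=
    fun g hg hg_le => by simpa only [mul_right_comm (θ _)] using h g hg hg_le t ht
  simp only [mul_right_comm (θ _) (f _)]
  exact abs_integral_mul_sub_le_of_forall_continuous (integrable_cutoff_mul_gaussMass hA hη σ)
    (integrable_cutoff_mul_smoothing hA hη hθ σ ht.1) hcont hf hf_le

theorem abs_integral_cutoff_mul_smoothing_sub_le (hA : IsElliptic A K₁ K₂) (hη : IsCutoff η)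
    (hθ : IsCutoff θ) (σ σ' : Measure (Ed d)) [IsProbabilityMeasure σ] [IsProbabilityMeasure σ']
    {t : ℝ} (ht : 0 < t) {f : Ed d → ℝ} (hf : Measurable f) (hf_le : ∀ x, |f x| ≤ 1) :
    |(∫ y, θ y * f y * smoothing A η σ t y) - ∫ y, θ y * f y * smoothing A η σ' t y|
      ≤ ∫ y, |θ y| * |smoothing A η σ t y - smoothing A η σ' t y| := by
  have hmul (ρ : Measure (Ed d)) [IsProbabilityMeasure ρ] :
      Integrable fun y => θ y * f y * smoothing A η ρ t y := by
    simpa only [mul_right_comm] using (integrable_cutoff_mul_smoothing hA hη hθ ρ ht).mul_bdd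
      hf.aestronglyMeasurable (Eventually.of_forall hf_le)
  have hdiff := ((integrable_cutoff_mul_smoothing hA hη hθ σ ht).sub
    (integrable_cutoff_mul_smoothing hA hη hθ σ' ht)).abs
  simp only [Pi.sub_apply, ← mul_sub, abs_mul] at hdiff
  rw [← integral_sub (hmul σ) (hmul σ'), ← Real.norm_eq_abs]
  refine norm_integral_le_of_norm_le hdiff (Eventually.of_forall fun y => ?_)
  rw [← mul_sub, norm_mul, norm_mul]
  exact mul_le_mul_of_nonneg_right (mul_le_of_le_one_right (abs_nonneg _) (hf_le y)) (abs_nonneg _)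

/- Testing against `c f / gaussMass A`, where `c` is a lower bound of `gaussMass A`, removes the
weight `gaussMass A` from `ParametrixBound`. -/
theorem ParametrixBound.mul_abs_integral_cutoff_sub_le (hA : IsElliptic A K₁ K₂) (hη : IsCutoff η)
    (hθ : IsCutoff θ) {D : ℝ} {σ σ' : Measure (Ed d)} [IsProbabilityMeasure σ]
    [IsProbabilityMeasure σ'] (h : ParametrixBound A η θ D σ) (h' : ParametrixBound A η θ D σ')
    {t : ℝ} (ht : t ∈ Ioc (0 : ℝ) 1) {f : Ed d → ℝ} (hf : Measurable f) (hf_le : ∀ x, |f x| ≤ 1) :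
    (π * (4 / K₁)) ^ ((d : ℝ) / 2) * |∫ x, η x * f x ∂σ - ∫ x, η x * f x ∂σ'|
      ≤ 2 * D * √t + ∫ y, |θ y| * |smoothing A η σ t y - smoothing A η σ' t y| := by
  have hK := hA.pos
  set c := (π * (4 / K₁)) ^ ((d : ℝ) / 2)
  have hc : 0 < c := by positivity
  set g : Ed d → ℝ := fun x => c * f x / gaussMass A x with hg
  have hg_meas : Measurable g := (hf.const_mul c).div (continuous_gaussMass hA).measurable
  have hg_le : ∀ x, |g x| ≤ 1 := fun x => by
    have hpos := gaussMass_pos hA x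
    rw [hg, abs_div, abs_mul, abs_of_pos hc, abs_of_pos hpos, div_le_one hpos]
    exact (mul_le_of_le_one_right hc.le (hf_le x)).trans (le_gaussMass hA x)
  have hweight (ρ : Measure (Ed d)) :
      ∫ x, η x * gaussMass A x * g x ∂ρ = c * ∫ x, η x * f x ∂ρ := by
    rw [← integral_const_mul]
    congr 1 with x
    have hpos := (gaussMass_pos hA x).ne'
    simp only [hg]
    field_simp
  have hσ := h.of_measurable hA hη hθ hg_meas hg_le ht
  have hσ' := h'.of_measurable hA hη hθ hg_meas hg_le ht
  have hdiff := abs_integral_cutoff_mul_smoothing_sub_le hA hη hθ σ σ' ht.1 hg_meas hg_le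
  rw [hweight] at hσ hσ'
  nth_rw 1 [← abs_of_pos hc]
  rw [← abs_mul, mul_sub]
  rw [abs_le] at hσ hσ' hdiff ⊢
  constructor <;> linarith

theorem ParametrixBound.measure_inter_eq_zero (hA : IsElliptic A K₁ K₂) (hη : IsCutoff η)
    (hη_nonneg : ∀ x, 0 ≤ η x) (hθ : IsCutoff θ) {D : ℝ} {σ : Measure (Ed d)}
    [IsProbabilityMeasure σ] (h : ParametrixBound A η θ D σ) {s : Set (Ed d)}
    (hs : MeasurableSet s) (hs_null : volume s = 0) : σ (s ∩ {x | η x ≠ 0}) = 0 := by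
  set f : Ed d → ℝ := s.indicator 1
  have hf : Measurable f := measurable_one.indicator hs
  have hf_nonneg : ∀ x, 0 ≤ f x := indicator_nonneg (by simp)
  have hf_le : ∀ x, |f x| ≤ 1 := fun x => by
    rw [abs_of_nonneg (hf_nonneg x)]
    exact indicator_le_self' (by simp) x
  have hsmooth_zero : ∀ t, ∫ y, θ y * f y * smoothing A η σ t y = 0 := fun t => by
    refine integral_eq_zero_of_ae ?_
    filter_upwards [measure_eq_zero_iff_ae_notMem.1 hs_null] with y hy
    simp [f, hy]
  have hzero : ∫ x, η x * gaussMass A x * f x ∂σ = 0 := by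
    refine abs_nonpos_iff.1 (ge_of_tendsto (tendsto_const_mul_sqrt D) ?_)
    filter_upwards [Ioc_mem_nhdsGT one_pos] with t ht
    simpa [hsmooth_zero t] using h.of_measurable hA hη hθ hf hf_le ht
  have hint : Integrable (fun x => η x * gaussMass A x * f x) σ :=
    (integrable_cutoff_mul_gaussMass hA hη σ).mul_bdd hf.aestronglyMeasurable
      (Eventually.of_forall hf_le)
  rw [integral_eq_zero_iff_of_nonneg (fun x => mul_nonneg
    (mul_nonneg (hη_nonneg x) (gaussMass_pos hA x).le) (hf_nonneg x)) hint] at hzero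
  rw [measure_eq_zero_iff_ae_notMem]
  filter_upwards [hzero] with x hx hxs
  have hη_ne : η x ≠ 0 := hxs.2
  exact absurd hx (by simp [f, hxs.1, hη_ne, (gaussMass_pos hA x).ne'])

/-- Vague convergence of sequences of measures, tested against compactly supported functions. -/
def VagueTendsto {X : Type*} [TopologicalSpace X] [MeasurableSpace X] (σs : ℕ → Measure X)
    (σ : Measure X) : Prop :=
  ∀ g : X → ℝ, Continuous g → HasCompactSupport g →
    Tendsto (fun m => ∫ x, g x ∂σs m) atTop (𝓝 (∫ x, g x ∂σ))

variable {σs : ℕ → Measure (Ed d)} {σ : Measure (Ed d)}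

theorem VagueTendsto.tendsto_smoothing (h : VagueTendsto σs σ) (hη : IsCutoff η) (t : ℝ)
    (y : Ed d) : Tendsto (fun m => smoothing A η (σs m) t y) atTop (𝓝 (smoothing A η σ t y)) :=
  h _ (hη.continuous.mul (contDiff_parametrix A t y (n := 0)).continuous)
    hη.hasCompactSupport.mul_right

variable [∀ m, IsProbabilityMeasure (σs m)] [IsProbabilityMeasure σ]

theorem VagueTendsto.tendsto_integral_abs_smoothing_sub (h : VagueTendsto σs σ)
    (hA : IsElliptic A K₁ K₂) (hη : IsCutoff η) (hθ : IsCutoff θ) {t : ℝ} (ht : 0 < t) :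
    Tendsto (fun m => ∫ y, |θ y| * |smoothing A η (σs m) t y - smoothing A η σ t y|)
      atTop (𝓝 0) := by
  rw [← integral_zero (Ed d) ℝ (μ := volume)]
  have hmeas (ρ : Measure (Ed d)) [IsProbabilityMeasure ρ] : Measurable (smoothing A η ρ t) :=
    (stronglyMeasurable_smoothing hA hη.continuous ρ t).measurable
  refine tendsto_integral_of_dominated_convergence
    (fun y => |θ y| * (t ^ (-(d : ℝ) / 2) + t ^ (-(d : ℝ) / 2))) (fun m => ?_)
    ((hθ.continuous.abs.integrable_of_hasCompactSupport hθ.hasCompactSupport.norm).mul_const _)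
    (fun m => Eventually.of_forall fun y => ?_) (Eventually.of_forall fun y => ?_)
  · exact (hθ.continuous.measurable.abs.mul
      ((hmeas (σs m)).sub (hmeas σ)).abs).aestronglyMeasurable
  · rw [norm_mul, Real.norm_eq_abs, Real.norm_eq_abs, abs_abs, abs_abs]
    exact mul_le_mul_of_nonneg_left ((abs_sub _ _).trans (add_le_add
      (abs_smoothing_le hA hη.abs_le_one (σs m) ht y) (abs_smoothing_le hA hη.abs_le_one σ ht y)))
      (abs_nonneg _)
  · simpa using ((h.tendsto_smoothing (A := A) hη t y).sub_const
      (smoothing A η σ t y)).abs.const_mul |θ y|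

theorem VagueTendsto.parametrixBound (h : VagueTendsto σs σ) (hA : IsElliptic A K₁ K₂)
    (hη : IsCutoff η) (hθ : IsCutoff θ) {D : ℝ}
    (hD : ∀ᶠ m in atTop, ParametrixBound A η θ D (σs m)) : ParametrixBound A η θ D σ := by
  intro f hf hf_le t ht
  have hmass : Tendsto (fun m => ∫ x, η x * gaussMass A x * f x ∂σs m) atTop
      (𝓝 (∫ x, η x * gaussMass A x * f x ∂σ)) :=
    h _ ((hη.continuous.mul (continuous_gaussMass hA)).mul hf)
      hη.hasCompactSupport.mul_right.mul_right
  have hsmooth : Tendsto (fun m => ∫ y, θ y * f y * smoothing A η (σs m) t y) atTop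
      (𝓝 (∫ y, θ y * f y * smoothing A η σ t y)) := by
    rw [tendsto_iff_dist_tendsto_zero]
    exact squeeze_zero (fun m => dist_nonneg) (fun m =>
      abs_integral_cutoff_mul_smoothing_sub_le hA hη hθ (σs m) σ ht.1 hf.measurable hf_le)
      (h.tendsto_integral_abs_smoothing_sub hA hη hθ ht.1)
  refine le_of_tendsto (hmass.sub hsmooth).abs ?_
  filter_upwards [hD] with m hm using hm f hf hf_le t ht

theorem VagueTendsto.eventually_abs_integral_cutoff_sub_le (h : VagueTendsto σs σ)
    (hA : IsElliptic A K₁ K₂) (hη : IsCutoff η) (hθ : IsCutoff θ) {D : ℝ}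
    (hD : ∀ᶠ m in atTop, ParametrixBound A η θ D (σs m)) {ε : ℝ} (hε : 0 < ε) :
    ∀ᶠ m in atTop, ∀ f : Ed d → ℝ, Measurable f → (∀ x, |f x| ≤ 1) →
      |∫ x, η x * f x ∂σs m - ∫ x, η x * f x ∂σ| ≤ ε := by
  have hK := hA.pos
  have hc : 0 < (π * (4 / K₁)) ^ ((d : ℝ) / 2) := by positivity
  obtain ⟨t, htε, ht⟩ := (((tendsto_const_mul_sqrt (2 * D)).eventually_le_const
    (half_pos (mul_pos hc hε))).and (Ioc_mem_nhdsGT one_pos)).exists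
  filter_upwards [hD, (h.tendsto_integral_abs_smoothing_sub (A := A) hA hη hθ
    ht.1).eventually_le_const (half_pos (mul_pos hc hε))] with m hm hsmooth f hf hf_le
  refine le_of_mul_le_mul_left ?_ hc
  refine (hm.mul_abs_integral_cutoff_sub_le hA hη hθ (h.parametrixBound hA hη hθ hD) ht hf
    hf_le).trans ?_
  linarith

end TotalVariation

/-! ### Compactness under a Lyapunov moment bound -/

section Compactness

/-- A smooth bump function equal to `1` on the ball of radius `n + 1` and supported in the ball of
radius `n + 2`; the member `n` of an exhausting sequence. -/
def cutoffBump (d n : ℕ) : ContDiffBump (0 : Ed d) where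
  rIn := n + 1
  rOut := n + 2
  rIn_pos := by positivity
  rIn_lt_rOut := by linarith

/-- The function underlying `cutoffBump`. -/
def cutoff (n : ℕ) : Ed d → ℝ := cutoffBump d n

theorem contDiff_cutoff (n : ℕ) {k : ℕ∞} : ContDiff ℝ k (cutoff n : Ed d → ℝ) :=
  (cutoffBump d n).contDiff

theorem cutoff_nonneg (n : ℕ) (x : Ed d) : 0 ≤ cutoff n x := (cutoffBump d n).nonneg

theorem cutoff_le_one (n : ℕ) (x : Ed d) : cutoff n x ≤ 1 := (cutoffBump d n).le_one

theorem isCutoff_cutoff (n : ℕ) : IsCutoff (cutoff n : Ed d → ℝ) where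
  continuous := (cutoffBump d n).continuous
  hasCompactSupport := (cutoffBump d n).hasCompactSupport
  abs_le_one x := abs_le.2 ⟨by linarith [cutoff_nonneg n x], cutoff_le_one n x⟩

theorem cutoff_eq_one {n : ℕ} {x : Ed d} (hx : ‖x‖ ≤ n + 1) : cutoff n x = 1 :=
  (cutoffBump d n).one_of_mem_closedBall (by simpa [cutoffBump] using hx)

theorem tsupport_cutoff (n : ℕ) : tsupport (cutoff n : Ed d → ℝ) = closedBall 0 (n + 2) :=
  (cutoffBump d n).tsupport_eq

theorem cutoff_succ_eq_one {n : ℕ} {x : Ed d} (hx : cutoff n x ≠ 0) : cutoff (n + 1) x = 1 := by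
  have hx_mem : x ∈ tsupport (cutoff n : Ed d → ℝ) := subset_tsupport _ hx
  rw [tsupport_cutoff, mem_closedBall_zero_iff] at hx_mem
  exact cutoff_eq_one (by push_cast; linarith)

variable {A : Ed d → Matrix (Fin d) (Fin d) ℝ} {K₁ K₂ : ℝ} {V W : Ed d → ℝ} {D : ℕ → ℝ}
  {σs : ℕ → Measure (Ed d)} {σ : Measure (Ed d)}

/-- Parametrix bounds at all the scales of the exhaustion by `cutoff`, with constants `D`. -/
def LocalBounds (A : Ed d → Matrix (Fin d) (Fin d) ℝ) (D : ℕ → ℝ) (σ : Measure (Ed d)) : Prop :=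
  ∀ n, ParametrixBound A (cutoff n) (cutoff (n + 1)) (D n) σ

theorem LocalBounds.absolutelyContinuous [IsProbabilityMeasure σ] (h : LocalBounds A D σ)
    (hA : IsElliptic A K₁ K₂) : σ ≪ volume := by
  refine Measure.AbsolutelyContinuous.mk fun s hs hs_null => ?_
  have hs_cover : s ⊆ ⋃ n : ℕ, s ∩ {x | cutoff n x ≠ 0} := fun x hx => by
    obtain ⟨n, hn⟩ := exists_nat_ge ‖x‖
    refine mem_iUnion.2 ⟨n, hx, ?_⟩
    rw [mem_ofPred_eq, cutoff_eq_one (by linarith)]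
    exact one_ne_zero
  refine measure_mono_null hs_cover (measure_iUnion_null fun n => ?_)
  exact (h n).measure_inter_eq_zero hA (isCutoff_cutoff n) (cutoff_nonneg n)
    (isCutoff_cutoff (n + 1)) hs hs_null

theorem VagueTendsto.setIntegral_closedBall_le [IsFiniteMeasure σ] (h : VagueTendsto σs σ)
    (hV : Continuous V) (hV_nonneg : ∀ x, 0 ≤ V x) {α : ℝ} (hV_int : ∀ m, Integrable V (σs m))
    (hα : ∀ m, ∫ x, V x ∂σs m ≤ α) (n : ℕ) : ∫ x in closedBall 0 n, V x ∂σ ≤ α := by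
  have hV_cutoff : Continuous fun x => V x * cutoff n x := hV.mul (isCutoff_cutoff n).continuous
  have hV_cutoff_supp : HasCompactSupport fun x => V x * cutoff n x :=
    (isCutoff_cutoff n).hasCompactSupport.mul_left
  calc ∫ x in closedBall 0 n, V x ∂σ
      = ∫ x in closedBall 0 n, V x * cutoff n x ∂σ :=
        setIntegral_congr_fun measurableSet_closedBall fun x hx => by
          rw [cutoff_eq_one (by linarith [mem_closedBall_zero_iff.1 hx]), mul_one]
    _ ≤ ∫ x, V x * cutoff n x ∂σ :=
        setIntegral_le_integral (hV_cutoff.integrable_of_hasCompactSupport hV_cutoff_supp)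
          (Eventually.of_forall fun x => mul_nonneg (hV_nonneg x) (cutoff_nonneg n x))
    _ ≤ α := le_of_tendsto' (h _ hV_cutoff hV_cutoff_supp) fun m =>
        (integral_mono_of_nonneg
          (Eventually.of_forall fun x => mul_nonneg (hV_nonneg x) (cutoff_nonneg n x)) (hV_int m)
          (Eventually.of_forall fun x => mul_le_of_le_one_right (hV_nonneg x)
            (cutoff_le_one n x))).trans (hα m)

theorem VagueTendsto.integrable_and_integral_le [IsFiniteMeasure σ] (h : VagueTendsto σs σ)
    (hV : Continuous V) (hV_nonneg : ∀ x, 0 ≤ V x) {α : ℝ} (hV_int : ∀ m, Integrable V (σs m))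
    (hα : ∀ m, ∫ x, V x ∂σs m ≤ α) : Integrable V σ ∧ ∫ x, V x ∂σ ≤ α := by
  have hcover : AECover σ atTop fun n : ℕ => closedBall (0 : Ed d) n :=
    aecover_closedBall tendsto_natCast_atTop_atTop
  have hV_ball := h.setIntegral_closedBall_le hV hV_nonneg hV_int hα
  have hV_int_lim : Integrable V σ := hcover.integrable_of_integral_bounded_of_nonneg_ae α
    (fun n => hV.continuousOn.integrableOn_compact (isCompact_closedBall _ _))
    (Eventually.of_forall hV_nonneg) (Eventually.of_forall hV_ball)
  exact ⟨hV_int_lim,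
    le_of_tendsto' (hcover.integral_tendsto_of_countably_generated hV_int_lim) hV_ball⟩

theorem isTightMeasureSet_range_of_integral_le {X : Type*} [TopologicalSpace X]
    [MeasurableSpace X] {ι : Type*} {μs : ι → Measure X} [∀ i, IsFiniteMeasure (μs i)]
    {V : X → ℝ} (hV_nonneg : ∀ x, 0 ≤ V x) (hV_lim : Tendsto V (cocompact X) atTop) {α : ℝ}
    (hV_int : ∀ i, Integrable V (μs i)) (hα : ∀ i, ∫ x, V x ∂μs i ≤ α) :
    IsTightMeasureSet (range μs) := by
  rw [isTightMeasureSet_iff_exists_isCompact_measure_compl_le]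
  intro ε hε
  have hα_div : Tendsto (fun r : ℝ => ENNReal.ofReal (α / r)) atTop (𝓝 0) := by
    simpa using ENNReal.tendsto_ofReal ((tendsto_const_nhds (x := α)).div_atTop tendsto_id)
  obtain ⟨r, hr_pos, hr⟩ :=
    ((eventually_gt_atTop (0 : ℝ)).and (hα_div.eventually_le_const hε)).exists
  obtain ⟨K, hK, hKr⟩ := mem_cocompact.1 (hV_lim (Ici_mem_atTop r))
  refine ⟨K, hK, ?_⟩
  rintro _ ⟨i, rfl⟩
  have hmarkov : (μs i).real Kᶜ ≤ α / r := by
    rw [le_div_iff₀' hr_pos]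
    calc r * (μs i).real Kᶜ ≤ r * (μs i).real {x | r ≤ V x} :=
          mul_le_mul_of_nonneg_left (measureReal_mono hKr) hr_pos.le
      _ ≤ α := (mul_meas_ge_le_integral_of_nonneg (Eventually.of_forall hV_nonneg)
          (hV_int i) r).trans (hα i)
  rw [← ENNReal.ofReal_toReal (measure_ne_top (μs i) Kᶜ)]
  exact (ENNReal.ofReal_le_ofReal hmarkov).trans hr

theorem exists_subseq_vagueTendsto [∀ m, IsProbabilityMeasure (σs m)]
    (h : IsTightMeasureSet (range σs)) :
    ∃ σ : Measure (Ed d), IsProbabilityMeasure σ ∧ ∃ s : ℕ → ℕ, StrictMono s ∧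
      VagueTendsto (σs ∘ s) σ := by
  set P : ℕ → ProbabilityMeasure (Ed d) := fun m => ⟨σs m, inferInstance⟩
  have htight : IsTightMeasureSet {((μ : ProbabilityMeasure (Ed d)) : Measure (Ed d)) |
      μ ∈ range P} := h.subset <| by
    rintro _ ⟨_, ⟨m, rfl⟩, rfl⟩
    exact mem_range_self m
  obtain ⟨Q, -, s, hs, hlim⟩ := (isCompact_closure_of_isTightMeasureSet htight).tendsto_subseq
    (x := P) fun m => subset_closure (mem_range_self m)
  refine ⟨Q, inferInstance, s, hs, fun g hg hg_supp => ?_⟩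
  obtain ⟨M, hM⟩ := hg.bounded_above_of_compact_support hg_supp
  exact (ProbabilityMeasure.tendsto_iff_forall_integral_tendsto.1 hlim)
    (BoundedContinuousFunction.ofNormedAddCommGroup g hg M hM)

end Compactness

section WeightedConvergence

variable {X : Type*} [MeasurableSpace X]

/-- The weighted total variation distance `‖W (σ - τ)‖` is at most `ρ`, expressed by duality. -/
def WeightedClose (W : X → ℝ) (ρ : ℝ) (σ τ : Measure X) : Prop :=
  ∀ f : X → ℝ, Measurable f → (∀ x, |f x| ≤ W x) → |∫ x, f x ∂σ - ∫ x, f x ∂τ| ≤ ρ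

/-- Convergence of measures in the weighted total variation norm `‖·‖_W`. -/
def WeightedTendsto (W : X → ℝ) (σs : ℕ → Measure X) (σ : Measure X) : Prop :=
  ∀ ρ > 0, ∀ᶠ m in atTop, WeightedClose W ρ (σs m) σ

theorem WeightedClose.abs_integral_sub_le {W f : X → ℝ} {ρ M : ℝ} {σ τ : Measure X}
    (h : WeightedClose W ρ σ τ) (hf : Measurable f) (hM : 0 < M) (hf_le : ∀ x, |f x| ≤ M * W x) :
    |∫ x, f x ∂σ - ∫ x, f x ∂τ| ≤ M * ρ := by
  have hf_div := h (fun x => f x / M) (hf.div_const M) fun x => by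
    rw [abs_div, abs_of_pos hM, div_le_iff₀' hM]
    exact hf_le x
  simp only [integral_div] at hf_div
  rwa [← sub_div, abs_div, abs_of_pos hM, div_le_iff₀' hM] at hf_div

theorem WeightedTendsto.tendsto_integral {W f : X → ℝ} {M : ℝ} {σs : ℕ → Measure X}
    {σ : Measure X} (h : WeightedTendsto W σs σ) (hf : Measurable f) (hM : 0 < M)
    (hf_le : ∀ x, |f x| ≤ M * W x) : Tendsto (fun m => ∫ x, f x ∂σs m) atTop (𝓝 (∫ x, f x ∂σ)) := by
  rw [Metric.tendsto_nhds]
  intro ε hε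
  filter_upwards [h (ε / 2 / M) (by positivity)] with m hm
  rw [Real.dist_eq]
  refine (hm.abs_integral_sub_le hf hM hf_le).trans_lt ?_
  rw [mul_div_cancel₀ _ hM.ne']
  exact half_lt_self hε

variable {A : Ed d → Matrix (Fin d) (Fin d) ℝ} {K₁ K₂ : ℝ} {V W : Ed d → ℝ} {D : ℕ → ℝ}
  {σs : ℕ → Measure (Ed d)} {σ : Measure (Ed d)}

theorem WeightedTendsto.tendsto_wDist (h : WeightedTendsto W σs σ) (hW_nonneg : ∀ x, 0 ≤ W x) :
    Tendsto (fun m => wDist W (σs m) σ) atTop (𝓝 0) := by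
  let zero : {f : Ed d → ℝ // Measurable f ∧ ∀ x, |f x| ≤ W x} :=
    ⟨fun _ => 0, measurable_const, fun x => by simpa using hW_nonneg x⟩
  have : Nonempty {f : Ed d → ℝ // Measurable f ∧ ∀ x, |f x| ≤ W x} := ⟨zero⟩
  rw [Metric.tendsto_nhds]
  intro ε hε
  filter_upwards [h (ε / 2) (by positivity)] with m hm
  have hle (f : {f : Ed d → ℝ // Measurable f ∧ ∀ x, |f x| ≤ W x}) :
      ∫ x, f.1 x ∂σs m - ∫ x, f.1 x ∂σ ≤ ε / 2 :=
    (le_abs_self _).trans (hm f.1 f.2.1 f.2.2)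
  have hnonneg : 0 ≤ wDist W (σs m) σ := by
    refine le_trans ?_ (le_ciSup ⟨ε / 2, by rintro _ ⟨f, rfl⟩; exact hle f⟩ zero)
    simp [zero]
  rw [dist_zero_right, Real.norm_of_nonneg hnonneg]
  exact (ciSup_le hle).trans_lt (half_lt_self hε)

theorem integrable_of_isLittleO_cocompact [IsFiniteMeasure σ] (hW : Continuous W)
    (hWV : W =o[cocompact (Ed d)] V) (hV : Integrable V σ) : Integrable W σ :=
  (hW.locallyIntegrable (μ := σ)).integrable_of_isBigO_cocompact hWV.isBigO
    (hV.integrableAtFilter _)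

theorem exists_nat_forall_le_norm {E : Type*} [NormedAddCommGroup E] [ProperSpace E]
    {p : E → Prop} (h : ∀ᶠ x in cocompact E, p x) : ∃ n : ℕ, ∀ x, n + 1 ≤ ‖x‖ → p x := by
  rw [← cobounded_eq_cocompact] at h
  obtain ⟨r, -, hr⟩ := hasBasis_cobounded_norm.eventually_iff.1 h
  obtain ⟨n, hn⟩ := exists_nat_ge r
  exact ⟨n, fun x hx => hr (show r ≤ ‖x‖ by linarith)⟩

theorem abs_integral_sub_integral_cutoff_mul_le {f : Ed d → ℝ} {ε : ℝ} {n : ℕ}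
    (hV : Integrable V σ) (hV_nonneg : ∀ x, 0 ≤ V x) (hW : Integrable W σ) (hε : 0 ≤ ε)
    (hWV : ∀ x, n + 1 ≤ ‖x‖ → W x ≤ ε * V x) (hf : Measurable f) (hf_le : ∀ x, |f x| ≤ W x) :
    |∫ x, f x ∂σ - ∫ x, cutoff n x * f x ∂σ| ≤ ε * ∫ x, V x ∂σ := by
  have hf_int : Integrable f σ := hW.mono' hf.aestronglyMeasurable (Eventually.of_forall hf_le)
  have hcutoff_int : Integrable (fun x => cutoff n x * f x) σ :=
    hf_int.bdd_mul (isCutoff_cutoff n).continuous.aestronglyMeasurable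
      (Eventually.of_forall (isCutoff_cutoff n).abs_le_one)
  rw [← integral_sub hf_int hcutoff_int, ← integral_const_mul, ← Real.norm_eq_abs]
  refine norm_integral_le_of_norm_le (hV.const_mul ε) (Eventually.of_forall fun x => ?_)
  rw [← one_sub_mul, norm_mul, Real.norm_eq_abs, Real.norm_eq_abs,
    abs_of_nonneg (by linarith [cutoff_le_one n x])]
  rcases le_total ‖x‖ (n + 1) with hx | hx
  · rw [cutoff_eq_one hx, sub_self, zero_mul]
    exact mul_nonneg hε (hV_nonneg x)
  · exact (mul_le_of_le_one_left (abs_nonneg _) (by linarith [cutoff_nonneg n x])).trans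
      ((hf_le x).trans (hWV x hx))

theorem VagueTendsto.eventually_abs_integral_cutoff_sub_le_of_weight
    [∀ m, IsProbabilityMeasure (σs m)] [IsProbabilityMeasure σ] (h : VagueTendsto σs σ)
    (hA : IsElliptic A K₁ K₂) {η θ : Ed d → ℝ} (hη : IsCutoff η) (hθ : IsCutoff θ)
    (hW : Continuous W) {D : ℝ} (hD : ∀ᶠ m in atTop, ParametrixBound A η θ D (σs m)) {ε : ℝ}
    (hε : 0 < ε) : ∀ᶠ m in atTop, ∀ f : Ed d → ℝ, Measurable f → (∀ x, |f x| ≤ W x) →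
      |∫ x, η x * f x ∂σs m - ∫ x, η x * f x ∂σ| ≤ ε := by
  obtain ⟨M, hM⟩ := hη.hasCompactSupport.isCompact.exists_bound_of_continuousOn hW.continuousOn
  have hM_pos : 0 < |M| + 1 := by positivity
  filter_upwards [h.eventually_abs_integral_cutoff_sub_le hA hη hθ hD (div_pos hε hM_pos)]
    with m hm f hf hf_le
  set g : Ed d → ℝ := (tsupport η).indicator fun x => f x / (|M| + 1)
  have hg : Measurable g := (hf.div_const _).indicator (isClosed_tsupport η).measurableSet
  have hg_le (x : Ed d) : |g x| ≤ 1 := by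
    by_cases hx : x ∈ tsupport η
    · simp only [g, indicator_of_mem hx, abs_div, abs_of_pos hM_pos]
      refine (div_le_one hM_pos).2 ?_
      linarith [hf_le x, le_abs_self (W x), le_abs_self M, (Real.norm_eq_abs (W x)).symm.trans_le
        (hM x hx)]
    · simp [g, indicator_of_notMem hx]
  have hfg (x : Ed d) : η x * f x = (|M| + 1) * (η x * g x) := by
    by_cases hx : x ∈ tsupport η
    · simp only [g, indicator_of_mem hx]
      field_simp
    · simp [image_eq_zero_of_notMem_tsupport hx]
  simp only [hfg, integral_const_mul]
  rw [← mul_sub, abs_mul, abs_of_pos hM_pos, ← le_div_iff₀' hM_pos]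
  exact hm g hg hg_le

theorem VagueTendsto.weightedTendsto [∀ m, IsProbabilityMeasure (σs m)] [IsProbabilityMeasure σ]
    (h : VagueTendsto σs σ) (hA : IsElliptic A K₁ K₂) (hV : Continuous V)
    (hV_nonneg : ∀ x, 0 ≤ V x) (hW : Continuous W) (hWV : W =o[cocompact (Ed d)] V) {α : ℝ}
    (hV_int : ∀ m, Integrable V (σs m)) (hα : ∀ m, ∫ x, V x ∂σs m ≤ α)
    (hD : ∀ n, ∀ᶠ m in atTop, ParametrixBound A (cutoff n) (cutoff (n + 1)) (D n) (σs m)) :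
    WeightedTendsto W σs σ := by
  intro ε hε
  obtain ⟨hV_int_lim, hα_lim⟩ := h.integrable_and_integral_le hV hV_nonneg hV_int hα
  have hα_nonneg : 0 ≤ α := (integral_nonneg hV_nonneg).trans hα_lim
  obtain ⟨n, hn⟩ := exists_nat_forall_le_norm
    (hWV.bound (show 0 < ε / (4 * (α + 1)) by positivity))
  have hW_le (x : Ed d) (hx : n + 1 ≤ ‖x‖) : W x ≤ ε / (4 * (α + 1)) * V x :=
    ((le_abs_self _).trans (hn x hx)).trans_eq (by rw [Real.norm_of_nonneg (hV_nonneg x)])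
  have htail (ρ : Measure (Ed d)) [IsProbabilityMeasure ρ] (hρ : Integrable V ρ)
      (hαρ : ∫ x, V x ∂ρ ≤ α) (f : Ed d → ℝ) (hf : Measurable f) (hf_le : ∀ x, |f x| ≤ W x) :
      |∫ x, f x ∂ρ - ∫ x, cutoff n x * f x ∂ρ| ≤ ε / 4 := by
    refine (abs_integral_sub_integral_cutoff_mul_le hρ hV_nonneg
      (integrable_of_isLittleO_cocompact hW hWV hρ) (by positivity) hW_le hf hf_le).trans ?_
    rw [div_mul_eq_mul_div, div_le_iff₀ (by positivity)]
    nlinarith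
  filter_upwards [h.eventually_abs_integral_cutoff_sub_le_of_weight hA (isCutoff_cutoff n)
    (isCutoff_cutoff (n + 1)) hW (hD n) (half_pos hε)] with m hm f hf hf_le
  have htail_m := htail (σs m) (hV_int m) (hα m) f hf hf_le
  have htail_lim := htail σ hV_int_lim hα_lim f hf hf_le
  have hcutoff := hm f hf hf_le
  rw [abs_le] at htail_m htail_lim hcutoff ⊢
  constructor <;> linarith

theorem exists_subseq_weightedTendsto [∀ m, IsProbabilityMeasure (σs m)]
    (hA : IsElliptic A K₁ K₂) (hV : Continuous V) (hV_nonneg : ∀ x, 0 ≤ V x)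
    (hV_lim : Tendsto V (cocompact (Ed d)) atTop) (hW : Continuous W)
    (hWV : W =o[cocompact (Ed d)] V) {α : ℝ} (hV_int : ∀ m, Integrable V (σs m))
    (hα : ∀ m, ∫ x, V x ∂σs m ≤ α)
    (hD : ∀ n, ∀ᶠ m in atTop, ParametrixBound A (cutoff n) (cutoff (n + 1)) (D n) (σs m)) :
    ∃ σ : Measure (Ed d), memPV V σ ∧ ∫ x, V x ∂σ ≤ α ∧ LocalBounds A D σ ∧
      ∃ s : ℕ → ℕ, StrictMono s ∧ WeightedTendsto W (σs ∘ s) σ := by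
  obtain ⟨σ, hσ, s, hs, hlim⟩ := exists_subseq_vagueTendsto
    (isTightMeasureSet_range_of_integral_le hV_nonneg hV_lim hV_int hα)
  have hD_sub (n : ℕ) : ∀ᶠ m in atTop,
      ParametrixBound A (cutoff n) (cutoff (n + 1)) (D n) ((σs ∘ s) m) :=
    hs.tendsto_atTop.eventually (hD n)
  have : ∀ m, IsProbabilityMeasure ((σs ∘ s) m) := fun m =>
    inferInstanceAs (IsProbabilityMeasure (σs (s m)))
  obtain ⟨hV_int_lim, hα_lim⟩ :=
    hlim.integrable_and_integral_le hV hV_nonneg (fun m => hV_int (s m)) fun m => hα (s m)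
  exact ⟨σ, ⟨hσ, hV_int_lim⟩, hα_lim,
    fun n => hlim.parametrixBound hA (isCutoff_cutoff n) (isCutoff_cutoff (n + 1)) (hD_sub n), s,
    hs, hlim.weightedTendsto hA hV hV_nonneg hW hWV (fun m => hV_int (s m)) (fun m => hα (s m))
      hD_sub⟩

end WeightedConvergence

/-! ### Measures annihilating a subspace of continuous functions -/

section Annihilating

open scoped CompactlySupported

/- Separate the subspace from the open convex cone of everywhere negative functions. -/
theorem exists_positive_functional_eq_zero {X : Type*} [TopologicalSpace X] [CompactSpace X]
    (S : Submodule ℝ C(X, ℝ)) (hS : ∀ u ∈ S, ∃ x, 0 ≤ u x) :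
    ∃ f : C(X, ℝ) →L[ℝ] ℝ, 0 < f 1 ∧ (∀ g : C(X, ℝ), 0 ≤ g → 0 ≤ f g) ∧ ∀ u ∈ S, f u = 0 := by
  set U : Set C(X, ℝ) := {u | ∀ x, u x < 0} with hU
  have hU_open : IsOpen U := by
    simpa [hU, MapsTo] using ContinuousMap.isOpen_setOfPred_mapsTo (X := X) (Y := ℝ)
      isCompact_univ (isOpen_Iio (a := 0))
  have hU_convex : Convex ℝ U := fun u hu v hv a b ha hb hab x =>
    convex_Iio (𝕜 := ℝ) (0 : ℝ) (hu x) (hv x) ha hb hab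
  have hU_disjoint : Disjoint U (S : Set C(X, ℝ)) := Set.disjoint_left.2 fun u hu huS => by
    obtain ⟨x, hx⟩ := hS u huS
    exact (hu x).not_ge hx
  obtain ⟨f, a, hfU, hfS⟩ := geometric_hahn_banach_open hU_convex hU_open S.convex hU_disjoint
  have ha : a ≤ 0 := by simpa using hfS 0 S.zero_mem
  have hf_one : 0 < f 1 := by
    have := hfU (-1) fun _ => by simp
    rw [map_neg] at this
    linarith
  refine ⟨f, hf_one, fun g hg => ?_, fun u hu => ?_⟩
  · by_contra! hneg
    have hshift : 0 < -(f g) / f 1 := div_pos (neg_pos.2 hneg) hf_one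
    have := hfU (-(g + (-(f g) / f 1) • (1 : C(X, ℝ)))) fun x => by
      have hgx : 0 ≤ g x := hg x
      simp only [ContinuousMap.neg_apply, ContinuousMap.add_apply, ContinuousMap.smul_apply,
        ContinuousMap.one_apply, smul_eq_mul, mul_one]
      linarith
    rw [map_neg, map_add, map_smul, smul_eq_mul, div_mul_cancel₀ _ hf_one.ne'] at this
    linarith
  · by_contra hne
    have := hfS _ (S.smul_mem ((a - 1) / f u) hu)
    rw [map_smul, smul_eq_mul, div_mul_cancel₀ _ hne] at this
    linarith

theorem exists_measure_integral_eq_of_nonneg {X : Type*} [TopologicalSpace X] [CompactSpace X]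
    [T2Space X] [MeasurableSpace X] [BorelSpace X] (f : C(X, ℝ) →L[ℝ] ℝ)
    (hf : ∀ g : C(X, ℝ), 0 ≤ g → 0 ≤ f g) :
    ∃ σ : Measure X, ∀ g : C(X, ℝ), ∫ x, g x ∂σ = f g := by
  let Λ : C_c(X, ℝ) →ₗ[ℝ] ℝ :=
    { toFun := fun g => f (g : C(X, ℝ))
      map_add' := fun g h => map_add f (g : C(X, ℝ)) h
      map_smul' := fun c g => map_smul f c (g : C(X, ℝ)) }
  let Λ' : C_c(X, ℝ) →ₚ[ℝ] ℝ := PositiveLinearMap.mk₀ Λ fun g hg => hf _ fun x => hg x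
  exact ⟨RealRMK.rieszMeasure Λ', fun g => RealRMK.integral_rieszMeasure Λ'
    (CompactlySupportedContinuousMap.continuousMapEquiv g)⟩

theorem exists_isProbabilityMeasure_integral_eq_zero {X : Type*} [TopologicalSpace X]
    [CompactSpace X] [T2Space X] [MeasurableSpace X] [BorelSpace X]
    (S : Submodule ℝ C(X, ℝ)) (hS : ∀ u ∈ S, ∃ x, 0 ≤ u x) :
    ∃ σ : Measure X, IsProbabilityMeasure σ ∧ ∀ u ∈ S, ∫ x, u x ∂σ = 0 := by
  obtain ⟨f, hf_one, hf_nonneg, hfS⟩ := exists_positive_functional_eq_zero S hS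
  obtain ⟨σ, hσ⟩ := exists_measure_integral_eq_of_nonneg ((f 1)⁻¹ • f) fun g hg =>
    mul_nonneg (inv_nonneg.2 hf_one.le) (hf_nonneg g hg)
  refine ⟨σ, ⟨?_⟩, fun u hu => by simp [hσ, hfS u hu]⟩
  have hσ_univ : σ.real univ = 1 := by simpa [hf_one.ne'] using hσ 1
  exact (ENNReal.toReal_eq_one_iff _).1 hσ_univ

theorem exists_isProbabilityMeasure_ae_mem_integral_eq_zero {X : Type*} [TopologicalSpace X]
    [T2Space X] [MeasurableSpace X] [BorelSpace X] {K : Set X} (hK : IsCompact K)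
    (S : Submodule ℝ C(X, ℝ)) (hS : ∀ u ∈ S, ∃ x ∈ K, 0 ≤ u x) :
    ∃ σ : Measure X, IsProbabilityMeasure σ ∧ (∀ᵐ x ∂σ, x ∈ K) ∧ ∀ u ∈ S, ∫ x, u x ∂σ = 0 := by
  have : CompactSpace K := isCompact_iff_compactSpace.1 hK
  obtain ⟨σ, hσ, hσS⟩ := exists_isProbabilityMeasure_integral_eq_zero
    (S.map (ContinuousMap.compRightAlgHom ℝ ℝ
      (⟨Subtype.val, continuous_subtype_val⟩ : C(K, X))).toLinearMap) (by
    rintro _ ⟨u, hu, rfl⟩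
    obtain ⟨x, hx, hux⟩ := hS u hu
    exact ⟨⟨x, hx⟩, hux⟩)
  have hval : MeasurableEmbedding (Subtype.val : K → X) :=
    MeasurableEmbedding.subtype_coe hK.measurableSet
  refine ⟨σ.map Subtype.val, Measure.isProbabilityMeasure_map hval.measurable.aemeasurable,
    hval.ae_map_iff.2 (Eventually.of_forall Subtype.property), fun u hu => ?_⟩
  rw [hval.integral_map]
  exact hσS _ ⟨u, hu, rfl⟩

end Annihilating

/-! ### Stationary measures of jump perturbations -/

section Jump

variable {A : Ed d → Matrix (Fin d) (Fin d) ℝ} {K₁ K₂ Λ : ℝ} {B : Ed d → Ed d} {η V : Ed d → ℝ}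
  {σ : Measure (Ed d)}

/-- The generator of the diffusion slowed down by the cutoff `η` which, where `η < 1`, also jumps
back to the origin at rate `Λ (1 - η)`. -/
def jumpOp (A : Ed d → Matrix (Fin d) (Fin d) ℝ) (B : Ed d → Ed d) (η : Ed d → ℝ) (Λ : ℝ)
    (φ : Ed d → ℝ) (x : Ed d) : ℝ :=
  η x * Lop A B φ x + Λ * (1 - η x) * (φ 0 - φ x)

theorem continuous_jumpOp (hA : IsElliptic A K₁ K₂) (hB : Continuous B) (hη : Continuous η)
    (Λ : ℝ) {φ : Ed d → ℝ} (hφ : ContDiff ℝ 2 φ) : Continuous (jumpOp A B η Λ φ) :=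
  (hη.mul (continuous_Lop hA.continuous_apply hB hφ)).add
    ((continuous_const.mul (continuous_const.sub hη)).mul (continuous_const.sub hφ.continuous))

theorem exists_jumpOp_nonneg (hA : IsElliptic A K₁ K₂) (B : Ed d → Ed d) (hη : IsCutoff η)
    (hη_nonneg : ∀ x, 0 ≤ η x) (hη_zero : η 0 ≠ 0) (hΛ : 0 ≤ Λ) {φ : Ed d → ℝ}
    (hφ : ContDiff ℝ 2 φ) : ∃ x ∈ tsupport η, 0 ≤ jumpOp A B η Λ φ x := by
  have hzero_mem : (0 : Ed d) ∈ tsupport η := subset_tsupport η hη_zero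
  obtain ⟨x, hx, hmin⟩ := hη.hasCompactSupport.isCompact.exists_isMinOn ⟨0, hzero_mem⟩
    hφ.continuous.continuousOn
  refine ⟨x, hx, add_nonneg ?_ (mul_nonneg (mul_nonneg hΛ ?_) (sub_nonneg.2 (hmin hzero_mem)))⟩
  · by_cases hηx : η x = 0
    · rw [hηx, zero_mul]
    · refine mul_nonneg (hη_nonneg x) (Lop_nonneg_of_isLocalMin hφ (hA.posDef x).posSemidef ?_)
      filter_upwards [hη.continuous.isOpen_support.mem_nhds hηx] with y hy
        using hmin (subset_tsupport η hy)
  · exact sub_nonneg.2 ((le_abs_self _).trans (hη.abs_le_one x))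

/-- The range of `jumpOp` on functions of class `C²`. -/
def jumpRange (A : Ed d → Matrix (Fin d) (Fin d) ℝ) (B : Ed d → Ed d) (η : Ed d → ℝ) (Λ : ℝ) :
    Submodule ℝ C(Ed d, ℝ) where
  carrier := {u | ∃ φ : Ed d → ℝ, ContDiff ℝ 2 φ ∧ ⇑u = jumpOp A B η Λ φ}
  add_mem' := by
    rintro u v ⟨φ, hφ, hu⟩ ⟨ψ, hψ, hv⟩
    refine ⟨fun y => φ y + ψ y, hφ.add hψ, funext fun x => ?_⟩
    simp only [ContinuousMap.add_apply, hu, hv, jumpOp, Lop_add hφ hψ]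
    ring
  zero_mem' := by
    refine ⟨fun _ => 0, contDiff_const, funext fun x => ?_⟩
    have hLop : Lop A B (fun _ => 0) x = 0 := by
      simpa using Lop_const_mul (A := A) (B := B) (f := fun _ => 0) contDiff_const 0 x
    simp [jumpOp, hLop]
  smul_mem' := by
    rintro c u ⟨φ, hφ, hu⟩
    refine ⟨fun y => c * φ y, contDiff_const.mul hφ, funext fun x => ?_⟩
    simp only [ContinuousMap.smul_apply, hu, smul_eq_mul, jumpOp, Lop_const_mul hφ]
    ring

theorem exists_integral_jumpOp_eq_zero (hA : IsElliptic A K₁ K₂) (hB : Continuous B)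
    (hη : IsCutoff η) (hη_nonneg : ∀ x, 0 ≤ η x) (hη_zero : η 0 ≠ 0) (hΛ : 0 ≤ Λ) :
    ∃ σ : Measure (Ed d), IsProbabilityMeasure σ ∧ (∀ᵐ x ∂σ, x ∈ tsupport η) ∧
      ∀ φ : Ed d → ℝ, ContDiff ℝ 2 φ → ∫ x, jumpOp A B η Λ φ x ∂σ = 0 := by
  obtain ⟨σ, hσ, hσ_mem, hσ_zero⟩ := exists_isProbabilityMeasure_ae_mem_integral_eq_zero
    hη.hasCompactSupport.isCompact (jumpRange A B η Λ) (by
      rintro u ⟨φ, hφ, hu⟩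
      simp only [hu]
      exact exists_jumpOp_nonneg hA B hη hη_nonneg hη_zero hΛ hφ)
  exact ⟨σ, hσ, hσ_mem, fun φ hφ =>
    hσ_zero ⟨_, continuous_jumpOp hA hB hη.continuous Λ hφ⟩ ⟨φ, hφ, rfl⟩⟩

theorem integrable_of_ae_mem_isCompact {X : Type*} [TopologicalSpace X] [T2Space X]
    [MeasurableSpace X] [OpensMeasurableSpace X] {σ : Measure X} [IsFiniteMeasureOnCompacts σ]
    {K : Set X} (hK : IsCompact K) (hσK : ∀ᵐ x ∂σ, x ∈ K) {u : X → ℝ} (hu : Continuous u) :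
    Integrable u σ := by
  have hu_int := hu.continuousOn.integrableOn_compact (μ := σ) hK
  rwa [IntegrableOn, Measure.restrict_eq_self_of_ae_mem hσK] at hu_int

variable [IsProbabilityMeasure σ]

theorem mul_integral_le_of_integral_jumpOp_eq_zero (hA : IsElliptic A K₁ K₂) (hB : Continuous B)
    (hη : IsCutoff η) (hη_nonneg : ∀ x, 0 ≤ η x) (hσ_mem : ∀ᵐ x ∂σ, x ∈ tsupport η)
    (hV : ContDiff ℝ 2 V) (hσ : ∫ x, jumpOp A B η Λ V x ∂σ = 0) {c : ℝ}
    (hL : ∀ x ∈ tsupport η, Lop A B V x ≤ c - Λ * V x) (hc : Λ * V 0 ≤ c) :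
    Λ * ∫ x, V x ∂σ ≤ c := by
  have hint {u : Ed d → ℝ} (hu : Continuous u) : Integrable u σ :=
    integrable_of_ae_mem_isCompact hη.hasCompactSupport.isCompact hσ_mem hu
  have hV_int : Integrable (fun x => Λ * V x) σ := (hint hV.continuous).const_mul Λ
  have hle : ∫ x, jumpOp A B η Λ V x ∂σ ≤ ∫ x, (c - Λ * V x) ∂σ := by
    refine integral_mono_ae (hint (continuous_jumpOp hA hB hη.continuous Λ hV))
      ((integrable_const c).sub hV_int) ?_
    filter_upwards [hσ_mem] with x hx
    have hdiffusion := mul_le_mul_of_nonneg_left (hL x hx) (hη_nonneg x)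
    have hjump := mul_le_mul_of_nonneg_left hc
      (sub_nonneg.2 ((le_abs_self _).trans (hη.abs_le_one x)))
    simp only [jumpOp]
    linarith
  rw [hσ, integral_sub (integrable_const c) hV_int, integral_const_mul, integral_const,
    probReal_univ, one_smul] at hle
  linarith

/- Where `η = 1` the jumps only contribute the source at the origin. -/
theorem hasPointSourceOn_of_integral_jumpOp_eq_zero (hA : IsElliptic A K₁ K₂)
    (hB : Continuous B) (hη : IsCutoff η) (hσ_mem : ∀ᵐ x ∂σ, x ∈ tsupport η)
    (hσ : ∀ φ : Ed d → ℝ, ContDiff ℝ 2 φ → ∫ x, jumpOp A B η Λ φ x ∂σ = 0) :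
    HasPointSourceOn A B (-(Λ * ∫ x, (1 - η x) ∂σ)) {x | η x = 1} σ := by
  intro φ hφ hφ_supp
  have hint {u : Ed d → ℝ} (hu : Continuous u) : Integrable u σ :=
    integrable_of_ae_mem_isCompact hη.hasCompactSupport.isCompact hσ_mem hu
  have hsplit (x : Ed d) : jumpOp A B η Λ φ x = Lop A B φ x + Λ * φ 0 * (1 - η x) := by
    by_cases hx : x ∈ tsupport φ
    · rw [jumpOp, show η x = 1 from hφ_supp hx]
      ring
    · rw [jumpOp, Lop_eq_zero_of_notMem_tsupport A B hx, image_eq_zero_of_notMem_tsupport hx]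
      ring
  have hφ_zero := hσ φ hφ
  simp only [hsplit] at hφ_zero
  have hη_int : Integrable (fun x => Λ * φ 0 * (1 - η x)) σ :=
    hint (continuous_const.mul (continuous_const.sub hη.continuous))
  rw [integral_add (hint (continuous_Lop hA.continuous_apply hB hφ)) hη_int,
    integral_const_mul] at hφ_zero
  linarith

end Jump

/-! ### Mollification -/

section Mollification

open scoped Convolution

variable {E F : Type*} [NormedAddCommGroup E] [InnerProductSpace ℝ E] [FiniteDimensional ℝ E]
  [MeasurableSpace E] [BorelSpace E] [NormedAddCommGroup F] [InnerProductSpace ℝ F]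
  {B : E → F}

/-- A smooth bump function supported in the ball of radius `(m + 1)⁻¹`. -/
def mollifierBump (E : Type*) [NormedAddCommGroup E] (m : ℕ) : ContDiffBump (0 : E) where
  rIn := ((m : ℝ) + 1)⁻¹ / 2
  rOut := ((m : ℝ) + 1)⁻¹
  rIn_pos := by positivity
  rIn_lt_rOut := half_lt_self (by positivity)

/-- The convolution of `B` with a smooth probability density supported in the ball of radius
`(m + 1)⁻¹`. -/
def mollify (B : E → F) (m : ℕ) : E → F :=
  (mollifierBump E m).normed volume ⋆[ContinuousLinearMap.lsmul ℝ ℝ, volume] B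

theorem continuous_mollify (hB : LocallyIntegrable B) (m : ℕ) : Continuous (mollify B m) :=
  (mollifierBump E m).hasCompactSupport_normed.continuous_convolution_left _
    (mollifierBump E m).continuous_normed hB

variable [CompleteSpace F]

theorem ae_tendsto_mollify (hB : LocallyIntegrable B) :
    ∀ᵐ x, Tendsto (fun m => mollify B m x) atTop (𝓝 (B x)) := by
  refine ContDiffBump.ae_convolution_tendsto_right_of_locallyIntegrable (K := 2) ?_ ?_ hB
  · simpa [mollifierBump] using tendsto_one_div_add_atTop_nhds_zero_nat (𝕜 := ℝ)
  · refine Eventually.of_forall fun m => ?_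
    simp only [mollifierBump]
    linarith

theorem inner_mollify_eq_integral (hB : LocallyIntegrable B) (m : ℕ) (x : E) (v : F) :
    Integrable (fun t => (mollifierBump E m).normed volume t * ⟪B (x - t), v⟫) ∧
      ⟪mollify B m x, v⟫ = ∫ t, (mollifierBump E m).normed volume t * ⟪B (x - t), v⟫ := by
  have hint : Integrable fun t => (mollifierBump E m).normed volume t • B (x - t) :=
    (mollifierBump E m).hasCompactSupport_normed.convolutionExists_left
      (ContinuousLinearMap.lsmul ℝ ℝ) (mollifierBump E m).continuous_normed hB x
  refine ⟨by simpa only [real_inner_smul_left] using hint.inner_const (𝕜 := ℝ) v, ?_⟩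
  have hinner := (integral_inner (𝕜 := ℝ) hint v).symm
  simp only [real_inner_comm _ v, real_inner_smul_left] at hinner
  exact hinner

theorem inner_mollify_le (hB : LocallyIntegrable B) {m : ℕ} {x : E} {v : F} {a : ℝ}
    (h : ∀ z, ‖z - x‖ ≤ ((m : ℝ) + 1)⁻¹ → ⟪B z, v⟫ ≤ a) : ⟪mollify B m x, v⟫ ≤ a := by
  set k := (mollifierBump E m).normed volume with hk
  have hk_int : Integrable k := (mollifierBump E m).integrable_normed
  obtain ⟨hint, hinner⟩ := inner_mollify_eq_integral hB m x v
  calc ⟪mollify B m x, v⟫ = ∫ t, k t * ⟪B (x - t), v⟫ := hinner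
    _ ≤ ∫ t, k t * a := by
      refine integral_mono hint (hk_int.mul_const a) fun t => ?_
      by_cases ht : t ∈ Function.support k
      · refine mul_le_mul_of_nonneg_left (h _ ?_) ((mollifierBump E m).nonneg_normed t)
        rw [hk, ContDiffBump.support_normed_eq, mem_ball_zero_iff] at ht
        simpa using (show ‖t‖ < ((m : ℝ) + 1)⁻¹ from ht).le
      · simp [Function.notMem_support.1 ht]
    _ = a := by rw [integral_mul_const, (mollifierBump E m).integral_normed, one_mul]

theorem inv_natCast_add_one_le_one (m : ℕ) : ((m : ℝ) + 1)⁻¹ ≤ 1 :=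
  inv_le_one_of_one_le₀ (by linarith [(Nat.cast_nonneg m : (0 : ℝ) ≤ m)])

theorem norm_mollify_le (hB : LocallyIntegrable B) {m : ℕ} {x : E} {N : ℝ} (hN : 0 ≤ N)
    (h : ∀ z, ‖z - x‖ ≤ 1 → ‖B z‖ ≤ N) : ‖mollify B m x‖ ≤ N := by
  have hle : ⟪mollify B m x, mollify B m x⟫ ≤ N * ‖mollify B m x‖ :=
    inner_mollify_le hB fun z hz => (real_inner_le_norm _ _).trans
      (mul_le_mul_of_nonneg_right (h z (hz.trans (inv_natCast_add_one_le_one m))) (norm_nonneg _))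
  rw [real_inner_self_eq_norm_mul_norm] at hle
  rcases (norm_nonneg (mollify B m x)).eq_or_lt with hzero | hpos
  · rwa [← hzero]
  · exact le_of_mul_le_mul_right hle hpos

theorem eventually_inner_mollify_le (hB : LocallyIntegrable B) {g : E → F} {G : E → ℝ}
    (hg : Continuous g) (hG : Continuous G) (hle : ∀ x, ⟪B x, g x⟫ ≤ G x) {R N : ℝ}
    (hN : ∀ x, ‖x‖ ≤ R + 1 → ‖B x‖ ≤ N) {ε : ℝ} (hε : 0 < ε) :
    ∀ᶠ k in atTop, ∀ x, ‖x‖ ≤ R → ⟪mollify B k x, g x⟫ ≤ G x + ε := by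
  have hunif := (isCompact_closedBall (0 : E) (R + 1)).uniformContinuousOn_of_continuous
    (hG.prodMk hg).continuousOn
  obtain ⟨ρ, hρ, hmodulus⟩ := Metric.uniformContinuousOn_iff.1 hunif (ε / (|N| + 1))
    (by positivity)
  have hk_lim : Tendsto (fun k : ℕ => ((k : ℝ) + 1)⁻¹) atTop (𝓝 0) := by
    simpa using tendsto_one_div_add_atTop_nhds_zero_nat (𝕜 := ℝ)
  filter_upwards [hk_lim.eventually_lt_const hρ] with k hk x hx
  refine inner_mollify_le hB fun z hz => ?_
  have hz_norm : ‖z‖ ≤ R + 1 := by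
    linarith [norm_le_norm_add_norm_sub' z x, inv_natCast_add_one_le_one k]
  have hdist := hmodulus z (mem_closedBall_zero_iff.2 hz_norm) x
    (mem_closedBall_zero_iff.2 (by linarith)) ((dist_eq_norm z x).trans_lt (hz.trans_lt hk))
  rw [Prod.dist_eq, max_lt_iff, Real.dist_eq, dist_eq_norm] at hdist
  have hvariation : ⟪B z, g x - g z⟫ ≤ |N| * (ε / (|N| + 1)) := by
    refine (real_inner_le_norm _ _).trans (mul_le_mul ((hN z hz_norm).trans (le_abs_self N)) ?_
      (norm_nonneg _) (abs_nonneg N))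
    rw [norm_sub_rev]
    exact hdist.2.le
  have hsum : |N| * (ε / (|N| + 1)) + ε / (|N| + 1) = ε := by field_simp
  rw [inner_sub_right] at hvariation
  linarith [hle z, (abs_lt.1 hdist.1).2]

end Mollification

/-! ### Linear stationary equations -/

section LinearExistence

variable {A : Ed d → Matrix (Fin d) (Fin d) ℝ} {K₁ K₂ Λ : ℝ} {V : Ed d → ℝ} {B : Ed d → Ed d}
  {N D : ℕ → ℝ}

theorem Lop_eq_add_inner (A : Ed d → Matrix (Fin d) (Fin d) ℝ) (B : Ed d → Ed d) (φ : Ed d → ℝ)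
    (x : Ed d) : Lop A B φ x = Lop A 0 φ x + ⟪B x, gradient φ x⟫ := by
  simp [Lop]

theorem locallyIntegrable_of_norm_le (hB : Measurable B)
    (hN : ∀ (n : ℕ) (x : Ed d), ‖x‖ ≤ n → ‖B x‖ ≤ N n) : LocallyIntegrable B := by
  rw [locallyIntegrable_iff]
  intro k hk
  obtain ⟨r, hr⟩ := hk.isBounded.exists_norm_le
  obtain ⟨n, hn⟩ := exists_nat_ge r
  exact Measure.integrableOn_of_bounded hk.measure_lt_top.ne hB.aestronglyMeasurable
    ((ae_restrict_iff' hk.measurableSet).2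
      (Eventually.of_forall fun x hx => hN n x ((hr x hx).trans hn)))

theorem norm_mollify_le_of_norm_le (hB : Measurable B)
    (hN : ∀ (n : ℕ) (x : Ed d), ‖x‖ ≤ n → ‖B x‖ ≤ N n) {n k : ℕ} {x : Ed d} (hx : ‖x‖ ≤ n) :
    ‖mollify B k x‖ ≤ N (n + 1) := by
  have hball (z : Ed d) (hz : ‖z - x‖ ≤ 1) : ‖B z‖ ≤ N (n + 1) := hN (n + 1) z <| by
    push_cast
    linarith [norm_le_norm_add_norm_sub' z x]
  exact norm_mollify_le (locallyIntegrable_of_norm_le hB hN)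
    ((norm_nonneg _).trans (hball x (by simp))) hball

theorem eventually_Lop_mollify_le (hA : IsElliptic A K₁ K₂) (hV : ContDiff ℝ 2 V)
    (hB : Measurable B) (hN : ∀ (n : ℕ) (x : Ed d), ‖x‖ ≤ n → ‖B x‖ ≤ N n) {c c' : ℝ}
    (hc : c < c') (hL : ∀ x, Lop A B V x ≤ c - Λ * V x) (m : ℕ) :
    ∀ᶠ k in atTop, ∀ x : Ed d, ‖x‖ ≤ m → Lop A (mollify B k) V x ≤ c' - Λ * V x := by
  have hG : Continuous fun x => c - Λ * V x - Lop A 0 V x :=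
    (continuous_const.sub (continuous_const.mul hV.continuous)).sub
      (continuous_Lop hA.continuous_apply continuous_zero hV)
  filter_upwards [eventually_inner_mollify_le (locallyIntegrable_of_norm_le hB hN)
    (continuous_gradient (hV.of_le one_le_two)) hG
    (fun x => by linarith [hL x, Lop_eq_add_inner A B V x])
    (fun x (hx : ‖x‖ ≤ m + 1) => hN (m + 1) x (by exact_mod_cast hx)) (sub_pos.2 hc)] with k hk x hx
  rw [Lop_eq_add_inner]
  linarith [hk x hx]

theorem exists_hasPointSourceOn (hA : IsElliptic A K₁ K₂) (hB : Continuous B)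
    (hV : ContDiff ℝ 2 V) (hΛ : 0 ≤ Λ) {m : ℕ} {c : ℝ}
    (hL : ∀ x, ‖x‖ ≤ m + 2 → Lop A B V x ≤ c - Λ * V x) (hc : Λ * V 0 ≤ c) :
    ∃ σ : Measure (Ed d), memPV V σ ∧ Λ * ∫ x, V x ∂σ ≤ c ∧
      HasPointSourceOn A B (-(Λ * ∫ x, (1 - cutoff m x) ∂σ)) (closedBall 0 (m + 1)) σ := by
  have hcutoff := isCutoff_cutoff (d := d) m
  obtain ⟨σ, hσ, hσ_mem, hσ_zero⟩ := exists_integral_jumpOp_eq_zero hA hB hcutoff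
    (cutoff_nonneg m) (by rw [cutoff_eq_one (by rw [norm_zero]; positivity)]; exact one_ne_zero) hΛ
  refine ⟨σ, ⟨hσ, integrable_of_ae_mem_isCompact hcutoff.hasCompactSupport.isCompact hσ_mem
    hV.continuous⟩, mul_integral_le_of_integral_jumpOp_eq_zero hA hB hcutoff (cutoff_nonneg m)
    hσ_mem hV (hσ_zero V hV) (fun x hx => hL x ?_) hc, fun φ hφ hφ_supp => ?_⟩
  · rwa [tsupport_cutoff, mem_closedBall_zero_iff] at hx
  · exact hasPointSourceOn_of_integral_jumpOp_eq_zero hA hB hcutoff hσ_mem hσ_zero φ hφ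
      (hφ_supp.trans fun x hx => cutoff_eq_one (mem_closedBall_zero_iff.1 hx))

theorem integral_one_sub_cutoff (m : ℕ) (σ : Measure (Ed d)) [IsProbabilityMeasure σ] :
    ∫ x, (1 - cutoff m x) ∂σ = 1 - ∫ x, cutoff m x ∂σ := by
  have hcutoff := isCutoff_cutoff (d := d) m
  rw [integral_sub (integrable_const 1)
    (hcutoff.continuous.integrable_of_hasCompactSupport hcutoff.hasCompactSupport)]
  simp

theorem integral_one_sub_cutoff_mem_Icc (m : ℕ) (σ : Measure (Ed d)) [IsProbabilityMeasure σ] :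
    ∫ x, (1 - cutoff m x) ∂σ ∈ Icc (0 : ℝ) 1 := by
  refine ⟨integral_nonneg fun x => sub_nonneg.2 (cutoff_le_one m x), ?_⟩
  rw [integral_one_sub_cutoff]
  exact sub_le_self 1 (integral_nonneg (cutoff_nonneg m))

theorem tendsto_integral_one_sub_cutoff {σs : ℕ → Measure (Ed d)}
    [∀ m, IsProbabilityMeasure (σs m)] (hV_nonneg : ∀ x, 0 ≤ V x)
    (hV_lim : Tendsto V (cocompact (Ed d)) atTop) (hV_int : ∀ m, Integrable V (σs m)) {α : ℝ}
    (hα : ∀ m, ∫ x, V x ∂σs m ≤ α) :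
    Tendsto (fun m => ∫ x, (1 - cutoff m x) ∂σs m) atTop (𝓝 0) := by
  have hα_nonneg : 0 ≤ α := (integral_nonneg hV_nonneg).trans (hα 0)
  rw [Metric.tendsto_atTop]
  intro ε hε
  obtain ⟨n, hn⟩ := exists_nat_forall_le_norm
    (hV_lim.eventually_ge_atTop (ε / (α + 1))⁻¹)
  refine ⟨n, fun m hm => ?_⟩
  have hone_le (x : Ed d) (hx : m + 1 ≤ ‖x‖) : 1 ≤ ε / (α + 1) * V x := by
    have hnm : (n : ℝ) ≤ m := by exact_mod_cast hm
    exact (inv_le_iff_one_le_mul₀' (by positivity)).1 (hn x (by linarith))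
  have htail := abs_integral_sub_integral_cutoff_mul_le (hV_int m) hV_nonneg
    (integrable_const (1 : ℝ)) (by positivity) hone_le measurable_const
    (fun _ => abs_one.le)
  simp only [mul_one, integral_const, probReal_univ, one_smul] at htail
  rw [dist_zero_right, integral_one_sub_cutoff, Real.norm_eq_abs]
  refine htail.trans_lt ?_
  rw [div_mul_eq_mul_div, div_lt_iff₀ (by positivity)]
  nlinarith [hα m]

theorem WeightedTendsto.tendsto_integral_of_ae {X : Type*} [MeasurableSpace X] {W f : X → ℝ}
    {σs : ℕ → Measure X} {σ : Measure X} (h : WeightedTendsto W σs σ) (hW : Integrable W σ)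
    {fs : ℕ → X → ℝ} (hfs : ∀ m, Measurable (fs m)) {M : ℝ} (hM : 0 < M)
    (hfs_le : ∀ m x, |fs m x| ≤ M * W x) (hf : ∀ᵐ x ∂σ, Tendsto (fs · x) atTop (𝓝 (f x))) :
    Tendsto (fun m => ∫ x, fs m x ∂σs m) atTop (𝓝 (∫ x, f x ∂σ)) := by
  have hdominated : Tendsto (fun m => ∫ x, fs m x ∂σ) atTop (𝓝 (∫ x, f x ∂σ)) :=
    tendsto_integral_of_dominated_convergence (fun x => M * W x)
      (fun m => (hfs m).aestronglyMeasurable) (hW.const_mul M)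
      (fun m => Eventually.of_forall (hfs_le m)) hf
  have hdiff : Tendsto (fun m => ∫ x, fs m x ∂σs m - ∫ x, fs m x ∂σ) atTop (𝓝 0) := by
    refine Metric.tendsto_nhds.2 fun ε hε => ?_
    filter_upwards [h (ε / 2 / M) (by positivity)] with m hm
    rw [dist_zero_right, Real.norm_eq_abs]
    refine (hm.abs_integral_sub_le (hfs m) hM (hfs_le m)).trans_lt ?_
    rw [mul_div_cancel₀ _ hM.ne']
    exact half_lt_self hε
  simpa using hdiff.add hdominated

/-- The constants `D` control the parametrix at all scales, uniformly over the drifts bounded by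
`N n` on the support of `cutoff n` and the sources of strength at most `Λ`. -/
def IsParametrixConst (A : Ed d → Matrix (Fin d) (Fin d) ℝ) (N : ℕ → ℝ) (Λ : ℝ) (D : ℕ → ℝ) :
    Prop :=
  ∀ (n : ℕ) (B : Ed d → Ed d), Measurable B → (∀ x, ‖x‖ ≤ n + 2 → ‖B x‖ ≤ N n) →
    ∀ σ : Measure (Ed d), IsProbabilityMeasure σ → ∀ κ, |κ| ≤ Λ →
      HasPointSourceOn A B κ (closedBall 0 (n + 2)) σ →
        ParametrixBound A (cutoff n) (cutoff (n + 1)) (D n) σ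

theorem exists_isParametrixConst (hA : IsElliptic A K₁ K₂) (hN : ∀ n, 0 ≤ N n) (Λ : ℝ) :
    ∃ D, IsParametrixConst A N Λ D := by
  choose D hD using fun n => exists_parametrixBound hA (isCutoff_cutoff n) (contDiff_cutoff n)
    (isCutoff_cutoff (n + 1)) (fun _ => cutoff_succ_eq_one) (Λ := Λ) (hN n)
  refine ⟨D, fun n B hB hB_le σ hσ κ hκ hsource => hD n B hB (fun x hx => hB_le x ?_) σ hσ κ hκ ?_⟩
  · rwa [tsupport_cutoff, mem_closedBall_zero_iff] at hx
  · rwa [tsupport_cutoff]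

/- Stationary measures of the jump perturbations with mollified drift, on growing balls. -/
theorem exists_seq_hasPointSourceOn_mollify (hA : IsElliptic A K₁ K₂) (hV : ContDiff ℝ 2 V)
    (hV_nonneg : ∀ x, 0 ≤ V x) (hV_lim : Tendsto V (cocompact (Ed d)) atTop) (hB : Measurable B)
    (hN : ∀ (n : ℕ) (x : Ed d), ‖x‖ ≤ n → ‖B x‖ ≤ N n) {c α : ℝ} (hΛ : 0 < Λ)
    (hL : ∀ x, Lop A B V x ≤ c - Λ * V x) (hc : c < Λ * α) (hα : V 0 ≤ α) :
    ∃ (k : ℕ → ℕ) (κ : ℕ → ℝ) (σs : ℕ → Measure (Ed d)), Tendsto k atTop atTop ∧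
      (∀ m, |κ m| ≤ Λ) ∧ Tendsto κ atTop (𝓝 0) ∧ (∀ m, memPV V (σs m)) ∧
      (∀ m, ∫ x, V x ∂σs m ≤ α) ∧
      ∀ m : ℕ, HasPointSourceOn A (mollify B (k m)) (κ m) (closedBall 0 (m + 1)) (σs m) := by
  choose k hk hkL using fun m => ((eventually_ge_atTop m).and
    (eventually_Lop_mollify_le hA hV hB hN hc hL (m + 2))).exists
  choose σs hσs hVs hsource using fun m => exists_hasPointSourceOn hA
    (continuous_mollify (locallyIntegrable_of_norm_le hB hN) (k m)) hV hΛ.le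
    (fun x hx => hkL m x (by exact_mod_cast hx)) (mul_le_mul_of_nonneg_left hα hΛ.le)
  have hσs_prob (m : ℕ) : IsProbabilityMeasure (σs m) := (hσs m).1
  have hαs (m : ℕ) : ∫ x, V x ∂σs m ≤ α := le_of_mul_le_mul_left (hVs m) hΛ
  refine ⟨k, _, σs, tendsto_atTop_mono hk tendsto_id, fun m => ?_, ?_, hσs, hαs, hsource⟩
  · obtain ⟨hnonneg, hle⟩ := integral_one_sub_cutoff_mem_Icc m (σs m)
    rw [abs_neg, abs_of_nonneg (mul_nonneg hΛ.le hnonneg)]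
    exact mul_le_of_le_one_right hΛ.le hle
  · simpa using ((tendsto_integral_one_sub_cutoff hV_nonneg hV_lim (fun m => (hσs m).2)
      hαs).const_mul Λ).neg

theorem HasPointSourceOn.mono {κ : ℝ} {S T : Set (Ed d)} {σ : Measure (Ed d)}
    (h : HasPointSourceOn A B κ T σ) (hST : S ⊆ T) : HasPointSourceOn A B κ S σ :=
  fun φ hφ hφ_supp => h φ hφ (hφ_supp.trans hST)

theorem IsParametrixConst.eventually_parametrixBound (hD : IsParametrixConst A (N <| · + 3) Λ D)
    (hB : Measurable B) (hN : ∀ (n : ℕ) (x : Ed d), ‖x‖ ≤ n → ‖B x‖ ≤ N n) {k : ℕ → ℕ}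
    {κ : ℕ → ℝ} (hκ : ∀ m, |κ m| ≤ Λ) {σs : ℕ → Measure (Ed d)}
    [∀ m, IsProbabilityMeasure (σs m)]
    (hσs : ∀ m : ℕ, HasPointSourceOn A (mollify B (k m)) (κ m) (closedBall 0 (m + 1)) (σs m))
    (n : ℕ) : ∀ᶠ m in atTop, ParametrixBound A (cutoff n) (cutoff (n + 1)) (D n) (σs m) := by
  filter_upwards [eventually_ge_atTop (n + 1)] with m hm
  have hnm : (n : ℝ) + 1 ≤ m := by exact_mod_cast hm
  exact hD n (mollify B (k m))
    (continuous_mollify (locallyIntegrable_of_norm_le hB hN) (k m)).measurable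
    (fun x hx => norm_mollify_le_of_norm_le hB hN (n := n + 2) (by exact_mod_cast hx)) (σs m)
    inferInstance (κ m) (hκ m) ((hσs m).mono (closedBall_subset_closedBall (by linarith)))

theorem tendsto_integral_Lop_mollify (hA : IsElliptic A K₁ K₂) (hB : Measurable B)
    (hN : ∀ (n : ℕ) (x : Ed d), ‖x‖ ≤ n → ‖B x‖ ≤ N n) {k : ℕ → ℕ} (hk : Tendsto k atTop atTop)
    {σs : ℕ → Measure (Ed d)} {σ : Measure (Ed d)} [IsFiniteMeasure σ] (hσ : σ ≪ volume)
    (hσs : WeightedTendsto 1 σs σ) {φ : Ed d → ℝ} (hφ : ContDiff ℝ 2 φ)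
    (hφ_supp : HasCompactSupport φ) :
    Tendsto (fun m => ∫ x, Lop A (mollify B (k m)) φ x ∂σs m) atTop (𝓝 (∫ x, Lop A B φ x ∂σ)) := by
  have hB_int := locallyIntegrable_of_norm_le hB hN
  obtain ⟨r, hr⟩ := hφ_supp.isCompact.isBounded.exists_norm_le
  obtain ⟨n, hn⟩ := exists_nat_ge r
  obtain ⟨C, hC, hLop_le⟩ := exists_abs_Lop_le hA hφ hφ_supp (abs_nonneg (N (n + 1)))
  refine hσs.tendsto_integral_of_ae (integrable_const 1) (M := C + 1)
    (fun m => measurable_Lop hA.continuous_apply (continuous_mollify hB_int _).measurable hφ)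
    (by positivity) (fun m x => ?_) ?_
  · refine (hLop_le (mollify B (k m)) (fun y hy => ?_) x).trans (by simp)
    exact (norm_mollify_le_of_norm_le hB hN ((hr y hy).trans hn)).trans (le_abs_self _)
  · filter_upwards [hσ.ae_le (ae_tendsto_mollify hB_int)] with x hx
    simp only [Lop_eq_add_inner A (mollify B _), Lop_eq_add_inner A B]
    exact ((hx.comp hk).inner tendsto_const_nhds).const_add _

theorem exists_stationary_of_Lop_le (hA : IsElliptic A K₁ K₂) (hV : ContDiff ℝ 2 V)
    (hV_nonneg : ∀ x, 0 ≤ V x) (hV_lim : Tendsto V (cocompact (Ed d)) atTop) (hB : Measurable B)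
    (hN : ∀ (n : ℕ) (x : Ed d), ‖x‖ ≤ n → ‖B x‖ ≤ N n) {c α : ℝ} (hΛ : 0 < Λ)
    (hL : ∀ x, Lop A B V x ≤ c - Λ * V x) (hc : c < Λ * α) (hα : V 0 ≤ α)
    (hD : IsParametrixConst A (N <| · + 3) Λ D) :
    ∃ σ : Measure (Ed d), memPV V σ ∧ ∫ x, V x ∂σ ≤ α ∧ LocalBounds A D σ ∧
      ∀ φ : Ed d → ℝ, ContDiff ℝ 2 φ → HasCompactSupport φ → ∫ x, Lop A B φ x ∂σ = 0 := by
  obtain ⟨k, κ, σs, hk, hκ_le, hκ_lim, hσs, hαs, hsource⟩ :=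
    exists_seq_hasPointSourceOn_mollify hA hV hV_nonneg hV_lim hB hN hΛ hL hc hα
  have hσs_prob (m : ℕ) : IsProbabilityMeasure (σs m) := (hσs m).1
  have hone : (1 : Ed d → ℝ) =o[cocompact (Ed d)] V :=
    (Asymptotics.isLittleO_one_left_iff ℝ).2 (tendsto_norm_atTop_atTop.comp hV_lim)
  obtain ⟨σ, hσ, hσα, hσD, s, hs, hlim⟩ := exists_subseq_weightedTendsto hA hV.continuous
    hV_nonneg hV_lim continuous_one hone (fun m => (hσs m).2) hαs
    (hD.eventually_parametrixBound hB hN hκ_le hsource)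
  have : IsProbabilityMeasure σ := hσ.1
  refine ⟨σ, hσ, hσα, hσD, fun φ hφ hφ_supp => ?_⟩
  have hsource_lim : Tendsto (fun m => κ (s m) * φ 0) atTop (𝓝 0) := by
    simpa using (hκ_lim.comp hs.tendsto_atTop).mul_const (φ 0)
  refine tendsto_nhds_unique (tendsto_integral_Lop_mollify hA hB hN
    (hk.comp hs.tendsto_atTop) (hσD.absolutelyContinuous hA) hlim hφ hφ_supp)
    (hsource_lim.congr' ?_)
  obtain ⟨r, hr⟩ := hφ_supp.isCompact.isBounded.exists_norm_le
  obtain ⟨n, hn⟩ := exists_nat_ge r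
  filter_upwards [hs.tendsto_atTop.eventually_ge_atTop n] with m hm
  have hnm : (n : ℝ) ≤ s m := by exact_mod_cast hm
  exact (hsource (s m) φ hφ fun x hx => mem_closedBall_zero_iff.2 (by linarith [hr x hx])).symm

end LinearExistence

/-! ### Test functions of controlled growth -/

section Growth

variable {A : Ed d → Matrix (Fin d) (Fin d) ℝ} {K₁ K₂ : ℝ} {V W : Ed d → ℝ} {B : Ed d → Ed d}
  {φ ψ : Ed d → ℝ} {x : Ed d}

/-- The pointwise norm of the 2-jet of `ψ` at `x`, the quantity controlled in `GrowthW`. -/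
def jetNorm (ψ : Ed d → ℝ) (x : Ed d) : ℝ :=
  |ψ x| + ‖gradient ψ x‖ + ‖iteratedFDeriv ℝ 2 ψ x‖

theorem jetNorm_nonneg (ψ : Ed d → ℝ) (x : Ed d) : 0 ≤ jetNorm ψ x := by
  unfold jetNorm
  positivity

theorem jetNorm_mul_le (hφ : ContDiff ℝ 2 φ) (hψ : ContDiff ℝ 2 ψ) (x : Ed d) :
    jetNorm (fun y => φ y * ψ y) x ≤ 2 * jetNorm φ x * jetNorm ψ x := by
  have hone := norm_iteratedFDeriv_mul_le hφ hψ x (n := 1) (by norm_num)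
  have htwo := norm_iteratedFDeriv_mul_le hφ hψ x (n := 2) le_rfl
  simp only [Finset.sum_range_succ, Finset.sum_range_zero, zero_add, Nat.choose_zero_right,
    Nat.choose_self, Nat.choose_one_right, Nat.sub_zero, Nat.reduceSub, norm_iteratedFDeriv_zero,
    norm_iteratedFDeriv_one, Nat.add_one_sub_one, Nat.cast_one, Nat.cast_ofNat, one_mul,
    Real.norm_eq_abs, ← norm_gradient_eq_norm_fderiv] at hone htwo
  have hφ_grad := norm_nonneg (gradient φ x)
  have hφ_hess := norm_nonneg (iteratedFDeriv ℝ 2 φ x)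
  have hψ_grad := norm_nonneg (gradient ψ x)
  have hψ_hess := norm_nonneg (iteratedFDeriv ℝ 2 ψ x)
  unfold jetNorm
  rw [abs_mul]
  nlinarith [mul_nonneg (abs_nonneg (φ x)) (abs_nonneg (ψ x)),
    mul_nonneg (abs_nonneg (φ x)) hψ_grad, mul_nonneg (abs_nonneg (φ x)) hψ_hess,
    mul_nonneg hφ_grad (abs_nonneg (ψ x)), mul_nonneg hφ_grad hψ_grad,
    mul_nonneg hφ_grad hψ_hess, mul_nonneg hφ_hess (abs_nonneg (ψ x)),
    mul_nonneg hφ_hess hψ_grad, mul_nonneg hφ_hess hψ_hess]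

theorem jetNorm_comp_smul_le (hφ : ContDiff ℝ 2 φ) {c : ℝ} (hc : |c| ≤ 1) (x : Ed d) :
    jetNorm (fun y => φ (c • y)) x ≤ jetNorm φ (c • x) := by
  have hle {i : ℕ} (hi : i ≤ 2) : ‖iteratedFDeriv ℝ i (fun y => φ (c • y)) x‖ ≤
      ‖iteratedFDeriv ℝ i φ (c • x)‖ := by
    rw [congrFun (iteratedFDeriv_comp_const_smul c
      (hφ.of_le (show (i : WithTop ℕ∞) ≤ 2 by exact_mod_cast hi))) x, norm_smul, norm_pow]
    exact mul_le_of_le_one_left (norm_nonneg _) (pow_le_one₀ (norm_nonneg _) hc)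
  have hone := hle one_le_two
  rw [norm_iteratedFDeriv_one, norm_iteratedFDeriv_one, ← norm_gradient_eq_norm_fderiv,
    ← norm_gradient_eq_norm_fderiv] at hone
  exact add_le_add (add_le_add le_rfl hone) (hle le_rfl)

theorem exists_jetNorm_le (hφ : ContDiff ℝ 2 φ) (hφ_supp : HasCompactSupport φ) :
    ∃ M, ∀ x, jetNorm φ x ≤ M := by
  obtain ⟨M₀, hM₀⟩ := hφ.continuous.bounded_above_of_compact_support hφ_supp
  obtain ⟨M₁, hM₁⟩ := exists_norm_gradient_le (hφ.of_le one_le_two) hφ_supp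
  obtain ⟨M₂, hM₂⟩ := exists_norm_iteratedFDeriv_two_le hφ hφ_supp
  exact ⟨M₀ + M₁ + M₂, fun x => add_le_add (add_le_add (hM₀ x) (hM₁ x)) (hM₂ x)⟩

theorem abs_Lop_le_mul_jetNorm {K : ℝ} (hA : ∀ i j, |A x i j| ≤ K) (hK : 0 ≤ K)
    (φ : Ed d → ℝ) : |Lop A B φ x| ≤ (d ^ 2 * K + ‖B x‖) * jetNorm φ x := by
  refine (abs_Lop_le hA φ).trans ?_
  rw [add_mul]
  have hgrad : ‖gradient φ x‖ ≤ jetNorm φ x := by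
    unfold jetNorm
    linarith [abs_nonneg (φ x), norm_nonneg (iteratedFDeriv ℝ 2 φ x)]
  have hhess : ‖iteratedFDeriv ℝ 2 φ x‖ ≤ jetNorm φ x := by
    unfold jetNorm
    linarith [abs_nonneg (φ x), norm_nonneg (gradient φ x)]
  gcongr

theorem Lop_congr (h : φ =ᶠ[𝓝 x] ψ) : Lop A B φ x = Lop A B ψ x := by
  simp only [Lop, hess2, gradient, (h.iteratedFDeriv ℝ 2).eq_of_nhds, h.fderiv_eq]

/-- A smooth function equal to `1` on the ball of radius `n + 1`, with compact support and 2-jets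
bounded uniformly in `n`. -/
def dilatedCutoff (n : ℕ) (x : Ed d) : ℝ := cutoff 0 ((n + 1 : ℝ)⁻¹ • x)

theorem contDiff_dilatedCutoff (n : ℕ) : ContDiff ℝ 2 (dilatedCutoff n : Ed d → ℝ) :=
  (contDiff_cutoff 0 (k := 2)).comp (contDiff_const_smul _)

theorem hasCompactSupport_dilatedCutoff (n : ℕ) :
    HasCompactSupport (dilatedCutoff n : Ed d → ℝ) :=
  (isCutoff_cutoff 0).hasCompactSupport.comp_smul (by positivity)

theorem dilatedCutoff_eq_one {n : ℕ} (hx : ‖x‖ ≤ n + 1) : dilatedCutoff n x = 1 := by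
  refine cutoff_eq_one ?_
  rw [norm_smul, norm_inv, Real.norm_of_nonneg (by positivity), inv_mul_le_iff₀ (by positivity)]
  simpa using hx

theorem exists_jetNorm_dilatedCutoff_le :
    ∃ M, ∀ n, ∀ x : Ed d, jetNorm (dilatedCutoff n) x ≤ M := by
  obtain ⟨M, hM⟩ := exists_jetNorm_le (contDiff_cutoff (d := d) 0 (k := 2))
    (isCutoff_cutoff 0).hasCompactSupport
  refine ⟨M, fun n x => (jetNorm_comp_smul_le (contDiff_cutoff 0 (k := 2)) ?_ x).trans (hM _)⟩
  rw [abs_of_nonneg (by positivity)]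
  exact inv_le_one_of_one_le₀ (by linarith [n.cast_nonneg (α := ℝ)])

theorem dilatedCutoff_mul_eventuallyEq (ψ : Ed d → ℝ) (x : Ed d) :
    ∀ᶠ n in atTop, (fun y => dilatedCutoff n y * ψ y) =ᶠ[𝓝 x] ψ := by
  obtain ⟨m, hm⟩ := exists_nat_ge ‖x‖
  filter_upwards [eventually_ge_atTop m] with n hn
  have hmn : (m : ℝ) ≤ n := by exact_mod_cast hn
  filter_upwards [ball_mem_nhds x one_pos] with y hy
  rw [dilatedCutoff_eq_one, one_mul]
  linarith [norm_le_norm_add_norm_sub' y x, mem_ball_iff_norm.1 hy]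

theorem exists_abs_Lop_dilatedCutoff_mul_le (hA : IsElliptic A K₁ K₂) (hW : ∀ x, 0 ≤ W x) {C : ℝ}
    (hB : ∀ x, ‖B x‖ * W x ≤ C * V x) (hψ : ContDiff ℝ 2 ψ) (hψ_growth : GrowthW W ψ) :
    ∃ M, ∀ n x, |Lop A B (fun y => dilatedCutoff n y * ψ y) x| ≤
      M * (d ^ 2 * K₁ * W x + C * V x) := by
  obtain ⟨M, hM⟩ := exists_jetNorm_dilatedCutoff_le (d := d)
  obtain ⟨M', hM'⟩ := hψ_growth
  have hM_nonneg : 0 ≤ M := (jetNorm_nonneg _ _).trans (hM 0 0)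
  have hψ_le (x : Ed d) : jetNorm ψ x ≤ |M'| * W x :=
    (hM' x).trans (mul_le_mul_of_nonneg_right (le_abs_self _) (hW x))
  have hK₁ := hA.pos.le
  refine ⟨2 * M * |M'|, fun n x => ?_⟩
  calc |Lop A B (fun y => dilatedCutoff n y * ψ y) x|
      ≤ (d ^ 2 * K₁ + ‖B x‖) * jetNorm (fun y => dilatedCutoff n y * ψ y) x :=
        abs_Lop_le_mul_jetNorm (hA.abs_apply_le x) hK₁ _
    _ ≤ (d ^ 2 * K₁ + ‖B x‖) * (2 * M * (|M'| * W x)) := by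
        gcongr
        refine (jetNorm_mul_le (contDiff_dilatedCutoff n) hψ x).trans ?_
        gcongr
        exacts [jetNorm_nonneg _ _, hM n x, hψ_le x]
    _ = 2 * M * |M'| * (d ^ 2 * K₁ * W x + ‖B x‖ * W x) := by ring
    _ ≤ 2 * M * |M'| * (d ^ 2 * K₁ * W x + C * V x) :=
        mul_le_mul_of_nonneg_left (add_le_add_right (hB x) _) (by positivity)

variable {σ μ : Measure (Ed d)}

theorem integral_Lop_eq_zero_of_growthW (hA : IsElliptic A K₁ K₂) (hB : Measurable B)
    (hW : ∀ x, 0 ≤ W x) {C : ℝ} (hBW : ∀ x, ‖B x‖ * W x ≤ C * V x) (hV_int : Integrable V σ)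
    (hW_int : Integrable W σ)
    (hσ : ∀ φ : Ed d → ℝ, ContDiff ℝ 2 φ → HasCompactSupport φ → ∫ x, Lop A B φ x ∂σ = 0)
    (hψ : ContDiff ℝ 2 ψ) (hψ_growth : GrowthW W ψ) : ∫ x, Lop A B ψ x ∂σ = 0 := by
  obtain ⟨M, hM⟩ := exists_abs_Lop_dilatedCutoff_mul_le hA hW hBW hψ hψ_growth
  have hcutoff (n : ℕ) : ContDiff ℝ 2 fun y => dilatedCutoff n y * ψ y :=
    (contDiff_dilatedCutoff n).mul hψ
  have hlim : Tendsto (fun n => ∫ x, Lop A B (fun y => dilatedCutoff n y * ψ y) x ∂σ) atTop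
      (𝓝 (∫ x, Lop A B ψ x ∂σ)) :=
    tendsto_integral_of_dominated_convergence _
      (fun n => (measurable_Lop hA.continuous_apply hB (hcutoff n)).aestronglyMeasurable)
      (((hW_int.const_mul _).add (hV_int.const_mul _)).const_mul _)
      (fun n => Eventually.of_forall (hM n))
      (Eventually.of_forall fun x => tendsto_const_nhds.congr'
        ((dilatedCutoff_mul_eventuallyEq ψ x).mono fun n hn => (Lop_congr hn).symm))
  simp only [hσ _ (hcutoff _) (hasCompactSupport_dilatedCutoff _).mul_right] at hlim
  exact tendsto_nhds_unique hlim tendsto_const_nhds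

variable {b : Ed d → Measure (Ed d) → Ed d}

theorem memH.integrable {h : Ed d → ℝ} (hh : memH A b V W h) (hW_int : Integrable W σ) :
    Integrable h σ :=
  hh.2.1.elim fun M hM =>
    (hW_int.const_mul M).mono' hh.1.aestronglyMeasurable (Eventually.of_forall hM)

/- Integrating `L_μψ = C₁ h + C₂` against both measures gives the value `-C₂ / C₁` of `∫ h`. -/
theorem agreeH_of_forall_integral_Lop_eq_zero (hA : IsElliptic A K₁ K₂) (hW : ∀ x, 0 ≤ W x)
    (hW_int : ∀ τ, memPV V τ → Integrable W τ) (hb : Measurable (b · μ)) {C : ℝ}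
    (hbW : ∀ x, ‖b x μ‖ * W x ≤ C * V x) (hμ : memPV V μ) (hσ : memPV V σ)
    (hσμ : ∀ φ, ContDiff ℝ 2 φ → HasCompactSupport φ → ∫ x, Lop A (b · μ) φ x ∂σ = 0) :
    AgreeH A b V W σ μ := by
  intro h hh
  have hintegral {τ : Measure (Ed d)} (hτ : memPV V τ) (C₁ C₂ : ℝ) :
      ∫ x, (C₁ * h x + C₂) ∂τ = C₁ * ∫ x, h x ∂τ + C₂ := by
    have : IsProbabilityMeasure τ := hτ.1
    rw [integral_add ((hh.integrable (hW_int τ hτ)).const_mul C₁) (integrable_const _),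
      integral_const_mul]
    simp
  obtain ⟨-, -, ψ, ⟨hψ, hψ_growth, hψ_zero⟩, hψ_eq⟩ := hh
  obtain ⟨C₁, C₂, hC₁, hψμ⟩ := hψ_eq μ hμ
  have hμ_zero := hψ_zero μ hμ
  have hσ_zero := integral_Lop_eq_zero_of_growthW hA hb hW hbW hσ.2 (hW_int σ hσ) hσμ hψ hψ_growth
  simp only [hψμ, hintegral hμ] at hμ_zero
  simp only [hψμ, hintegral hσ] at hσ_zero
  exact mul_left_cancel₀ hC₁ (by linarith)

end Growth

/-! ### A fixed point principle for sets of measures -/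

section FixedPoint

/- Kakutani's theorem for the set-valued map sending `x` to the intersection over `ε > 0` of the
closed convex hulls of `Φ '' (K ∩ ball x ε)`, read off from its continuous linear functionals. -/
theorem exists_forall_tendsto_imp_eq {F : Type*} [NormedAddCommGroup F] [NormedSpace ℝ F]
    {K : Set F} (hK : IsCompact K) (hconv : Convex ℝ K) (hne : K.Nonempty) {Φ : F → F}
    (hΦ : MapsTo Φ K K) :
    ∃ x ∈ K, ∀ (ℓ : F →L[ℝ] ℝ) (c : ℝ),
      Tendsto (fun y => ℓ (Φ y)) (𝓝[K] x) (𝓝 c) → ℓ x = c := by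
  choose xs hxs_mem hxs_hull using fun n : ℕ =>
    exists_mem_convexHull_image_ball hK hconv hne hΦ (Nat.one_div_pos_of_nat (α := ℝ) (n := n))
  obtain ⟨x, hx, s, hs, hlim⟩ := hK.tendsto_subseq hxs_mem
  refine ⟨x, hx, fun ℓ c hℓ => tendsto_nhds_unique ((ℓ.continuous.tendsto x).comp hlim) ?_⟩
  refine nhds_basis_closedBall.tendsto_right_iff.2 fun ε hε => ?_
  obtain ⟨r, hr, hball⟩ := mem_nhdsWithin_iff.1 (hℓ (closedBall_mem_nhds c hε))
  have hradius : Tendsto (fun n => dist (xs (s n)) x + 1 / ((s n : ℝ) + 1)) atTop (𝓝 0) := by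
    simpa using (tendsto_iff_dist_tendsto_zero.1 hlim).add
      (tendsto_one_div_add_atTop_nhds_zero_nat.comp hs.tendsto_atTop)
  filter_upwards [hradius.eventually_lt_const hr] with n hn
  have hball_sub : ball (xs (s n)) (1 / ((s n : ℝ) + 1)) ⊆ ball x r :=
    ball_subset_ball' (by linarith)
  have himage : Φ '' (K ∩ ball (xs (s n)) (1 / ((s n : ℝ) + 1))) ⊆ ℓ ⁻¹' closedBall c ε :=
    image_subset_iff.2 fun y hy => hball ⟨hball_sub hy.2, hy.1⟩
  exact convexHull_min himage ((convex_closedBall c ε).linear_preimage ℓ.toLinearMap)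
    (hxs_hull (s n))

variable {X : Type*} [MeasurableSpace X] {W : X → ℝ} {ρ : ℝ} {σ τ : Measure X}

theorem integral_nnreal_smul_add_smul {f : X → ℝ} (hσ : Integrable f σ) (hτ : Integrable f τ)
    (p q : ℝ≥0) : ∫ x, f x ∂(p • σ + q • τ) = p * ∫ x, f x ∂σ + q * ∫ x, f x ∂τ := by
  rw [integral_add_measure hσ.smul_measure_nnreal hτ.smul_measure_nnreal,
    integral_smul_nnreal_measure, integral_smul_nnreal_measure]
  rfl

/-- The measurable functions dominated by `W`: the unit ball dual to `‖·‖_W`. -/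
def weightBall (W : X → ℝ) : Set (X → ℝ) := {f | Measurable f ∧ ∀ x, |f x| ≤ W x}

theorem integrable_of_mem_weightBall {f : X → ℝ} (hf : f ∈ weightBall W) (hσ : Integrable W σ) :
    Integrable f σ :=
  hσ.mono' hf.1.aestronglyMeasurable (Eventually.of_forall hf.2)

/-- The measure `σ` as a functional on `weightBall W`; this embeds the measures integrating `W`
isometrically for `‖·‖_W` into a Banach space. -/
def weightedPairing (hσ : Integrable W σ) : lp (fun _ : weightBall W => ℝ) ∞ :=
  ⟨fun f => ∫ x, f.1 x ∂σ, memℓp_infty ⟨∫ x, W x ∂σ, by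
    rintro _ ⟨f, rfl⟩
    exact norm_integral_le_of_norm_le hσ (Eventually.of_forall f.2.2)⟩⟩

theorem norm_weightedPairing_sub_le_iff (hσ : Integrable W σ) (hτ : Integrable W τ)
    (hρ : 0 ≤ ρ) : ‖weightedPairing hσ - weightedPairing hτ‖ ≤ ρ ↔ WeightedClose W ρ σ τ :=
  ⟨fun h f hf hf_le => (lp.norm_apply_le_norm ENNReal.top_ne_zero
      (weightedPairing hσ - weightedPairing hτ) ⟨f, hf, hf_le⟩).trans h,
    fun h => lp.norm_le_of_forall_le hρ fun f => h f.1 f.2.1 f.2.2⟩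

theorem tendsto_weightedPairing_iff {σs : ℕ → Measure X} (hσs : ∀ n, Integrable W (σs n))
    (hσ : Integrable W σ) :
    Tendsto (fun n => weightedPairing (hσs n)) atTop (𝓝 (weightedPairing hσ)) ↔
      WeightedTendsto W σs σ := by
  simp only [nhds_basis_closedBall.tendsto_right_iff, mem_closedBall, dist_eq_norm]
  exact forall₂_congr fun ρ hρ => eventually_congr <| Eventually.of_forall fun n =>
    norm_weightedPairing_sub_le_iff (hσs n) hσ hρ.le

/-- Sequential compactness of a set of measures for `‖·‖_W`. -/
def IsWeightedSeqCompact (W : X → ℝ) (S : Set (Measure X)) : Prop :=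
  ∀ σs : ℕ → Measure X, (∀ n, σs n ∈ S) →
    ∃ σ ∈ S, ∃ s : ℕ → ℕ, StrictMono s ∧ WeightedTendsto W (σs ∘ s) σ

variable {S : Set (Measure X)} (hW : ∀ σ ∈ S, Integrable W σ)

include hW

theorem IsWeightedSeqCompact.isCompact_range_weightedPairing (hS : IsWeightedSeqCompact W S) :
    IsCompact (range fun σ : S => weightedPairing (hW σ σ.2)) := by
  refine IsSeqCompact.isCompact fun ys hys => ?_
  choose σs hσs using hys
  obtain ⟨σ, hσ, s, hs, hlim⟩ := hS (fun n => σs n) fun n => (σs n).2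
  obtain rfl : (fun n => weightedPairing (hW (σs n) (σs n).2)) = ys := funext hσs
  exact ⟨_, mem_range_self (⟨σ, hσ⟩ : S), s, hs,
    (tendsto_weightedPairing_iff (fun n => hW (σs (s n)) (σs (s n)).2) (hW σ hσ)).2 hlim⟩

theorem convex_range_weightedPairing (hS : Convex ℝ≥0 S) :
    Convex ℝ (range fun σ : S => weightedPairing (hW σ σ.2)) := by
  rintro _ ⟨σ, rfl⟩ _ ⟨τ, rfl⟩ p q hp hq hpq
  lift p to ℝ≥0 using hp
  lift q to ℝ≥0 using hq
  refine ⟨⟨_, hS σ.2 τ.2 p.2 q.2 (NNReal.eq hpq)⟩, lp.ext (funext fun f => ?_)⟩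
  exact integral_nnreal_smul_add_smul (integrable_of_mem_weightBall f.2 (hW σ σ.2))
    (integrable_of_mem_weightBall f.2 (hW τ τ.2)) p q

theorem IsWeightedSeqCompact.exists_forall_tendsto_imp_integral_eq
    (hS : IsWeightedSeqCompact W S) (hconv : Convex ℝ≥0 S) (hne : S.Nonempty)
    {Φ : Measure X → Measure X} (hΦ : MapsTo Φ S S) :
    ∃ μ ∈ S, ∀ g : X → ℝ, Measurable g → ∀ M > 0, (∀ x, |g x| ≤ M * W x) → ∀ c,
      (∀ σs : ℕ → Measure X, (∀ n, σs n ∈ S) → WeightedTendsto W σs μ →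
        Tendsto (fun n => ∫ x, g x ∂Φ (σs n)) atTop (𝓝 c)) → ∫ x, g x ∂μ = c := by
  have : Nonempty S := hne.to_subtype
  let e : S → lp (fun _ : weightBall W => ℝ) ∞ := fun σ => weightedPairing (hW σ σ.2)
  let Φe := fun y => e (hΦ.restrict Φ S S (Function.invFun e y))
  obtain ⟨_, ⟨μ, rfl⟩, hμ⟩ := exists_forall_tendsto_imp_eq
    (hS.isCompact_range_weightedPairing hW) (convex_range_weightedPairing hW hconv)
    (range_nonempty e) (Φ := Φe) fun _ _ => mem_range_self _
  refine ⟨μ, μ.2, fun g hg M hM hgM c hc => ?_⟩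
  let f : weightBall W := ⟨fun x => g x / M, hg.div_const M, fun x => by
    rw [abs_div, abs_of_pos hM, div_le_iff₀' hM]
    exact hgM x⟩
  have hf : ∀ σ : S, e σ f = (∫ x, g x ∂(σ : Measure X)) / M := fun σ => integral_div M g
  have hfix : e μ f = c / M := hμ (lp.evalCLM ℝ _ ∞ f) (c / M) <|
    tendsto_of_seq_tendsto fun ys hys => by
      obtain ⟨hys, hys_mem⟩ := tendsto_nhdsWithin_iff.1 hys
      have hpreimage : Tendsto (fun n => e (Function.invFun e (ys n))) atTop (𝓝 (e μ)) :=
        hys.congr' (hys_mem.mono fun n hn => (Function.invFun_eq hn).symm)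
      exact (hc _ (fun n => (Function.invFun e (ys n)).2)
        ((tendsto_weightedPairing_iff _ _).1 hpreimage)).div_const M |>.congr fun n => (hf _).symm
  rwa [hf, div_left_inj' hM.ne'] at hfix

end FixedPoint

/-! ### The linearised solution map -/

section AdmissibleMeasures

variable {A : Ed d → Matrix (Fin d) (Fin d) ℝ} {K₁ K₂ : ℝ} {V W η θ : Ed d → ℝ}
  {b : Ed d → Measure (Ed d) → Ed d} {σ τ μ ν : Measure (Ed d)} {σs : ℕ → Measure (Ed d)}
  {D : ℕ → ℝ} {α : ℝ}

theorem smoothing_nnreal_smul_add_smul [IsFiniteMeasure σ] [IsFiniteMeasure τ]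
    (hη : IsCutoff η) (p q : ℝ≥0) (t : ℝ) (y : Ed d) :
    smoothing A η (p • σ + q • τ) t y = p * smoothing A η σ t y + q * smoothing A η τ t y := by
  have hcont : Continuous fun x => η x * parametrix A t x y :=
    hη.continuous.mul (contDiff_parametrix A t y (n := 0)).continuous
  have hint : ∀ (ρ : Measure (Ed d)) [IsFiniteMeasure ρ],
      Integrable (fun x => η x * parametrix A t x y) ρ := fun ρ _ =>
    hcont.integrable_of_hasCompactSupport hη.hasCompactSupport.mul_right
  exact integral_nnreal_smul_add_smul (hint σ) (hint τ) p q

theorem ParametrixBound.nnreal_smul_add_smul [IsProbabilityMeasure σ] [IsProbabilityMeasure τ]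
    (hA : IsElliptic A K₁ K₂) (hη : IsCutoff η) (hθ : IsCutoff θ) {D : ℝ}
    (hσ : ParametrixBound A η θ D σ) (hτ : ParametrixBound A η θ D τ) {p q : ℝ≥0}
    (hpq : p + q = 1) : ParametrixBound A η θ D (p • σ + q • τ) := by
  intro f hf hf_le t ht
  have hgauss_int : ∀ (ρ : Measure (Ed d)) [IsProbabilityMeasure ρ],
      Integrable (fun x => η x * gaussMass A x * f x) ρ := fun ρ _ =>
    (integrable_cutoff_mul_gaussMass hA hη ρ).mul_bdd hf.aestronglyMeasurable
      (Eventually.of_forall hf_le)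
  have hsmoothing_int : ∀ (ρ : Measure (Ed d)) [IsProbabilityMeasure ρ],
      Integrable fun y => θ y * f y * smoothing A η ρ t y := fun ρ _ =>
    ((integrable_cutoff_mul_smoothing hA hη hθ ρ ht.1).mul_bdd hf.aestronglyMeasurable
      (Eventually.of_forall hf_le)).congr (Eventually.of_forall fun y => by ring)
  have hsmoothing : ∫ y, θ y * f y * smoothing A η (p • σ + q • τ) t y =
      p * (∫ y, θ y * f y * smoothing A η σ t y) + q * ∫ y, θ y * f y * smoothing A η τ t y := by
    rw [← integral_const_mul, ← integral_const_mul,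
      ← integral_add ((hsmoothing_int σ).const_mul _) ((hsmoothing_int τ).const_mul _)]
    refine integral_congr_ae (Eventually.of_forall fun y => ?_)
    simp only [smoothing_nnreal_smul_add_smul hη]
    ring
  rw [integral_nnreal_smul_add_smul (hgauss_int σ) (hgauss_int τ), hsmoothing]
  have hcomb := convex_Icc (-(D * √t)) (D * √t) (abs_le.1 (hσ f hf hf_le t ht))
    (abs_le.1 (hτ f hf hf_le t ht)) p.2 q.2 (congrArg NNReal.toReal hpq)
  rw [abs_le]
  convert mem_Icc.1 hcomb using 2 <;> simp only [NNReal.val_eq_coe, smul_eq_mul] <;> ring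

/-- The measures among which solutions are sought: probability measures whose `V`-moment is at most
`α`, whose local densities obey the parametrix bounds with constants `D`, and which agree with `ν`
on `ℋ`. -/
structure IsAdmissible (A : Ed d → Matrix (Fin d) (Fin d) ℝ) (b : Ed d → Measure (Ed d) → Ed d)
    (V W : Ed d → ℝ) (D : ℕ → ℝ) (α : ℝ) (ν σ : Measure (Ed d)) : Prop where
  memPV : memPV V σ
  integral_le : ∫ x, V x ∂σ ≤ α
  localBounds : LocalBounds A D σ
  agreeH : AgreeH A b V W σ ν

theorem convex_setOf_isAdmissible (hA : IsElliptic A K₁ K₂)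
    (hW_int : ∀ τ, memPV V τ → Integrable W τ) :
    Convex ℝ≥0 {σ | IsAdmissible A b V W D α ν σ} := by
  intro σ hσ τ hτ p q _ _ hpq
  have hσ_prob := hσ.memPV.1
  have hτ_prob := hτ.memPV.1
  have hpq_real : (p : ℝ) + q = 1 := congrArg NNReal.toReal hpq
  refine ⟨⟨⟨?_⟩, hσ.memPV.2.smul_measure_nnreal.add_measure hτ.memPV.2.smul_measure_nnreal⟩, ?_,
    fun n => (hσ.localBounds n).nnreal_smul_add_smul hA (isCutoff_cutoff n)
      (isCutoff_cutoff (n + 1)) (hτ.localBounds n) hpq, fun h hh => ?_⟩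
  · simpa [Measure.nnreal_smul_coe_apply] using mod_cast hpq
  · rw [integral_nnreal_smul_add_smul hσ.memPV.2 hτ.memPV.2]
    exact convex_Iic α hσ.integral_le hτ.integral_le p.2 q.2 hpq_real
  · rw [integral_nnreal_smul_add_smul (hh.integrable (hW_int σ hσ.memPV))
      (hh.integrable (hW_int τ hτ.memPV)), hσ.agreeH h hh, hτ.agreeH h hh, ← add_mul, hpq_real,
      one_mul]

theorem agreeH_of_weightedTendsto (hW : ∀ x, 0 ≤ W x) (h : WeightedTendsto W σs σ)
    (hσs : ∀ n, AgreeH A b V W (σs n) ν) : AgreeH A b V W σ ν := by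
  intro f hf
  obtain ⟨M, hM⟩ := hf.2.1
  have hf_lim := h.tendsto_integral hf.1.measurable (M := max M 1) (by positivity) fun x =>
    (hM x).trans (mul_le_mul_of_nonneg_right (le_max_left M 1) (hW x))
  simp only [fun n => hσs n f hf] at hf_lim
  exact tendsto_nhds_unique hf_lim tendsto_const_nhds

theorem isWeightedSeqCompact_setOf_isAdmissible (hA : IsElliptic A K₁ K₂) (hV : Continuous V)
    (hV_nonneg : ∀ x, 0 ≤ V x) (hV_lim : Tendsto V (cocompact (Ed d)) atTop) (hW : Continuous W)
    (hW_nonneg : ∀ x, 0 ≤ W x) (hWV : W =o[cocompact (Ed d)] V) :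
    IsWeightedSeqCompact W {σ | IsAdmissible A b V W D α ν σ} := by
  intro σs hσs
  have hσs_prob : ∀ m, IsProbabilityMeasure (σs m) := fun m => (hσs m).memPV.1
  obtain ⟨σ, hσ, hσ_le, hσD, s, hs, hlim⟩ := exists_subseq_weightedTendsto hA hV hV_nonneg hV_lim
    hW hWV (fun m => (hσs m).memPV.2) (fun m => (hσs m).integral_le)
    fun n => Eventually.of_forall fun m => (hσs m).localBounds n
  exact ⟨σ, ⟨hσ, hσ_le, hσD, agreeH_of_weightedTendsto hW_nonneg hlim fun m => (hσs (s m)).agreeH⟩,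
    s, hs, hlim⟩

end AdmissibleMeasures

section LinearisedEquation

variable {A : Ed d → Matrix (Fin d) (Fin d) ℝ} {K₁ K₂ N : ℝ} {B : Ed d → Ed d} {φ : Ed d → ℝ}

theorem abs_Lop_sub_Lop_le {B' : Ed d → Ed d} {ε G : ℝ} (hε : 0 ≤ ε)
    (hB' : ∀ x ∈ tsupport φ, ‖B x - B' x‖ ≤ ε) (hG : ∀ x, ‖gradient φ x‖ ≤ G) (x : Ed d) :
    |Lop A B φ x - Lop A B' φ x| ≤ ε * G := by
  by_cases hx : x ∈ tsupport φ
  · rw [Lop_eq_add_inner A B, Lop_eq_add_inner A B', add_sub_add_left_eq_sub, ← inner_sub_left]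
    exact (abs_real_inner_le_norm _ _).trans (mul_le_mul (hB' x hx) (hG x) (norm_nonneg _) hε)
  · rw [Lop_eq_zero_of_notMem_tsupport A B hx, Lop_eq_zero_of_notMem_tsupport A B' hx, sub_zero,
      abs_zero]
    exact mul_nonneg hε ((norm_nonneg _).trans (hG x))

theorem tendsto_integral_Lop_of_tendstoUniformlyOn (hA : IsElliptic A K₁ K₂) (hB : Measurable B)
    (hφ : ContDiff ℝ 2 φ) (hc : HasCompactSupport φ) (hN : 0 ≤ N)
    (hB_le : ∀ x ∈ tsupport φ, ‖B x‖ ≤ N) {Bs : ℕ → Ed d → Ed d} (hBs : ∀ n, Measurable (Bs n))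
    (hlim : TendstoUniformlyOn Bs B atTop (tsupport φ)) {σs : ℕ → Measure (Ed d)}
    [∀ n, IsProbabilityMeasure (σs n)] (hσs : ∀ n, ∫ x, Lop A (Bs n) φ x ∂σs n = 0) :
    Tendsto (fun n => ∫ x, Lop A B φ x ∂σs n) atTop (𝓝 0) := by
  obtain ⟨G, hG⟩ := exists_norm_gradient_le (hφ.of_le one_le_two) hc
  have hG_nonneg : 0 ≤ G := (norm_nonneg _).trans (hG 0)
  refine nhds_basis_closedBall.tendsto_right_iff.2 fun ρ hρ => ?_
  have hε : 0 < ρ / (G + 1) := by positivity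
  filter_upwards [tendstoUniformlyOn_iff.1 hlim _ hε] with n hn
  have hclose : ∀ x ∈ tsupport φ, ‖B x - Bs n x‖ ≤ ρ / (G + 1) := fun x hx => by
    rw [← dist_eq_norm]
    exact (hn x hx).le
  have hBs_le : ∀ x ∈ tsupport φ, ‖Bs n x‖ ≤ N + ρ / (G + 1) := fun x hx =>
    (norm_le_norm_add_norm_sub' _ _).trans
      (add_le_add (hB_le x hx) ((norm_sub_rev _ _).trans_le (hclose x hx)))
  rw [mem_closedBall_zero_iff, ← sub_zero (∫ x, Lop A B φ x ∂σs n), ← hσs n,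
    ← integral_sub (integrable_Lop hA hB hφ hc hN hB_le _)
      (integrable_Lop hA (hBs n) hφ hc (by positivity) hBs_le _)]
  calc ‖∫ x, (Lop A B φ x - Lop A (Bs n) φ x) ∂σs n‖ ≤ ρ / (G + 1) * G :=
        (norm_integral_le_of_norm_le_const (Eventually.of_forall fun x =>
          abs_Lop_sub_Lop_le (A := A) hε.le hclose hG x)).trans_eq (by simp)
    _ ≤ ρ / (G + 1) * (G + 1) := by gcongr; linarith
    _ = ρ := div_mul_cancel₀ _ (by positivity)

theorem exists_abs_Lop_le_mul_weight (hA : IsElliptic A K₁ K₂) (hφ : ContDiff ℝ 2 φ)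
    (hc : HasCompactSupport φ) (hN : 0 ≤ N) (hB_le : ∀ x ∈ tsupport φ, ‖B x‖ ≤ N)
    {W : Ed d → ℝ} (hW : Continuous W) (hW_pos : ∀ x, 0 < W x) :
    ∃ M > 0, ∀ x, |Lop A B φ x| ≤ M * W x := by
  obtain ⟨C, hC_nonneg, hC⟩ := exists_abs_Lop_le hA hφ hc hN
  obtain ⟨m, hm⟩ := hc.isCompact.exists_bound_of_continuousOn
    (hW.inv₀ fun x => (hW_pos x).ne').continuousOn
  refine ⟨C * |m| + 1, by positivity, fun x => ?_⟩
  have hWx := hW_pos x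
  by_cases hx : x ∈ tsupport φ
  · have hWm : 1 ≤ |m| * W x := by
      rw [← div_le_iff₀ hWx, one_div]
      exact (le_abs_self _).trans ((hm x hx).trans (le_abs_self m))
    calc |Lop A B φ x| ≤ C * 1 := by simpa using hC B hB_le x
      _ ≤ C * (|m| * W x) := by gcongr
      _ ≤ (C * |m| + 1) * W x := by linarith
  · rw [Lop_eq_zero_of_notMem_tsupport A B hx, abs_zero]
    positivity

end LinearisedEquation

/-! ### Existence of stationary solutions -/

theorem isLittleO_rpow_id_atTop {γ : ℝ} (hγ : γ < 1) : (fun t : ℝ => t ^ γ) =o[atTop] id := by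
  refine (Asymptotics.isLittleO_iff_tendsto' ?_).2 ?_
  · filter_upwards [eventually_ne_atTop 0] with t ht h using absurd h ht
  · refine (tendsto_rpow_neg_atTop (sub_pos.2 hγ)).congr' ?_
    filter_upwards [eventually_gt_atTop 0] with t ht
    rw [neg_sub, rpow_sub_one ht.ne', id]

theorem mul_rpow_le_mul_of_le_mul_rpow {t C v γ : ℝ} (hv : 0 < v) (ht : t ≤ C * v ^ (1 - γ)) :
    t * v ^ γ ≤ C * v :=
  (mul_le_mul_of_nonneg_right ht (rpow_nonneg hv.le γ)).trans_eq <| by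
    rw [mul_assoc, ← rpow_add hv, sub_add_cancel, rpow_one]

theorem eventually_one_sub_mul_add_lt {Λ δ : ℝ} (C : ℝ) (hδ : δ < 1) (hΛ : 0 < Λ) :
    ∀ᶠ α in atTop, (1 - δ) * C + Λ * (δ * α) < Λ * α := by
  filter_upwards [eventually_gt_atTop (C / Λ)] with α hα
  nlinarith [mul_pos (sub_pos.2 hδ) (sub_pos.2 ((div_lt_iff₀ hΛ).1 hα))]

section Existence

variable {A : Ed d → Matrix (Fin d) (Fin d) ℝ} {K₁ K₂ Λ α c : ℝ} {V W : Ed d → ℝ}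
  {b : Ed d → Measure (Ed d) → Ed d} {μ ν : Measure (Ed d)} {D N : ℕ → ℝ}

theorem exists_isAdmissible_forall_integral_Lop_eq_zero (hA : IsElliptic A K₁ K₂)
    (hV : ContDiff ℝ 2 V) (hV_nonneg : ∀ x, 0 ≤ V x) (hV_lim : Tendsto V (cocompact (Ed d)) atTop)
    (hW : ∀ x, 0 ≤ W x) (hW_int : ∀ τ, memPV V τ → Integrable W τ) (hb : Measurable (b · μ))
    {C : ℝ} (hbW : ∀ x, ‖b x μ‖ * W x ≤ C * V x)
    (hN : ∀ (n : ℕ) (x : Ed d), ‖x‖ ≤ n → ‖b x μ‖ ≤ N n) (hΛ : 0 < Λ)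
    (hL : ∀ x, Lop A (b · μ) V x ≤ c - Λ * V x) (hc : c < Λ * α) (hα : V 0 ≤ α)
    (hD : IsParametrixConst A (N <| · + 3) Λ D) (hμ : memPV V μ) (hμν : AgreeH A b V W μ ν) :
    ∃ σ, IsAdmissible A b V W D α ν σ ∧
      ∀ φ, ContDiff ℝ 2 φ → HasCompactSupport φ → ∫ x, Lop A (b · μ) φ x ∂σ = 0 := by
  obtain ⟨σ, hσ, hσ_le, hσD, hσ_sol⟩ :=
    exists_stationary_of_Lop_le hA hV hV_nonneg hV_lim hb hN hΛ hL hc hα hD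
  have hσμ : AgreeH A b V W σ μ :=
    agreeH_of_forall_integral_Lop_eq_zero hA hW hW_int hb hbW hμ hσ hσ_sol
  exact ⟨σ, ⟨hσ, hσ_le, hσD, fun h hh => (hσμ h hh).trans (hμν h hh)⟩, hσ_sol⟩

/- The solution map of the linearised equation need not be continuous, as its solutions are not
known to be unique: convergence of the drifts replaces continuity at the fixed point. -/
theorem exists_isAdmissible_isStationarySol (hA : IsElliptic A K₁ K₂) (hV : Continuous V)
    (hV_nonneg : ∀ x, 0 ≤ V x) (hV_lim : Tendsto V (cocompact (Ed d)) atTop) (hW : Continuous W)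
    (hW_pos : ∀ x, 0 < W x) (hWV : W =o[cocompact (Ed d)] V) (hb : ∀ μ, Measurable (b · μ))
    (hN_nonneg : ∀ n, 0 ≤ N n)
    (hN : ∀ μ, IsAdmissible A b V W D α ν μ → ∀ (n : ℕ) (x : Ed d), ‖x‖ ≤ n → ‖b x μ‖ ≤ N n)
    (hcont : ∀ (μs : ℕ → Measure (Ed d)) (μ : Measure (Ed d)),
      (∀ n, IsAdmissible A b V W D α ν (μs n)) → IsAdmissible A b V W D α ν μ →
      WeightedTendsto W μs μ → ∀ R > 0,
        TendstoUniformlyOn (fun n x => b x (μs n)) (b · μ) atTop (closedBall 0 R))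
    (hne : ∃ σ, IsAdmissible A b V W D α ν σ)
    (hlinear : ∀ μ, IsAdmissible A b V W D α ν μ → ∃ σ, IsAdmissible A b V W D α ν σ ∧
      ∀ φ, ContDiff ℝ 2 φ → HasCompactSupport φ → ∫ x, Lop A (b · μ) φ x ∂σ = 0) :
    ∃ μ, IsAdmissible A b V W D α ν μ ∧ IsStationarySol A (b · μ) μ := by
  have hW_int : ∀ τ, memPV V τ → Integrable W τ := fun τ hτ =>
    have := hτ.1
    integrable_of_isLittleO_cocompact hW hWV hτ.2
  choose! Φ hΦ hΦ_sol using hlinear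
  obtain ⟨μ, hμ, hfix⟩ := (isWeightedSeqCompact_setOf_isAdmissible hA hV hV_nonneg hV_lim hW
    (fun x => (hW_pos x).le) hWV).exists_forall_tendsto_imp_integral_eq
    (fun σ hσ => hW_int σ hσ.memPV) (convex_setOf_isAdmissible hA hW_int) hne hΦ
  refine ⟨μ, hμ, fun φ hφ => ?_⟩
  have hφ_two : ContDiff ℝ 2 φ := mod_cast contDiff_infty.1 hφ.1 2
  obtain ⟨R, hR, hφR⟩ := hφ.2.isCompact.isBounded.subset_closedBall_lt 0 0
  have hb_le : ∀ x ∈ tsupport φ, ‖b x μ‖ ≤ N ⌈R⌉₊ := fun x hx =>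
    hN μ hμ _ x ((mem_closedBall_zero_iff.1 (hφR hx)).trans (Nat.le_ceil R))
  obtain ⟨M, hM_pos, hM⟩ :=
    exists_abs_Lop_le_mul_weight hA hφ_two hφ.2 (hN_nonneg _) hb_le hW hW_pos
  refine hfix _ (measurable_Lop hA.continuous_apply (hb μ) hφ_two) M hM_pos hM 0
    fun σs hσs hlim => ?_
  have hΦσs_prob : ∀ n, IsProbabilityMeasure (Φ (σs n)) := fun n => (hΦ _ (hσs n)).memPV.1
  exact tendsto_integral_Lop_of_tendstoUniformlyOn hA (hb μ) hφ_two hφ.2 (hN_nonneg _) hb_le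
    (fun n => hb (σs n)) ((hcont σs μ hσs hμ hlim R hR).mono hφR)
    fun n => hΦ_sol _ (hσs n) φ hφ_two hφ.2

theorem exists_isStationarySol_agreeH (hA : IsElliptic A K₁ K₂) (hV : ContDiff ℝ 2 V)
    (hV_nonneg : ∀ x, 0 ≤ V x) (hV_lim : Tendsto V (cocompact (Ed d)) atTop) (hW : Continuous W)
    (hW_pos : ∀ x, 0 < W x) (hWV : W =o[cocompact (Ed d)] V) (hb : ∀ μ, Measurable (b · μ))
    (hbW : ∀ μ, memPV V μ → ∃ C, ∀ x, ‖b x μ‖ * W x ≤ C * V x) (hN_nonneg : ∀ n, 0 ≤ N n)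
    (hΛ : 0 < Λ) (hc : c < Λ * α) (hα : V 0 ≤ α)
    (hL : ∀ μ, memPV V μ → ∫ x, V x ∂μ ≤ α → AgreeH A b V W μ ν →
      (∀ x, Lop A (b · μ) V x ≤ c - Λ * V x) ∧
        ∀ (n : ℕ) (x : Ed d), ‖x‖ ≤ n → ‖b x μ‖ ≤ N n)
    (hcont : ∀ (μs : ℕ → Measure (Ed d)) (μ : Measure (Ed d)),
      (∀ n, memPV V (μs n) ∧ ∫ x, V x ∂μs n ≤ α) → memPV V μ → ∫ x, V x ∂μ ≤ α →
      WeightedTendsto W μs μ → ∀ R > 0,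
        TendstoUniformlyOn (fun n x => b x (μs n)) (b · μ) atTop (closedBall 0 R))
    (hν : memPV V ν) (hνα : ∫ x, V x ∂ν ≤ α) :
    ∃ μ, memPV V μ ∧ IsStationarySol A (b · μ) μ ∧ AgreeH A b V W μ ν := by
  have hW_int : ∀ τ, memPV V τ → Integrable W τ := fun τ hτ =>
    have := hτ.1
    integrable_of_isLittleO_cocompact hW hWV hτ.2
  obtain ⟨D, hD⟩ := exists_isParametrixConst hA (fun n => hN_nonneg (n + 3)) Λ
  have hlinear : ∀ μ, memPV V μ → ∫ x, V x ∂μ ≤ α → AgreeH A b V W μ ν →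
      ∃ σ, IsAdmissible A b V W D α ν σ ∧
        ∀ φ, ContDiff ℝ 2 φ → HasCompactSupport φ → ∫ x, Lop A (b · μ) φ x ∂σ = 0 := by
    intro μ hμ hμα hμν
    obtain ⟨hLμ, hNμ⟩ := hL μ hμ hμα hμν
    obtain ⟨C, hC⟩ := hbW μ hμ
    exact exists_isAdmissible_forall_integral_Lop_eq_zero hA hV hV_nonneg hV_lim
      (fun x => (hW_pos x).le) hW_int (hb μ) hC hNμ hΛ hLμ hc hα hD hμ hμν
  obtain ⟨μ, hμ, hμ_sol⟩ := exists_isAdmissible_isStationarySol hA hV.continuous hV_nonneg hV_lim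
    hW hW_pos hWV hb hN_nonneg (fun μ hμ => (hL μ hμ.memPV hμ.integral_le hμ.agreeH).2)
    (fun μs μ hμs hμ => hcont μs μ (fun n => ⟨(hμs n).memPV, (hμs n).integral_le⟩) hμ.memPV
      hμ.integral_le)
    ((hlinear ν hν hνα fun _ _ => rfl).imp fun _ => And.left)
    fun μ hμ => hlinear μ hμ.memPV hμ.integral_le hμ.agreeH
  exact ⟨μ, hμ.memPV, hμ_sol, hμ.agreeH⟩

theorem stmt9_existence_stationary_general (hA : IsElliptic A K₁ K₂) (hV : ContDiff ℝ 2 V)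
    (hV_nonneg : ∀ x, 0 ≤ V x) (hV_lim : Tendsto V (cocompact (Ed d)) atTop) (hW : Continuous W)
    (hW_pos : ∀ x, 0 < W x) (hWV : W =o[cocompact (Ed d)] V) (hb : ∀ μ, Measurable (b · μ))
    (hbW : ∀ μ, memPV V μ → ∃ C, ∀ x, ‖b x μ‖ * W x ≤ C * V x)
    (hL : ∃ δ < (1 : ℝ), ∃ C, ∃ Λ > (0 : ℝ), ∃ N : ℝ → ℝ → ℝ, (∀ α R, 0 ≤ N α R) ∧
      ∀ α > 0, ∀ μ, memPV V μ → ∫ x, V x ∂μ ≤ α → AgreeH A b V W μ ν →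
        (∀ x, Lop A (b · μ) V x ≤ (1 - δ) * C + Λ * (δ * α - V x)) ∧
          ∀ R > 0, ∀ x, ‖x‖ ≤ R → ‖b x μ‖ ≤ N α R)
    (hcont : ∀ α > 0, ∀ (μs : ℕ → Measure (Ed d)) (μ : Measure (Ed d)),
      (∀ n, memPV V (μs n) ∧ ∫ x, V x ∂μs n ≤ α) → memPV V μ → ∫ x, V x ∂μ ≤ α →
      Tendsto (fun n => wDist W (μs n) μ) atTop (𝓝 0) → ∀ R > 0,
        TendstoUniformlyOn (fun n x => b x (μs n)) (b · μ) atTop (closedBall 0 R))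
    (hν : memPV V ν) :
    ∃ μ, memPV V μ ∧ IsStationarySol A (b · μ) μ ∧ AgreeH A b V W μ ν := by
  obtain ⟨δ, hδ, C, Λ, hΛ, N, hN_nonneg, hL⟩ := hL
  obtain ⟨α, hα_pos, hα, hνα, hc⟩ := ((eventually_gt_atTop 0).and <| (eventually_ge_atTop (V 0)).and
    <| (eventually_ge_atTop (∫ x, V x ∂ν)).and <| eventually_one_sub_mul_add_lt C hδ hΛ).exists
  refine exists_isStationarySol_agreeH hA hV hV_nonneg hV_lim hW hW_pos hWV hb hbW
    (N := fun n => N α (n + 1)) (fun n => hN_nonneg _ _) hΛ hc hα (fun μ hμ hμα hμν => ?_)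
    (fun μs μ hμs hμ hμα hlim => hcont α hα_pos μs μ hμs hμ hμα
      (hlim.tendsto_wDist fun x => (hW_pos x).le)) hν hνα
  obtain ⟨hLμ, hNμ⟩ := hL α hα_pos μ hμ hμα hμν
  exact ⟨fun x => (hLμ x).trans_eq (by ring), fun n x hx =>
    hNμ (n + 1) (by positivity) x (hx.trans (by linarith))⟩

end Existence

/-- **Proposition 6** (existence of stationary solutions with prescribed
`ℋ`-data). -/
theorem stmt9_existence_stationary
    (A : Ed d → Matrix (Fin d) (Fin d) ℝ) (K₁ K₂ : ℝ)
    (hK₁ : 0 < K₁) (hK₂ : 0 < K₂)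
    (hAsymm : ∀ x, (A x).IsSymm)
    (hAlow : ∀ x (v : Ed d), K₁⁻¹ * ‖v‖ ^ 2 ≤ ∑ i, ∑ j, A x i j * v i * v j)
    (hAup : ∀ x (v : Ed d), ∑ i, ∑ j, A x i j * v i * v j ≤ K₁ * ‖v‖ ^ 2)
    (hALip : ∀ x y i j, |A x i j - A y i j| ≤ K₂ * ‖x - y‖)
    (V : Ed d → ℝ) (hV : ContDiff ℝ 2 V) (hV1 : ∀ x, 1 ≤ V x)
    (hVinf : Tendsto V (cocompact (Ed d)) atTop)
    (γ : ℝ) (hγ : γ ∈ Set.Ioc (0:ℝ) (1/2))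
    (W : Ed d → ℝ) (hW : W = fun x => V x ^ γ)
    (b : Ed d → Measure (Ed d) → Ed d)
    (hbBorel : ∀ μ, Measurable (fun x => b x μ))
    (hbGrow : ∀ μ : Measure (Ed d), memPV V μ →
      ∃ Cb : ℝ, ∀ x, ‖b x μ‖ ≤ Cb * V x ^ (1 - γ))
    -- the Lyapunov-type and local boundedness hypothesis
    (hMain : ∀ ν : Measure (Ed d), memPV V ν →
      ∃ δ ∈ Set.Ioo (0:ℝ) 1, ∃ C > (0:ℝ), ∃ Λ > (0:ℝ), ∃ N : ℝ → ℝ → ℝ,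
        (∀ α R, 0 < N α R) ∧
        ∀ α : ℝ, 0 < α → ∀ μ : Measure (Ed d),
          memPV V μ → (∫ x, V x ∂μ) ≤ α → AgreeH A b V W μ ν →
          (∀ x, Lop A (fun y => b y μ) V x ≤ (1 - δ) * C + Λ * (δ * α - V x)) ∧
          (∀ R : ℝ, 0 < R → ∀ x : Ed d, ‖x‖ ≤ R → ‖b x μ‖ ≤ N α R))
    -- continuity of the drift along `‖·‖_W`-convergent sequences
    (hCont : ∀ α : ℝ, 0 < α → ∀ μs : ℕ → Measure (Ed d), ∀ μ : Measure (Ed d),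
      (∀ n, memPV V (μs n) ∧ (∫ x, V x ∂(μs n)) ≤ α) →
      memPV V μ → (∫ x, V x ∂μ) ≤ α →
      Tendsto (fun n => wDist W (μs n) μ) atTop (nhds 0) →
      ∀ R : ℝ, 0 < R →
        TendstoUniformlyOn (fun n x => b x (μs n)) (fun x => b x μ) atTop
          (Metric.closedBall (0 : Ed d) R)) :
    ∀ ν : Measure (Ed d), memPV V ν →
      ∃ μ : Measure (Ed d), memPV V μ ∧
        IsStationarySol A (fun y => b y μ) μ ∧
        AgreeH A b V W μ ν := by
  intro ν hν
  have hV_pos : ∀ x, 0 < V x := fun x => one_pos.trans_le (hV1 x)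
  obtain ⟨δ, hδ, C, -, Λ, hΛ, N, hN, hL⟩ := hMain ν hν
  subst hW
  exact stmt9_existence_stationary_general ⟨hK₁, hK₂.le, hAsymm, hAlow, hAup, hALip⟩ hV
    (fun x => (hV_pos x).le) hVinf (hV.continuous.rpow_const fun x => Or.inl (hV_pos x).ne')
    (fun x => rpow_pos_of_pos (hV_pos x) γ)
    ((isLittleO_rpow_id_atTop (hγ.2.trans_lt one_half_lt_one)).comp_tendsto hVinf) hbBorel
    (fun μ hμ => (hbGrow μ hμ).imp fun C hC x => mul_rpow_le_mul_of_le_mul_rpow (hV_pos x) (hC x))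
    ⟨δ, hδ.2, C, Λ, hΛ, N, fun α R => (hN α R).le, hL⟩ hCont hν
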